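/- Let k > 1 be a positive integer and let f ∈ 𝒪(ℂ²,0,0) be given by f(x,y) = (−x + x^{2k+1} + xy³, e^{2πi/3}y + x²y + y^{3k+1}). Then 0 is an isolated fixed point of f⁶, with μ_{f²}(0) = 2k + 1, μ_{f³}(0) = 3k + 1 and μ_{f⁶}(0) = 5k + 7, and consequently 𝒪₂(f,0) = k, 𝒪₃(f,0) = k and 𝒪₆(f,0) = 1. -/

import Mathlib

open Metric Set Filter Topology Polynomial Asymptotics
open scoped Classical

noncomputable section

namespace ZhangPaper

/-- `ℂⁿ`. -/
abbrev Cn (n : ℕ) := Fin n → ℂ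

variable {n : ℕ}

/-- A germ in `𝒪(ℂⁿ,0,0)`: holomorphic near `0` and fixing the origin. -/
def IsGerm (f : Cn n → Cn n) : Prop := AnalyticAt ℂ f 0 ∧ f 0 = 0

/-- `q` is a regular value of `h` on `s`. -/
def IsRegularValueOn (h : Cn n → Cn n) (s : Set (Cn n)) (q : Cn n) : Prop :=
  ∀ x ∈ s, h x = q → Function.Bijective (fderiv ℂ h x)

/-- `m` is the zero order (multiplicity) of `h` at the isolated zero `p`:
the number of solutions of `h x = q` near `p`, for any regular value `q`
with `‖q‖` sufficiently small. -/
def HasZeroOrder (h : Cn n → Cn n) (p : Cn n) (m : ℕ) : Prop :=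
  ∃ r > 0, AnalyticOnNhd ℂ h (closedBall p r) ∧ h p = 0 ∧
    (∀ x ∈ closedBall p r, h x = 0 → x = p) ∧
    (∀ ε > 0, ∃ q : Cn n, ‖q‖ < ε ∧ IsRegularValueOn h (ball p r) q) ∧
    ∃ δ > 0, ∀ q : Cn n, ‖q‖ < δ → IsRegularValueOn h (ball p r) q →
      {x ∈ ball p r | h x = q}.ncard = m

/-- The zero order `π_h(p)` of `h` at `p`. -/
def zeroOrder (h : Cn n → Cn n) (p : Cn n) : ℕ := sInf {m | HasZeroOrder h p m}

/-- The fixed point index `μ_g(p)` of `g` at `p`. -/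
def fixedPointIndex (g : Cn n → Cn n) (p : Cn n) : ℕ :=
  zeroOrder (fun x => x - g x) p

/-- The local Dold index `P_M(f,0)`. -/
def doldIndex (f : Cn n → Cn n) (M : ℕ) : ℤ :=
  ∑ τ ∈ M.primeFactors.powerset,
    (-1 : ℤ) ^ τ.card * (fixedPointIndex (f^[M / (∏ p ∈ τ, p)]) 0 : ℤ)

/-- `x` is a periodic point of exact period `M` for `g`. -/
def ExactPeriodicPt (g : Cn n → Cn n) (M : ℕ) (x : Cn n) : Prop :=
  g^[M] x = x ∧ ∀ j, 0 < j → j < M → g^[j] x ≠ x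

/-- `g` has at least `m` distinct periodic orbits of period `M` inside `B`. -/
def AtLeastOrbits (g : Cn n → Cn n) (M m : ℕ) (B : Set (Cn n)) : Prop :=
  ∃ p : Fin m → Cn n,
    (∀ i, ExactPeriodicPt g M (p i) ∧ ∀ j < M, g^[j] (p i) ∈ B) ∧
    ∀ i j : Fin m, i ≠ j → ∀ l < M, g^[l] (p i) ≠ p j

/-- `g` has exactly `m` distinct periodic orbits of period `M` inside `B`. -/
def ExactlyOrbits (g : Cn n → Cn n) (M m : ℕ) (B : Set (Cn n)) : Prop :=
  AtLeastOrbits g M m B ∧ ¬ AtLeastOrbits g M (m + 1) B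

/-- The number `𝒪_M(f,0)` of periodic orbits of period `M` of `f` hidden at the
fixed point `0`: the largest `m` such that there is a ball `B` centered at `0` in which
`0` is the only fixed point of `f^M`, and a sequence of holomorphic maps fixing `0`
converging to `f` uniformly on `B`, each having `m` distinct periodic orbits of
period `M` in `B`. -/
def hiddenOrbits (f : Cn n → Cn n) (M : ℕ) : ℕ :=
  sSup {m | ∃ r > 0,
    (∀ x ∈ closedBall (0 : Cn n) r, f^[M] x = x → x = 0) ∧
    ∃ fk : ℕ → Cn n → Cn n,
      (∀ k, AnalyticOnNhd ℂ (fk k) (ball (0 : Cn n) r) ∧ fk k 0 = 0) ∧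
      TendstoUniformlyOn fk f atTop (ball (0 : Cn n) r) ∧
      ∀ k, AtLeastOrbits (fk k) M m (ball (0 : Cn n) r)}

/-- `0` is an isolated fixed point of `g`. -/
def IsolatedFixedPtAt0 (g : Cn n → Cn n) : Prop :=
  g 0 = 0 ∧ ∀ᶠ x in 𝓝[≠] (0 : Cn n), g x ≠ x

/-- `0` is an isolated zero of `h`. -/
def IsolatedZeroAt0 (h : Cn n → Cn n) : Prop :=
  h 0 = 0 ∧ ∀ᶠ x in 𝓝[≠] (0 : Cn n), h x ≠ 0

/-- `p` is a simple fixed point of `g`: `Dg(p)` has no eigenvalue `1`. -/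
def SimpleFixedPt (g : Cn n → Cn n) (p : Cn n) : Prop :=
  g p = p ∧ ¬ Module.End.HasEigenvalue ((fderiv ℂ g p).toLinearMap) 1

/-- The global fixed point index `L(g)` of `g` over `U`: the sum of the fixed point
indices at all fixed points of `g` in `U`. -/
def globalIndex (g : Cn n → Cn n) (U : Set (Cn n)) : ℤ :=
  ∑ᶠ p ∈ {x ∈ U | g x = x}, (fixedPointIndex g p : ℤ)

/-- The global Dold index `P_M(f)` over `U`. -/
def globalDold (f : Cn n → Cn n) (M : ℕ) (U : Set (Cn n)) : ℤ :=
  ∑ τ ∈ M.primeFactors.powerset,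
    (-1 : ℤ) ^ τ.card * globalIndex (f^[M / (∏ p ∈ τ, p)]) U

/-!
The zero order of a planar germ `h = (h₁, h₂)` is an intersection number: the number of zeros in a
small bidisc of the resultant `x ↦ ∏ h₁ (x, y)` over the zeros `y` of `h₂ (x, ·)`. By Rouché's
theorem it does not change under small perturbations of `h`, and it counts the zeros of a
perturbation all of whose zeros are simple. For the iterates of the map of the theorem it can be
read off from the leading terms of `id - f^m` along the zeros of the second component.

If `g` is close to `f`, the derivatives of `g` at its finitely many periodic points near `0` can be
adjusted, without moving any of these points, so that all of them become simple fixed points of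
`g^M`. Then `g^m` has exactly `μ_{f^m}(0)` fixed points near `0` for each `m ∣ M`, and by Möbius
inversion exactly `P_M(f, 0)` points of exact period `M`, which form `P_M(f, 0) / M` orbits.
-/

section ZerosInDisc

/-- The multiset of zeros of `φ` in `U`, repeated according to multiplicity. It is the junk
value `0` when `φ` has infinitely many zeros in `U`. -/
def zerosIn (φ : ℂ → ℂ) (U : Set ℂ) : Multiset ℂ := ∑ᶠ a ∈ U, analyticOrderNatAt φ a • {a}

variable {φ ψ : ℂ → ℂ} {c : ℂ} {R : ℝ}

lemma analyticOrderAt_ne_top_of_sphere (hR : 0 ≤ R) (hφ : AnalyticOnNhd ℂ φ (closedBall c R))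
    (h0 : ∀ z ∈ sphere c R, φ z ≠ 0) {z : ℂ} (hz : z ∈ closedBall c R) :
    analyticOrderAt φ z ≠ ⊤ := by
  obtain ⟨w, hw⟩ : (sphere c R).Nonempty := NormedSpace.sphere_nonempty.2 hR
  refine hφ.analyticOrderAt_ne_top_of_isPreconnected (convex_closedBall c R).isPreconnected
    (sphere_subset_closedBall hw) hz ?_
  simp [(hφ w (sphere_subset_closedBall hw)).analyticOrderAt_eq_zero.2 (h0 w hw)]

lemma divisor_apply_of_sphere (hR : 0 ≤ R) (hφ : AnalyticOnNhd ℂ φ (closedBall c R))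
    (h0 : ∀ z ∈ sphere c R, φ z ≠ 0) {z : ℂ} (hz : z ∈ closedBall c R) :
    MeromorphicOn.divisor φ (closedBall c R) z = analyticOrderNatAt φ z := by
  rw [MeromorphicOn.AnalyticOnNhd.divisor_apply hφ hz,
    ← Nat.cast_analyticOrderNatAt (analyticOrderAt_ne_top_of_sphere hR hφ h0 hz)]
  rfl

lemma finite_analyticOrderNatAt_ne_zero (hR : 0 ≤ R) (hφ : AnalyticOnNhd ℂ φ (closedBall c R))
    (h0 : ∀ z ∈ sphere c R, φ z ≠ 0) :
    (closedBall c R ∩ {a | analyticOrderNatAt φ a ≠ 0}).Finite := by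
  refine ((MeromorphicOn.divisor φ (closedBall c R)).finiteSupport
    (isCompact_closedBall c R)).subset fun a ⟨ha, ha'⟩ => ?_
  rw [Function.mem_support, divisor_apply_of_sphere hR hφ h0 ha]
  exact_mod_cast ha'

lemma zerosIn_eq_sum (hR : 0 ≤ R) (hφ : AnalyticOnNhd ℂ φ (closedBall c R))
    (h0 : ∀ z ∈ sphere c R, φ z ≠ 0) :
    zerosIn φ (closedBall c R) =
      ∑ a ∈ (finite_analyticOrderNatAt_ne_zero hR hφ h0).toFinset,
        analyticOrderNatAt φ a • {a} := by
  refine finsum_mem_eq_sum_of_inter_support_eq _ (Set.ext fun a => ?_)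
  simp +contextual [← Multiset.card_eq_zero]

lemma count_zerosIn (hR : 0 ≤ R) (hφ : AnalyticOnNhd ℂ φ (closedBall c R))
    (h0 : ∀ z ∈ sphere c R, φ z ≠ 0) {z : ℂ} (hz : z ∈ closedBall c R) :
    (zerosIn φ (closedBall c R)).count z = analyticOrderNatAt φ z := by
  have hcount (a : ℂ) : Multiset.count z (analyticOrderNatAt φ a • ({a} : Multiset ℂ)) =
      if z = a then analyticOrderNatAt φ a else 0 := by
    rw [Multiset.count_nsmul, Multiset.count_singleton]
    split_ifs <;> simp
  rw [zerosIn_eq_sum hR hφ h0, Multiset.count_sum', Finset.sum_congr rfl fun a _ => hcount a,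
    Finset.sum_ite_eq]
  simp +contextual [hz]

lemma mem_zerosIn (hR : 0 ≤ R) (hφ : AnalyticOnNhd ℂ φ (closedBall c R))
    (h0 : ∀ z ∈ sphere c R, φ z ≠ 0) {z : ℂ} :
    z ∈ zerosIn φ (closedBall c R) ↔ z ∈ closedBall c R ∧ φ z = 0 := by
  by_cases hz : z ∈ closedBall c R
  · rw [← Multiset.count_ne_zero, count_zerosIn hR hφ h0 hz, ← Nat.cast_ne_zero (R := ℕ∞),
      Nat.cast_analyticOrderNatAt (analyticOrderAt_ne_top_of_sphere hR hφ h0 hz),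
      (hφ z hz).analyticOrderAt_ne_zero]
    simp [hz]
  · refine iff_of_false (fun h => hz ?_) (fun h => hz h.1)
    rw [zerosIn_eq_sum hR hφ h0, Multiset.mem_sum] at h
    obtain ⟨a, ha, hza⟩ := h
    rw [Multiset.mem_singleton.1 (Multiset.mem_of_mem_nsmul hza)]
    exact ((finite_analyticOrderNatAt_ne_zero hR hφ h0).mem_toFinset.1 ha).1

lemma zerosIn_mul (hR : 0 ≤ R) (hφ : AnalyticOnNhd ℂ φ (closedBall c R))
    (hψ : AnalyticOnNhd ℂ ψ (closedBall c R)) (hφ0 : ∀ z ∈ sphere c R, φ z ≠ 0)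
    (hψ0 : ∀ z ∈ sphere c R, ψ z ≠ 0) :
    zerosIn (φ * ψ) (closedBall c R) =
      zerosIn φ (closedBall c R) + zerosIn ψ (closedBall c R) := by
  have hsub (χ : ℂ → ℂ) : closedBall c R ∩ Function.support
      (fun a => analyticOrderNatAt χ a • ({a} : Multiset ℂ)) ⊆
        closedBall c R ∩ {a | analyticOrderNatAt χ a ≠ 0} := by
    refine inter_subset_inter_right _ fun a ha h => ha ?_
    simp [h]
  rw [zerosIn, zerosIn, zerosIn, ← finsum_mem_add_distrib'
    ((finite_analyticOrderNatAt_ne_zero hR hφ hφ0).subset (hsub φ))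
    ((finite_analyticOrderNatAt_ne_zero hR hψ hψ0).subset (hsub ψ))]
  refine finsum_mem_congr rfl fun a ha => ?_
  rw [analyticOrderNatAt_mul (hφ a ha) (hψ a ha) (analyticOrderAt_ne_top_of_sphere hR hφ hφ0 ha)
    (analyticOrderAt_ne_top_of_sphere hR hψ hψ0 ha), add_smul]

lemma exists_eventuallyEq_prod_mul (hR : 0 < R) (hφ : AnalyticOnNhd ℂ φ (closedBall c R))
    (h0 : ∀ z ∈ sphere c R, φ z ≠ 0) :
    ∃ u : ℂ → ℂ, AnalyticOnNhd ℂ u (closedBall c R) ∧ (∀ z ∈ closedBall c R, u z ≠ 0) ∧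
      ∀ z ∈ closedBall c R, φ =ᶠ[𝓝 z] fun w =>
        (∏ a ∈ (finite_analyticOrderNatAt_ne_zero hR.le hφ h0).toFinset,
          (w - a) ^ analyticOrderNatAt φ a) * u w := by
  set S := (finite_analyticOrderNatAt_ne_zero hR.le hφ h0).toFinset with hS
  have hmem {a : ℂ} : a ∈ S ↔ a ∈ closedBall c R ∧ analyticOrderNatAt φ a ≠ 0 := by simp [hS]
  obtain ⟨u, hu, hu0, hfac⟩ := hφ.meromorphicOn.extract_zeros_poles
    (fun z => by
      have := analyticOrderAt_ne_top_of_sphere hR.le hφ h0 z.2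
      rwa [(hφ z z.2).meromorphicOrderAt_eq, Ne, ENat.map_eq_top_iff])
    ((MeromorphicOn.divisor φ (closedBall c R)).finiteSupport (isCompact_closedBall c R))
  have hprod : (∏ᶠ a, (· - a) ^ MeromorphicOn.divisor φ (closedBall c R) a) • u =
      fun w => (∏ a ∈ S, (w - a) ^ analyticOrderNatAt φ a) * u w := by
    have hsub : (fun a : ℂ => (fun w : ℂ => w - a) ^
        MeromorphicOn.divisor φ (closedBall c R) a).mulSupport ⊆ S := by
      refine fun a ha => ?_
      by_cases hac : a ∈ closedBall c R
      · refine hmem.2 ⟨hac, fun h => ha ?_⟩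
        simp [divisor_apply_of_sphere hR.le hφ h0 hac, h]
      · simp [hac] at ha
    rw [finprod_eq_prod_of_mulSupport_subset _ hsub]
    funext w
    simp only [Pi.smul_apply', Finset.prod_apply, smul_eq_mul]
    congr 1
    refine Finset.prod_congr rfl fun a ha => ?_
    simp [divisor_apply_of_sphere hR.le hφ h0 (hmem.1 ha).1]
  rw [hprod] at hfac
  refine ⟨u, hu, fun z hz => hu0 ⟨z, hz⟩, fun z hz => ?_⟩
  have hA : AnalyticAt ℂ (fun w => (∏ a ∈ S, (w - a) ^ analyticOrderNatAt φ a) * u w) z := by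
    have := hu z hz
    fun_prop
  have hacc : AccPt z (𝓟 (closedBall c R)) :=
    (convex_closedBall c R).isPreconnected.preperfect_of_nontrivial
      ⟨c, mem_closedBall_self hR.le, c + R, by simp [abs_of_pos hR], by simp [hR.ne']⟩ z hz
  exact ((hφ z hz).continuousAt.eventuallyEq_nhds_iff_eventuallyEq_nhdsNE hA.continuousAt).1
    ((hφ z hz).meromorphicAt.eventuallyEq_nhdsNE_of_eventuallyEq_codiscreteWithin
      hA.meromorphicAt hz hacc hfac)

lemma analyticOnNhd_mul_logDeriv {u : ℂ → ℂ} (hu : AnalyticOnNhd ℂ u (closedBall c R))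
    (hψ : AnalyticOnNhd ℂ ψ (closedBall c R)) (hu0 : ∀ z ∈ closedBall c R, u z ≠ 0) :
    AnalyticOnNhd ℂ (fun z => ψ z * logDeriv u z) (closedBall c R) :=
  hψ.mul (hu.deriv.div hu hu0)

lemma circleIntegral_eq_zero_of_analyticOnNhd (hR : 0 ≤ R)
    (hφ : AnalyticOnNhd ℂ φ (closedBall c R)) : (∮ z in C(c, R), φ z) = 0 :=
  Complex.circleIntegral_eq_zero_of_differentiable_on_off_countable hR countable_empty
    hφ.continuousOn fun z hz => (hφ z (ball_subset_closedBall hz.1)).differentiableAt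

lemma logDeriv_prod_pow_mul {S : Finset ℂ} {n : ℂ → ℕ} {u : ℂ → ℂ} {z : ℂ}
    (hS : ∀ a ∈ S, z - a ≠ 0) (hu0 : u z ≠ 0) (hu : DifferentiableAt ℂ u z) :
    logDeriv (fun w => (∏ a ∈ S, (w - a) ^ n a) * u w) z =
      (∑ a ∈ S, (z - a)⁻¹ * n a) + logDeriv u z := by
  rw [logDeriv_mul z (Finset.prod_ne_zero_iff.2 fun a ha => pow_ne_zero _ (hS a ha)) hu0
    (by fun_prop) hu]
  congr 1
  rw [logDeriv_prod (f := fun a w => (w - a) ^ n a) (fun a ha => pow_ne_zero _ (hS a ha))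
    (by fun_prop)]
  refine Finset.sum_congr rfl fun a _ => ?_
  rw [logDeriv_fun_pow (by fun_prop), logDeriv_apply]
  simp [mul_comm]

/-- The **argument principle**. -/
lemma circleIntegral_mul_logDeriv (hR : 0 < R) (hφ : AnalyticOnNhd ℂ φ (closedBall c R))
    (h0 : ∀ z ∈ sphere c R, φ z ≠ 0) (hψ : AnalyticOnNhd ℂ ψ (closedBall c R)) :
    (∮ z in C(c, R), ψ z * logDeriv φ z) =
      2 * Real.pi * Complex.I * ((zerosIn φ (closedBall c R)).map ψ).sum := by
  obtain ⟨u, hu, hu0, hfac⟩ := exists_eventuallyEq_prod_mul hR hφ h0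
  rw [zerosIn_eq_sum hR.le hφ h0]
  set S := (finite_analyticOrderNatAt_ne_zero hR.le hφ h0).toFinset with hS
  have hball {a : ℂ} (ha : a ∈ S) : a ∈ ball c R := by
    obtain ⟨haK, ha0⟩ : a ∈ closedBall c R ∧ analyticOrderNatAt φ a ≠ 0 := by
      simpa [hS] using ha
    exact (mem_closedBall.1 haK).lt_of_ne fun h =>
      h0 a h (apply_eq_zero_of_analyticOrderNatAt_ne_zero ha0)
  have hne {z : ℂ} (hz : z ∈ sphere c R) (a : ℂ) (ha : a ∈ S) : z - a ≠ 0 := by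
    refine sub_ne_zero.2 fun h => ?_
    exact (mem_ball.1 (hball ha)).ne (h ▸ hz)
  have hpoles : EqOn (fun z => ψ z * logDeriv φ z)
      (fun z => (∑ a ∈ S, (z - a)⁻¹ • (analyticOrderNatAt φ a * ψ z)) + ψ z * logDeriv u z)
      (sphere c R) := fun z hz => by
    have hzK := sphere_subset_closedBall hz
    simp only
    rw [(logDeriv_congr_nhds (hfac z hzK)).eq_of_nhds, logDeriv_prod_pow_mul (hne hz) (hu0 z hzK)
      (hu z hzK).differentiableAt, mul_add, Finset.mul_sum]
    simp only [smul_eq_mul]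
    congr 1
    exact Finset.sum_congr rfl fun a _ => by ring
  have hψ' (a : ℂ) : DifferentiableOn ℂ (fun z => analyticOrderNatAt φ a * ψ z)
      (closedBall c R) := hψ.differentiableOn.const_mul _
  have hint (a : ℂ) (ha : a ∈ S) :
      CircleIntegrable (fun z => (z - a)⁻¹ • (analyticOrderNatAt φ a * ψ z)) c R :=
    ((continuousOn_id.sub continuousOn_const).inv₀ fun z hz => hne hz a ha).smul
      ((hψ' a).continuousOn.mono sphere_subset_closedBall) |>.circleIntegrable hR.le
  have hu' := analyticOnNhd_mul_logDeriv hu hψ hu0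
  rw [circleIntegral.integral_congr hR.le hpoles, circleIntegral.integral_add
    (.fun_sum S hint) ((hu'.continuousOn.mono sphere_subset_closedBall).circleIntegrable hR.le),
    circleIntegral_eq_zero_of_analyticOnNhd hR.le hu', add_zero,
    circleIntegral.integral_fun_sum hint, ← Multiset.coe_mapAddMonoidHom, map_sum,
    ← Multiset.coe_sumAddMonoidHom, map_sum, Finset.mul_sum]
  refine Finset.sum_congr rfl fun a ha => ?_
  rw [((hψ' a).diffContOnCl_ball Subset.rfl).circleIntegral_sub_inv_smul (hball ha)]
  simp [Multiset.nsmul_singleton]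

lemma circleIntegral_logDeriv (hR : 0 < R) (hφ : AnalyticOnNhd ℂ φ (closedBall c R))
    (h0 : ∀ z ∈ sphere c R, φ z ≠ 0) :
    (∮ z in C(c, R), logDeriv φ z) =
      2 * Real.pi * Complex.I * (zerosIn φ (closedBall c R)).card := by
  simpa using circleIntegral_mul_logDeriv hR hφ h0 (ψ := fun _ => 1) analyticOnNhd_const

/-- **Rouché's theorem**. -/
lemma card_zerosIn_eq_of_norm_sub_lt (hR : 0 < R) (hφ : AnalyticOnNhd ℂ φ (closedBall c R))
    (hψ : AnalyticOnNhd ℂ ψ (closedBall c R))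
    (hlt : ∀ z ∈ sphere c R, ‖φ z - ψ z‖ < ‖ψ z‖) :
    (zerosIn φ (closedBall c R)).card = (zerosIn ψ (closedBall c R)).card := by
  have hψ0 : ∀ z ∈ sphere c R, ψ z ≠ 0 := fun z hz =>
    norm_pos_iff.1 ((norm_nonneg _).trans_lt (hlt z hz))
  have hφ0 : ∀ z ∈ sphere c R, φ z ≠ 0 := fun z hz h => by
    simpa [h] using hlt z hz
  have hint {χ : ℂ → ℂ} (hχ : AnalyticOnNhd ℂ χ (closedBall c R))
      (hχ0 : ∀ z ∈ sphere c R, χ z ≠ 0) : CircleIntegrable (logDeriv χ) c R :=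
    ((hχ.deriv.continuousOn.mono sphere_subset_closedBall).div
      (hχ.continuousOn.mono sphere_subset_closedBall) hχ0).circleIntegrable hR.le
  have hquot : (∮ z in C(c, R), (logDeriv φ z - logDeriv ψ z)) = 0 := by
    refine circleIntegral.integral_eq_zero_of_hasDerivWithinAt hR.le
      (f := fun z => Complex.log (φ z / ψ z)) fun z hz => ?_
    have hφz := (hφ z (sphere_subset_closedBall hz)).differentiableAt
    have hψz := (hψ z (sphere_subset_closedBall hz)).differentiableAt
    have hslit : φ z / ψ z ∈ Complex.slitPlane := by
      refine Complex.ball_one_subset_slitPlane ?_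
      rw [mem_ball, dist_eq_norm, div_sub_one (hψ0 z hz), norm_div,
        div_lt_one (norm_pos_iff.2 (hψ0 z hz))]
      exact hlt z hz
    rw [← logDeriv_div z (hφ0 z hz) (hψ0 z hz) hφz hψz]
    exact ((hφz.div hψz (hψ0 z hz)).hasDerivAt.clog hslit).hasDerivWithinAt
  rw [circleIntegral.integral_sub (hint hφ hφ0) (hint hψ hψ0), circleIntegral_logDeriv hR hφ hφ0,
    circleIntegral_logDeriv hR hψ hψ0, ← mul_sub, mul_eq_zero_iff_left Complex.two_pi_I_ne_zero,
    sub_eq_zero] at hquot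
  exact_mod_cast hquot

/-- Rouché's theorem makes the number of zeros locally constant in the parameter. -/
lemma card_zerosIn_eq_of_isPreconnected {X : Type*} [TopologicalSpace X] {T : Set X}
    (hT : IsPreconnected T) (hR : 0 < R) {Φ : X → ℂ → ℂ}
    (hΦ : ∀ t ∈ T, AnalyticOnNhd ℂ (Φ t) (closedBall c R))
    (hcont : ContinuousOn (fun p : X × ℂ => Φ p.1 p.2) (T ×ˢ sphere c R))
    (h0 : ∀ t ∈ T, ∀ z ∈ sphere c R, Φ t z ≠ 0) {s t : X} (hs : s ∈ T) (ht : t ∈ T) :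
    (zerosIn (Φ s) (closedBall c R)).card = (zerosIn (Φ t) (closedBall c R)).card := by
  refine hT.constant (f := fun t => (zerosIn (Φ t) (closedBall c R)).card) (fun t₀ ht₀ => ?_) hs ht
  refine continuousWithinAt_const.congr_of_eventuallyEq ?_ rfl
  have hclose : ∀ᶠ t in 𝓝[T] t₀, ∀ z ∈ sphere c R, ‖Φ t z - Φ t₀ z‖ < ‖Φ t₀ z‖ := by
    obtain ⟨w, hw, hmin⟩ := (isCompact_sphere c R).exists_isMinOn
      (NormedSpace.sphere_nonempty.2 hR.le)
      ((hΦ t₀ ht₀).continuousOn.mono sphere_subset_closedBall).norm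
    obtain ⟨v, hv, hvt⟩ := (isCompact_sphere c R).mem_uniformity_of_prod hcont ht₀
      (dist_mem_uniformity (norm_pos_iff.2 (h0 t₀ ht₀ w hw)))
    filter_upwards [hv] with t ht z hz
    rw [← dist_eq_norm]
    exact (show dist _ _ < _ from hvt t ht z hz).trans_le (hmin hz)
  filter_upwards [hclose, self_mem_nhdsWithin] with t ht htT
  exact card_zerosIn_eq_of_norm_sub_lt hR (hΦ t htT) (hΦ t₀ ht₀) ht

end ZerosInDisc

section Newton

variable {K : Type*} [Field K] [CharZero K]

lemma exists_esymm_eq_aeval_powerSum (k : ℕ) : ∃ Q : MvPolynomial ℕ K, ∀ s : Multiset K,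
    s.esymm k = MvPolynomial.aeval (fun j => (s.map (· ^ j)).sum) Q := by
  induction k using Nat.strong_induction_on with
  | _ k ih =>
    obtain rfl | hk := k.eq_zero_or_pos
    · exact ⟨1, fun s => by simp [Multiset.esymm]⟩
    choose! Q hQ using ih
    refine ⟨MvPolynomial.C (k : K)⁻¹ * ((-1) ^ (k + 1) *
      ∑ a ∈ Finset.HasAntidiagonal.antidiagonal k with a.1 < k,
        (-1) ^ a.1 * Q a.1 * MvPolynomial.X a.2), fun s => ?_⟩
    have hpsum (j : ℕ) : ∑ x : s.ToType, (x : K) ^ j = (s.map (· ^ j)).sum := by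
      conv_rhs => rw [← s.map_univ_coe, Multiset.map_map]
      rfl
    have hesymm (j : ℕ) : MvPolynomial.aeval (fun x : s.ToType => (x : K))
        (MvPolynomial.esymm s.ToType K j) = s.esymm j := by
      rw [MvPolynomial.aeval_esymm_eq_multiset_esymm, s.map_univ_coe]
    have hnewton := congrArg (MvPolynomial.aeval fun x : s.ToType => (x : K))
      (MvPolynomial.mul_esymm_eq_sum s.ToType K k)
    simp only [map_mul, map_natCast, map_pow, map_neg, map_one, map_sum, hesymm,
      MvPolynomial.psum, MvPolynomial.aeval_X, hpsum] at hnewton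
    simp only [map_mul, map_pow, map_neg, map_one, map_sum, MvPolynomial.aeval_C,
      MvPolynomial.aeval_X, Algebra.algebraMap_self_apply]
    rw [eq_inv_mul_iff_mul_eq₀ (Nat.cast_ne_zero.2 hk.ne'), hnewton]
    congr 1
    exact Finset.sum_congr rfl fun a ha => by rw [hQ a.1 (Finset.mem_filter.1 ha).2 s]

lemma exists_prod_eq_aeval_powerSum (d : ℕ) : ∃ Q : MvPolynomial ℕ K, ∀ s : Multiset K,
    s.card = d → s.prod = MvPolynomial.aeval (fun j => (s.map (· ^ j)).sum) Q := by
  obtain ⟨Q, hQ⟩ := exists_esymm_eq_aeval_powerSum (K := K) d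
  refine ⟨Q, fun s hs => ?_⟩
  rw [← hQ, Multiset.esymm, ← hs, Multiset.powersetCard_self]
  simp

end Newton

section Parameters

variable {E : Type*} [NormedAddCommGroup E] [NormedSpace ℂ E] {F G : E × ℂ → ℂ} {c : ℂ} {R : ℝ}
  {p : E}

lemma eventually_forall_prodMk_analyticAt {S : Set ℂ} (hS : IsCompact S)
    (hG : ∀ z ∈ S, AnalyticAt ℂ G (p, z)) :
    ∀ᶠ q in 𝓝 p, ∀ z ∈ S, AnalyticAt ℂ G (q, z) :=
  hS.eventually_forall_of_forall_eventually fun z hz => (hG z hz).eventually_analyticAt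

lemma eventually_forall_prodMk_ne_zero {X : Type*} [TopologicalSpace X] {G : X × ℂ → ℂ} {p : X}
    {S : Set ℂ} (hS : IsCompact S)
    (hG : ∀ z ∈ S, ContinuousAt G (p, z)) (h0 : ∀ z ∈ S, G (p, z) ≠ 0) :
    ∀ᶠ q in 𝓝 p, ∀ z ∈ S, G (q, z) ≠ 0 :=
  hS.eventually_forall_of_forall_eventually fun z hz => (hG z hz).eventually_ne (h0 z hz)

lemma deriv_prodMk_right {z : ℂ} (hG : DifferentiableAt ℂ G (p, z)) :
    deriv (fun w => G (p, w)) z = fderiv ℂ G (p, z) (0, 1) :=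
  (hG.hasFDerivAt.comp_hasDerivAt z ((hasDerivAt_const z p).prodMk (hasDerivAt_id z))).deriv

lemma continuous_deriv_circleMap_smul {V : Type*} [NormedAddCommGroup V] [NormedSpace ℂ V]
    {H : ℂ → V} (hR : 0 ≤ R) (hH : ContinuousOn H (sphere c R)) :
    Continuous fun θ => deriv (circleMap c R) θ • H (circleMap c R θ) := by
  simp only [deriv_circleMap]
  exact (by fun_prop : Continuous fun θ => circleMap 0 R θ * Complex.I).smul <|
    hH.comp_continuous (continuous_circleMap c R) fun θ => circleMap_mem_sphere c hR θ

lemma differentiableAt_circleIntegral (hR : 0 ≤ R)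
    (hG : ∀ z ∈ sphere c R, AnalyticAt ℂ G (p, z)) :
    DifferentiableAt ℂ (fun q => ∮ z in C(c, R), G (q, z)) p := by
  have hcirc (θ : ℝ) : circleMap c R θ ∈ sphere c R := circleMap_mem_sphere c hR θ
  obtain ⟨C, hC⟩ : ∃ C, ∀ z ∈ sphere c R, ‖fderiv ℂ G (p, z)‖ ≤ C :=
    (isCompact_sphere c R).exists_bound_of_continuousOn (f := fun z => fderiv ℂ G (p, z))
      fun z hz => ((hG z hz).fderiv.continuousAt.comp (f := fun z => (p, z))
        (by fun_prop)).continuousWithinAt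
  have hbound : ∀ᶠ q in 𝓝 p, ∀ z ∈ sphere c R, ‖fderiv ℂ G (q, z)‖ < C + 1 :=
    (isCompact_sphere c R).eventually_forall_of_forall_eventually fun z hz =>
      (hG z hz).fderiv.continuousAt.norm.eventually_lt_const
        ((hC z hz).trans_lt (lt_add_one C))
  have hsec : Continuous fun z : ℂ => (p, z) := by fun_prop
  have hcont' : Continuous fun θ => deriv (circleMap c R) θ •
      (fderiv ℂ G (p, circleMap c R θ)).comp (.inl ℂ E ℂ) :=
    continuous_deriv_circleMap_smul hR
      (H := fun z => (fderiv ℂ G (p, z)).comp (.inl ℂ E ℂ)) fun z hz =>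
        (((hG z hz).fderiv.continuousAt.comp hsec.continuousAt).clm_comp
          continuousAt_const).continuousWithinAt
  have hcont {q : E} (hq : ∀ z ∈ sphere c R, AnalyticAt ℂ G (q, z)) :
      Continuous fun θ => deriv (circleMap c R) θ • G (q, circleMap c R θ) :=
    continuous_deriv_circleMap_smul hR (H := fun z => G (q, z)) fun z hz =>
      (hq z hz).curry_right.continuousAt.continuousWithinAt
  have hGev := eventually_forall_prodMk_analyticAt (isCompact_sphere c R) hG
  refine (intervalIntegral.hasFDerivAt_integral_of_dominated_of_fderiv_le
    (F' := fun q θ => deriv (circleMap c R) θ •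
      (fderiv ℂ G (q, circleMap c R θ)).comp (.inl ℂ E ℂ))
    (bound := fun _ => R * (C + 1)) (hGev.and hbound)
    (hGev.mono fun q hq => (hcont hq).aestronglyMeasurable)
    ((hcont hG).intervalIntegrable _ _) hcont'.aestronglyMeasurable
    (Eventually.of_forall fun θ _ q hq => ?_) intervalIntegrable_const
    (Eventually.of_forall fun θ _ q hq => ?_)).differentiableAt
  · rw [norm_smul, deriv_circleMap, norm_mul, norm_circleMap_zero, Complex.norm_I, mul_one,
      abs_of_nonneg hR]
    refine mul_le_mul_of_nonneg_left ?_ hR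
    calc ‖(fderiv ℂ G (q, circleMap c R θ)).comp (.inl ℂ E ℂ)‖
      _ ≤ ‖fderiv ℂ G (q, circleMap c R θ)‖ * ‖ContinuousLinearMap.inl ℂ E ℂ‖ :=
        ContinuousLinearMap.opNorm_comp_le _ _
      _ ≤ ‖fderiv ℂ G (q, circleMap c R θ)‖ :=
        mul_le_of_le_one_right (norm_nonneg _) (ContinuousLinearMap.norm_inl_le_one ..)
      _ ≤ C + 1 := (hq.2 _ (hcirc θ)).le
  · have hcomp := (hq.1 _ (hcirc θ)).differentiableAt.hasFDerivAt.comp q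
      (hasFDerivAt_prodMk_left (𝕜 := ℂ) q (circleMap c R θ))
    exact hcomp.const_smul (deriv (circleMap c R) θ)

lemma differentiableAt_powerSum_zerosIn (hR : 0 < R)
    (hF : ∀ z ∈ closedBall c R, AnalyticAt ℂ F (p, z))
    (hG : ∀ z ∈ closedBall c R, AnalyticAt ℂ G (p, z)) (h0 : ∀ z ∈ sphere c R, G (p, z) ≠ 0)
    (j : ℕ) :
    DifferentiableAt ℂ (fun q => ((zerosIn (fun z => G (q, z)) (closedBall c R)).map
      fun z => F (q, z) ^ j).sum) p := by
  have hsub := sphere_subset_closedBall (x := c) (ε := R)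
  have hK : DifferentiableAt ℂ (fun q => (2 * Real.pi * Complex.I)⁻¹ * ∮ z in C(c, R),
      F (q, z) ^ j * (fderiv ℂ G (q, z) (0, 1) / G (q, z))) p := by
    refine (differentiableAt_circleIntegral (G := fun x =>
      F x ^ j * (fderiv ℂ G x (0, 1) / G x)) hR.le fun z hz => ?_).const_mul _
    have hF' := hF z (hsub hz)
    have hG' := hG z (hsub hz)
    have hdG : AnalyticAt ℂ (fun x => fderiv ℂ G x (0, 1)) (p, z) :=
      ((ContinuousLinearMap.apply ℂ ℂ ((0, 1) : E × ℂ)).analyticAt _).comp hG'.fderiv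
    exact (hF'.pow j).mul (hdG.div hG' (h0 z hz))
  refine hK.congr_of_eventuallyEq ?_
  filter_upwards [eventually_forall_prodMk_analyticAt (isCompact_closedBall c R) hF,
    eventually_forall_prodMk_analyticAt (isCompact_closedBall c R) hG,
    eventually_forall_prodMk_ne_zero (isCompact_sphere c R)
      (fun z hz => (hG z (hsub hz)).continuousAt) h0] with q hFq hGq h0q
  rw [eq_inv_mul_iff_mul_eq₀ Complex.two_pi_I_ne_zero,
    ← circleIntegral_mul_logDeriv hR (fun z hz => (hGq z hz).curry_right) h0q
      fun z hz => ((hFq z hz).curry_right.pow j)]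
  refine circleIntegral.integral_congr hR.le fun z hz => ?_
  simp only [logDeriv_apply, deriv_prodMk_right (hGq z (hsub hz)).differentiableAt]

lemma eventually_card_zerosIn_eq (hR : 0 < R)
    (hG : ∀ z ∈ closedBall c R, AnalyticAt ℂ G (p, z)) (h0 : ∀ z ∈ sphere c R, G (p, z) ≠ 0) :
    ∀ᶠ q in 𝓝 p, (zerosIn (fun z => G (q, z)) (closedBall c R)).card =
      (zerosIn (fun z => G (p, z)) (closedBall c R)).card := by
  have hsub := sphere_subset_closedBall (x := c) (ε := R)
  obtain ⟨δ, hδ, hball⟩ := Metric.eventually_nhds_iff_ball.1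
    ((eventually_forall_prodMk_analyticAt (isCompact_closedBall c R) hG).and
      (eventually_forall_prodMk_ne_zero (isCompact_sphere c R)
        (fun z hz => (hG z (hsub hz)).continuousAt) h0))
  filter_upwards [ball_mem_nhds p hδ] with q hq
  let : NormedSpace ℝ E := .restrictScalars ℝ ℂ E
  exact card_zerosIn_eq_of_isPreconnected (Φ := fun q z => G (q, z))
    (convex_ball p δ).isPreconnected hR (fun q hq z hz => ((hball q hq).1 z hz).curry_right)
    (fun x hx => ((hball x.1 hx.1).1 x.2 (hsub hx.2)).continuousAt.continuousWithinAt)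
    (fun q hq => (hball q hq).2) hq (mem_ball_self hδ)

/-- By Newton's identities the product is a polynomial in the power sums, which are contour
integrals. -/
lemma differentiableAt_prod_map_zerosIn (hR : 0 < R)
    (hF : ∀ z ∈ closedBall c R, AnalyticAt ℂ F (p, z))
    (hG : ∀ z ∈ closedBall c R, AnalyticAt ℂ G (p, z)) (h0 : ∀ z ∈ sphere c R, G (p, z) ≠ 0) :
    DifferentiableAt ℂ (fun q => ((zerosIn (fun z => G (q, z)) (closedBall c R)).map
      fun z => F (q, z)).prod) p := by
  obtain ⟨Q, hQ⟩ := exists_prod_eq_aeval_powerSum (K := ℂ)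
    (zerosIn (fun z => G (p, z)) (closedBall c R)).card
  have hpoly : DifferentiableAt ℂ (fun q => MvPolynomial.aeval (fun j =>
      ((zerosIn (fun z => G (q, z)) (closedBall c R)).map fun z => F (q, z) ^ j).sum) Q) p := by
    clear hQ
    induction Q using MvPolynomial.induction_on with
    | C a => simp
    | add P Q hP hQ => simpa using hP.fun_add hQ
    | mul_X P j hP => simpa using hP.fun_mul (differentiableAt_powerSum_zerosIn hR hF hG h0 j)
  refine hpoly.congr_of_eventuallyEq ((eventually_card_zerosIn_eq hR hG h0).mono fun q hq => ?_)
  simp only [hQ _ ((Multiset.card_map ..).trans hq), Multiset.map_map, Function.comp_def]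

lemma analyticAt_prod_map_zerosIn {F G : ℂ × ℂ → ℂ} {p : ℂ} (hR : 0 < R)
    (hF : ∀ z ∈ closedBall c R, AnalyticAt ℂ F (p, z))
    (hG : ∀ z ∈ closedBall c R, AnalyticAt ℂ G (p, z)) (h0 : ∀ z ∈ sphere c R, G (p, z) ≠ 0) :
    AnalyticAt ℂ (fun q => ((zerosIn (fun z => G (q, z)) (closedBall c R)).map
      fun z => F (q, z)).prod) p := by
  refine Complex.analyticAt_iff_eventually_differentiableAt.2 ?_
  filter_upwards [eventually_forall_prodMk_analyticAt (isCompact_closedBall c R) hF,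
    eventually_forall_prodMk_analyticAt (isCompact_closedBall c R) hG,
    eventually_forall_prodMk_ne_zero (isCompact_sphere c R)
      (fun z hz => (hG z (sphere_subset_closedBall hz)).continuousAt) h0] with q hFq hGq h0q
  exact differentiableAt_prod_map_zerosIn hR hFq hGq h0q

end Parameters

section Bidisc

/-- The resultant of the components of `h = (f, g)`: the product of `f (x, y)` over the zeros `y`
of `g (x, ·)` with `|y| ≤ b`. It vanishes at `x` exactly when `h` has a zero above `x`. -/
def resultant (h : ℂ × ℂ → ℂ × ℂ) (b : ℝ) (x : ℂ) : ℂ :=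
  ((zerosIn (fun y => (h (x, y)).2) (closedBall 0 b)).map fun y => (h (x, y)).1).prod

/-- The degree of `h` on the bidisc `|x| ≤ a, |y| ≤ b`, i.e. its number of zeros there, counted
as zeros of the resultant. -/
def degree (h : ℂ × ℂ → ℂ × ℂ) (a b : ℝ) : ℕ := (zerosIn (resultant h b) (closedBall 0 a)).card

/-- The maps whose degree on the bidisc `|x| ≤ a, |y| ≤ b` is considered: there are no zeros on
the boundary, and all zeros of the second component leave through the side `|x| = a`. -/
structure IsAdmissible (h : ℂ × ℂ → ℂ × ℂ) (a b : ℝ) : Prop where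
  fst_pos : 0 < a
  snd_pos : 0 < b
  analyticOnNhd : AnalyticOnNhd ℂ h (closedBall 0 a ×ˢ closedBall 0 b)
  snd_ne_zero : ∀ p ∈ closedBall (0 : ℂ) a ×ˢ sphere (0 : ℂ) b, (h p).2 ≠ 0
  ne_zero : ∀ p ∈ sphere (0 : ℂ) a ×ˢ closedBall (0 : ℂ) b, h p ≠ 0

variable {h : ℂ × ℂ → ℂ × ℂ} {a b : ℝ} {x : ℂ}

lemma isCompact_closedBidisc (a b : ℝ) : IsCompact (closedBall (0 : ℂ) a ×ˢ closedBall (0 : ℂ) b) :=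
  (isCompact_closedBall 0 a).prod (isCompact_closedBall 0 b)

namespace IsAdmissible

lemma analyticOnNhd_fst (H : IsAdmissible h a b) :
    AnalyticOnNhd ℂ (fun p => (h p).1) (closedBall 0 a ×ˢ closedBall 0 b) :=
  fun p hp => analyticAt_fst.comp (H.analyticOnNhd p hp)

lemma analyticOnNhd_snd (H : IsAdmissible h a b) :
    AnalyticOnNhd ℂ (fun p => (h p).2) (closedBall 0 a ×ˢ closedBall 0 b) :=
  fun p hp => analyticAt_snd.comp (H.analyticOnNhd p hp)

lemma analyticOnNhd_snd_fibre (H : IsAdmissible h a b) (hx : x ∈ closedBall 0 a) :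
    AnalyticOnNhd ℂ (fun y => (h (x, y)).2) (closedBall 0 b) :=
  fun y hy => (H.analyticOnNhd_snd (x, y) ⟨hx, hy⟩).curry_right

lemma mem_zerosIn_snd_iff (H : IsAdmissible h a b) (hx : x ∈ closedBall 0 a) {y : ℂ} :
    y ∈ zerosIn (fun y => (h (x, y)).2) (closedBall 0 b) ↔
      y ∈ closedBall 0 b ∧ (h (x, y)).2 = 0 :=
  mem_zerosIn H.snd_pos.le (H.analyticOnNhd_snd_fibre hx) fun y hy => H.snd_ne_zero (x, y) ⟨hx, hy⟩

lemma card_zerosIn_snd_eq (H : IsAdmissible h a b) {x' : ℂ} (hx : x ∈ closedBall 0 a)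
    (hx' : x' ∈ closedBall 0 a) :
    (zerosIn (fun y => (h (x, y)).2) (closedBall 0 b)).card =
      (zerosIn (fun y => (h (x', y)).2) (closedBall 0 b)).card :=
  card_zerosIn_eq_of_isPreconnected (Φ := fun x y => (h (x, y)).2)
    (convex_closedBall (0 : ℂ) a).isPreconnected H.snd_pos
    (fun _ hx => H.analyticOnNhd_snd_fibre hx)
    (H.analyticOnNhd_snd.continuousOn.mono (prod_mono_right sphere_subset_closedBall))
    (fun x hx y hy => H.snd_ne_zero (x, y) ⟨hx, hy⟩) hx hx'

lemma analyticOnNhd_resultant (H : IsAdmissible h a b) :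
    AnalyticOnNhd ℂ (resultant h b) (closedBall 0 a) := fun x hx =>
  analyticAt_prod_map_zerosIn (F := fun p => (h p).1) (G := fun p => (h p).2) H.snd_pos
    (fun y hy => H.analyticOnNhd_fst (x, y) ⟨hx, hy⟩)
    (fun y hy => H.analyticOnNhd_snd (x, y) ⟨hx, hy⟩) fun y hy => H.snd_ne_zero (x, y) ⟨hx, hy⟩

lemma mem_bidisc_of_eq_zero (H : IsAdmissible h a b) {p : ℂ × ℂ}
    (hp : p ∈ closedBall (0 : ℂ) a ×ˢ closedBall (0 : ℂ) b) (h0 : h p = 0) :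
    p ∈ ball (0 : ℂ) a ×ˢ ball (0 : ℂ) b :=
  ⟨(mem_closedBall.1 hp.1).lt_of_ne fun h1 => H.ne_zero p ⟨h1, hp.2⟩ h0,
    (mem_closedBall.1 hp.2).lt_of_ne fun h2 => H.snd_ne_zero p ⟨hp.1, h2⟩ (by simp [h0])⟩

lemma resultant_eq_zero_iff (H : IsAdmissible h a b) (hx : x ∈ closedBall 0 a) :
    resultant h b x = 0 ↔ ∃ y ∈ closedBall 0 b, h (x, y) = 0 := by
  simp [resultant, Multiset.prod_eq_zero_iff, H.mem_zerosIn_snd_iff hx, Prod.ext_iff, and_assoc,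
    and_comm (a := (h (x, _)).1 = 0)]

lemma resultant_ne_zero (H : IsAdmissible h a b) : ∀ x ∈ sphere 0 a, resultant h b x ≠ 0 := by
  intro x hx h0
  obtain ⟨y, hy, hxy⟩ := (H.resultant_eq_zero_iff (sphere_subset_closedBall hx)).1 h0
  exact H.ne_zero (x, y) ⟨hx, hy⟩ hxy

lemma mem_zerosIn_resultant_iff (H : IsAdmissible h a b) :
    x ∈ zerosIn (resultant h b) (closedBall 0 a) ↔
      x ∈ closedBall 0 a ∧ ∃ y ∈ closedBall 0 b, h (x, y) = 0 := by
  rw [mem_zerosIn H.fst_pos.le H.analyticOnNhd_resultant H.resultant_ne_zero]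
  exact and_congr_right fun hx => H.resultant_eq_zero_iff hx

end IsAdmissible

lemma degree_eq_of_isPreconnected {E : Type*} [NormedAddCommGroup E] [NormedSpace ℂ E] {T : Set E}
    (hT : IsPreconnected T) {H : E × ℂ × ℂ → ℂ × ℂ}
    (hH : AnalyticOnNhd ℂ H (T ×ˢ closedBall 0 a ×ˢ closedBall 0 b))
    (hadm : ∀ t ∈ T, IsAdmissible (fun p => H (t, p)) a b) {s t : E} (hs : s ∈ T) (ht : t ∈ T) :
    degree (fun p => H (s, p)) a b = degree (fun p => H (t, p)) a b := by
  refine card_zerosIn_eq_of_isPreconnected (Φ := fun t => resultant (fun p => H (t, p)) b) hT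
    (hadm s hs).fst_pos (fun t ht => (hadm t ht).analyticOnNhd_resultant) ?_
    (fun t ht => (hadm t ht).resultant_ne_zero) hs ht
  rintro ⟨t, x⟩ ⟨ht, hx⟩
  have hHx {y : ℂ} (hy : y ∈ closedBall 0 b) :
      AnalyticAt ℂ (fun q : (E × ℂ) × ℂ => H (q.1.1, q.1.2, q.2)) ((t, x), y) :=
    (hH (t, x, y) ⟨ht, sphere_subset_closedBall hx, hy⟩).comp_of_eq
      ((ContinuousLinearEquiv.prodAssoc ℂ E ℂ ℂ).analyticAt _) rfl
  exact (differentiableAt_prod_map_zerosIn (p := (t, x))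
    (F := fun q => (H (q.1.1, q.1.2, q.2)).1) (G := fun q => (H (q.1.1, q.1.2, q.2)).2)
    (hadm t ht).snd_pos (fun y hy => analyticAt_fst.comp (hHx hy))
    (fun y hy => analyticAt_snd.comp (hHx hy)) fun y hy =>
      (hadm t ht).snd_ne_zero (x, y)
        ⟨sphere_subset_closedBall hx, hy⟩).continuousAt.continuousWithinAt

lemma IsAdmissible.eventually_degree_eq {E : Type*} [NormedAddCommGroup E] [NormedSpace ℂ E]
    {t : E} {H : E × ℂ × ℂ → ℂ × ℂ}
    (hH : ∀ p ∈ closedBall (0 : ℂ) a ×ˢ closedBall (0 : ℂ) b, AnalyticAt ℂ H (t, p))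
    (hadm : IsAdmissible (fun p => H (t, p)) a b) :
    ∀ᶠ s in 𝓝 t, IsAdmissible (fun p => H (s, p)) a b ∧
      degree (fun p => H (s, p)) a b = degree (fun p => H (t, p)) a b := by
  have hev : ∀ᶠ s in 𝓝 t, (∀ p ∈ closedBall (0 : ℂ) a ×ˢ closedBall (0 : ℂ) b,
      AnalyticAt ℂ H (s, p)) ∧ IsAdmissible (fun p => H (s, p)) a b := by
    have hsnd : ∀ᶠ s in 𝓝 t, ∀ p ∈ closedBall (0 : ℂ) a ×ˢ sphere (0 : ℂ) b, (H (s, p)).2 ≠ 0 :=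
      ((isCompact_closedBall 0 a).prod
        (isCompact_sphere 0 b)).eventually_forall_of_forall_eventually fun p hp =>
          (hH p ⟨hp.1, sphere_subset_closedBall hp.2⟩).continuousAt.snd.eventually_ne
          (hadm.snd_ne_zero p hp)
    have hne : ∀ᶠ s in 𝓝 t, ∀ p ∈ sphere (0 : ℂ) a ×ˢ closedBall (0 : ℂ) b, H (s, p) ≠ 0 :=
      ((isCompact_sphere 0 a).prod
        (isCompact_closedBall 0 b)).eventually_forall_of_forall_eventually fun p hp =>
          (hH p ⟨sphere_subset_closedBall hp.1, hp.2⟩).continuousAt.eventually_ne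
          (hadm.ne_zero p hp)
    have han : ∀ᶠ s in 𝓝 t, ∀ p ∈ closedBall (0 : ℂ) a ×ˢ closedBall (0 : ℂ) b,
        AnalyticAt ℂ H (s, p) :=
      (isCompact_closedBidisc a b).eventually_forall_of_forall_eventually
        fun p hp => (hH p hp).eventually_analyticAt
    filter_upwards [han, hsnd, hne] with s hs hsnd hne
    exact ⟨hs, hadm.fst_pos, hadm.snd_pos, fun p hp => (hs p hp).curry_right, hsnd, hne⟩
  obtain ⟨δ, hδ, hball⟩ := Metric.eventually_nhds_iff_ball.1 hev
  filter_upwards [ball_mem_nhds t hδ] with s hs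
  let : NormedSpace ℝ E := .restrictScalars ℝ ℂ E
  exact ⟨(hball s hs).2, degree_eq_of_isPreconnected (convex_ball t δ).isPreconnected
    (fun q hq => (hball q.1 hq.1).1 q.2 hq.2) (fun s hs => (hball s hs).2) hs (mem_ball_self hδ)⟩

lemma IsAdmissible.exists_forall_norm_sub_lt (H : IsAdmissible h a b) :
    ∃ η > 0, ∀ g : ℂ × ℂ → ℂ × ℂ, AnalyticOnNhd ℂ g (closedBall 0 a ×ˢ closedBall 0 b) →
      (∀ p ∈ closedBall (0 : ℂ) a ×ˢ closedBall (0 : ℂ) b, ‖g p - h p‖ < η) →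
        IsAdmissible g a b ∧ degree g a b = degree h a b := by
  have hh := H.analyticOnNhd.continuousOn
  obtain ⟨m₁, hm₁, hsnd⟩ :=
    ((isCompact_closedBall (0 : ℂ) a).prod (isCompact_sphere (0 : ℂ) b)).exists_forall_le'
      (a := 0) (hh.mono (prod_mono_right sphere_subset_closedBall)).snd.norm
      fun p hp => norm_pos_iff.2 (H.snd_ne_zero p hp)
  obtain ⟨m₂, hm₂, hne⟩ :=
    ((isCompact_sphere (0 : ℂ) a).prod (isCompact_closedBall (0 : ℂ) b)).exists_forall_le'
      (a := 0) (hh.mono (prod_mono_left sphere_subset_closedBall)).norm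
      fun p hp => norm_pos_iff.2 (H.ne_zero p hp)
  refine ⟨min m₁ m₂, lt_min hm₁ hm₂, fun g hg hgh => ?_⟩
  have hclose {p : ℂ × ℂ} (hp : p ∈ closedBall (0 : ℂ) a ×ˢ closedBall (0 : ℂ) b) {t : ℂ}
      (ht : t ∈ closedBall (0 : ℂ) 1) : ‖t • (g p - h p)‖ < min m₁ m₂ := by
    rw [norm_smul]
    exact (mul_le_of_le_one_left (norm_nonneg _) (mem_closedBall_zero_iff.1 ht)).trans_lt (hgh p hp)
  have hadm : ∀ t ∈ closedBall (0 : ℂ) 1, IsAdmissible (fun p => h p + t • (g p - h p)) a b := by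
    refine fun t ht => ⟨H.fst_pos, H.snd_pos, fun p hp => (H.analyticOnNhd p hp).add
      ((analyticAt_const (v := t)).smul ((hg p hp).sub (H.analyticOnNhd p hp))), fun p hp h0 => ?_,
      fun p hp h0 => ?_⟩
    · refine (hsnd p hp).not_gt ?_
      rw [eq_neg_of_add_eq_zero_left h0, norm_neg]
      exact (norm_snd_le _).trans_lt ((hclose (prod_mono_right sphere_subset_closedBall hp)
        ht).trans_le (min_le_left _ _))
    · refine (hne p hp).not_gt ?_
      rw [eq_neg_of_add_eq_zero_left h0, norm_neg]
      exact (hclose (prod_mono_left sphere_subset_closedBall hp) ht).trans_le (min_le_right _ _)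
  have hH : AnalyticOnNhd ℂ (fun q : ℂ × ℂ × ℂ => h q.2 + q.1 • (g q.2 - h q.2))
      (closedBall 0 1 ×ˢ closedBall 0 a ×ˢ closedBall 0 b) := fun q hq =>
    have hh' := (H.analyticOnNhd q.2 hq.2).comp analyticAt_snd
    hh'.add (analyticAt_fst.smul (((hg q.2 hq.2).comp analyticAt_snd).sub hh'))
  have h1 : (1 : ℂ) ∈ closedBall (0 : ℂ) 1 := by simp
  have hdeg := degree_eq_of_isPreconnected (convex_closedBall (0 : ℂ) 1).isPreconnected hH hadm
    h1 (mem_closedBall_self zero_le_one)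
  exact ⟨by simpa using hadm 1 h1, by simpa using hdeg⟩

end Bidisc

section AnalyticOrder

lemma isTheta_one_of_continuousAt {X : Type*} [TopologicalSpace X] {u : X → ℂ} {p : X}
    (hu : ContinuousAt u p) (h0 : u p ≠ 0) : u =Θ[𝓝 p] fun _ => (1 : ℂ) :=
  (isTheta_of_div_tendsto_nhds_ne_zero (by simpa using hu.tendsto) h0).symm

variable {φ : ℂ → ℂ} {z : ℂ} {m n : ℕ}

lemma isTheta_pow_analyticOrderNatAt (hφ : AnalyticAt ℂ φ z) (h : analyticOrderAt φ z ≠ ⊤) :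
    φ =Θ[𝓝 z] fun w => (w - z) ^ analyticOrderNatAt φ z := by
  obtain ⟨u, hu, hu0, hφu⟩ := hφ.analyticOrderAt_ne_top.1 h
  simpa using EventuallyEq.trans_isTheta hφu ((isTheta_refl (fun w => (w - z) ^ _) (𝓝 z)).mul
    (isTheta_one_of_continuousAt hu.continuousAt hu0))

lemma le_of_pow_sub_isBigO_pow_sub
    (h : (fun w : ℂ => (w - z) ^ m) =O[𝓝[≠] z] fun w => (w - z) ^ n) : n ≤ m := by
  by_contra! hlt
  have hlo : (fun w : ℂ => (w - z) ^ n) =o[𝓝[≠] z] fun w => (w - z) ^ m :=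
    .of_norm_norm (by simpa using (isLittleO_pow_sub_pow_sub z hlt).mono nhdsWithin_le_nhds)
  refine isLittleO_irrefl (Eventually.frequently ?_) (h.trans_isLittleO hlo)
  exact eventually_mem_nhdsWithin.mono fun w hw => pow_ne_zero _ (sub_ne_zero.2 hw)

lemma analyticOrderNatAt_le_of_isBigO (hφ : AnalyticAt ℂ φ z) (h : analyticOrderAt φ z ≠ ⊤)
    (hn : (fun w => (w - z) ^ n) =O[𝓝[≠] z] φ) : analyticOrderNatAt φ z ≤ n :=
  le_of_pow_sub_isBigO_pow_sub
    (hn.trans ((isTheta_pow_analyticOrderNatAt hφ h).isBigO.mono nhdsWithin_le_nhds))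

lemma analyticOrderNatAt_eq_of_isTheta (hφ : AnalyticAt ℂ φ z) (h : analyticOrderAt φ z ≠ ⊤)
    (hn : φ =Θ[𝓝[≠] z] fun w => (w - z) ^ n) : analyticOrderNatAt φ z = n :=
  (analyticOrderNatAt_le_of_isBigO hφ h hn.isBigO_symm).antisymm <| le_of_pow_sub_isBigO_pow_sub <|
    ((isTheta_pow_analyticOrderNatAt hφ h).isBigO_symm.mono nhdsWithin_le_nhds).trans hn.isBigO

end AnalyticOrder

section SimpleZeros

variable {φ : ℂ → ℂ} {c c' w : ℂ} {R R' : ℝ}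

lemma filter_zerosIn (hR : 0 ≤ R) (hR' : 0 ≤ R') (hsub : closedBall c' R' ⊆ closedBall c R)
    (hφ : AnalyticOnNhd ℂ φ (closedBall c R)) (h0 : ∀ z ∈ sphere c R, φ z ≠ 0)
    (h0' : ∀ z ∈ sphere c' R', φ z ≠ 0) :
    (zerosIn φ (closedBall c R)).filter (· ∈ closedBall c' R') = zerosIn φ (closedBall c' R') := by
  ext z
  by_cases hz : z ∈ closedBall c' R'
  · rw [Multiset.count_filter_of_pos hz, count_zerosIn hR hφ h0 (hsub hz),
      count_zerosIn hR' (hφ.mono hsub) h0' hz]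
  · rw [Multiset.count_filter_of_neg hz, Multiset.count_eq_zero_of_notMem]
    exact fun h => hz ((mem_zerosIn hR' (hφ.mono hsub) h0').1 h).1

lemma zerosIn_eq_replicate (hR : 0 ≤ R) (hφ : AnalyticOnNhd ℂ φ (closedBall c R))
    (h0 : ∀ z ∈ sphere c R, φ z ≠ 0) (hw : w ∈ closedBall c R)
    (huniq : ∀ z ∈ closedBall c R, φ z = 0 → z = w) :
    zerosIn φ (closedBall c R) = Multiset.replicate (analyticOrderNatAt φ w) w := by
  have hrep := Multiset.eq_replicate_card.2 fun z hz =>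
    huniq z ((mem_zerosIn hR hφ h0).1 hz).1 ((mem_zerosIn hR hφ h0).1 hz).2
  rw [← count_zerosIn hR hφ h0 hw]
  nth_rw 2 [hrep]
  rwa [Multiset.count_replicate_self]

lemma pow_card_le_norm_prod {s : Multiset ℂ} {r : ℝ} (hr : 0 ≤ r) (h : ∀ z ∈ s, r ≤ ‖z‖) :
    r ^ s.card ≤ ‖s.prod‖ := by
  induction s using Multiset.induction with
  | empty => simp
  | cons z s ih =>
    rw [Multiset.prod_cons, Multiset.card_cons, pow_succ', norm_mul]
    exact mul_le_mul (h z (Multiset.mem_cons_self z s))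
      (ih fun w hw => h w (Multiset.mem_cons_of_mem hw)) (by positivity) (norm_nonneg z)

lemma mul_pow_card_le_norm_prod_map {s : Multiset ℂ} {F : ℂ → ℂ} {V : Set ℂ} {A r : ℝ}
    (hr : 0 ≤ r) (hcard : (s.filter (· ∈ V)).card = 1)
    (hFA : ∀ z ∈ s, z ∈ V → A ≤ ‖F z‖) (hFr : ∀ z ∈ s, z ∉ V → r ≤ ‖F z‖) :
    A * r ^ (s.card - 1) ≤ ‖(s.map F).prod‖ := by
  obtain ⟨w, hw⟩ := Multiset.card_eq_one.1 hcard
  have hsplit := Multiset.filter_add_not (· ∈ V) s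
  have hwmem : w ∈ s ∧ w ∈ V := by
    simpa using (Multiset.mem_filter (p := (· ∈ V)) (a := w) (s := s)).1 (by simp [hw])
  have hcard' : ((s.filter (· ∉ V)).map F).card = s.card - 1 := by
    rw [Multiset.card_map]
    have := congrArg Multiset.card hsplit
    rw [Multiset.card_add, hcard] at this
    omega
  rw [← hsplit, hw, Multiset.map_add, Multiset.prod_add, Multiset.map_singleton,
    Multiset.prod_singleton, norm_mul, ← hw, hsplit, ← hcard']
  refine mul_le_mul (hFA w hwmem.1 hwmem.2) (pow_card_le_norm_prod hr ?_) (by positivity)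
    (norm_nonneg _)
  rintro _ hFz
  obtain ⟨z, hz, rfl⟩ := Multiset.mem_map.1 hFz
  rw [Multiset.mem_filter] at hz
  exact hFr z hz.1 hz.2

variable {h : ℂ × ℂ → ℂ × ℂ} {a b : ℝ} {p : ℂ × ℂ}

lemma exists_eventually_mul_norm_sub_le (hp : DifferentiableAt ℂ h p) (h0 : h p = 0)
    (hinj : Function.Injective (fderiv ℂ h p)) :
    ∃ A > 0, ∀ᶠ q in 𝓝 p, A * ‖q - p‖ ≤ ‖h q‖ := by
  have hemb := (fderiv ℂ h p).toLinearMap.isClosedEmbedding_of_injective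
    (LinearMap.ker_eq_bot.2 hinj)
  obtain ⟨C, hC, hbound⟩ := (hp.hasFDerivAt.isTheta_sub hemb.isInducing).isBigO_symm.exists_pos
  refine ⟨C⁻¹, inv_pos.2 hC, hbound.bound.mono fun q hq => ?_⟩
  rw [h0, sub_zero] at hq
  exact (inv_mul_le_iff₀ hC).2 hq

lemma eventually_card_zerosIn_eq_one {E : Type*} [NormedAddCommGroup E] [NormedSpace ℂ E]
    {G : E × ℂ → ℂ} {x : E} {y : ℂ} (hG : AnalyticAt ℂ G (x, y)) (h0 : G (x, y) = 0)
    (hd : fderiv ℂ G (x, y) (0, 1) ≠ 0) :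
    ∀ᶠ ρ in 𝓝[>] (0 : ℝ), ∀ᶠ q in 𝓝 x, (∀ z ∈ sphere y ρ, G (q, z) ≠ 0) ∧
      (zerosIn (fun z => G (q, z)) (closedBall y ρ)).card = 1 := by
  have hd' : deriv (fun z => G (x, z)) y ≠ 0 := by rwa [deriv_prodMk_right hG.differentiableAt]
  have hfib : AnalyticAt ℂ (fun z => G (x, z)) y := hG.curry_right
  have hord : analyticOrderNatAt (fun z => G (x, z)) y = 1 := by
    rw [analyticOrderNatAt, hfib.analyticOrderAt_eq_one_of_zero_deriv_ne_zero h0 hd']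
    rfl
  have hnear : ∀ᶠ z in 𝓝 y, AnalyticAt ℂ G (x, z) ∧ (G (x, z) = 0 → z = y) :=
    (((Continuous.prodMk_right x).tendsto y).eventually hG.eventually_analyticAt).and <| by
      have := hfib.differentiableAt.hasDerivAt.eventually_ne (c := 0) hd'
      rw [eventually_nhdsWithin_iff] at this
      exact this.mono fun z hz hz0 => by_contra fun hzy => hz hzy hz0
  filter_upwards [nhdsWithin_le_nhds (eventually_closedBall_subset hnear), self_mem_nhdsWithin]
    with ρ hρ (hρ0 : 0 < ρ)
  have hsph : ∀ z ∈ sphere y ρ, G (x, z) ≠ 0 := fun z hz hz0 =>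
    ne_of_mem_sphere hz hρ0.ne' ((hρ (sphere_subset_closedBall hz)).2 hz0)
  filter_upwards [eventually_card_zerosIn_eq hρ0 (fun z hz => (hρ hz).1) hsph,
    eventually_forall_prodMk_ne_zero (isCompact_sphere y ρ)
      (fun z hz => (hρ (sphere_subset_closedBall hz)).1.continuousAt) hsph] with q hq hqs
  rw [hq, zerosIn_eq_replicate hρ0.le (fun z hz => (hρ hz).1.curry_right) hsph
    (mem_closedBall_self hρ0.le) fun z hz => (hρ hz).2, Multiset.card_replicate, hord]
  exact ⟨hqs, rfl⟩

lemma IsAdmissible.mul_pow_le_norm_resultant (H : IsAdmissible h a b) {x y₀ : ℂ} {ρ A r : ℝ}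
    (hx : x ∈ closedBall 0 a) (hρ : 0 ≤ ρ) (hsub : closedBall y₀ ρ ⊆ closedBall 0 b)
    (hsph : ∀ y ∈ sphere y₀ ρ, (h (x, y)).2 ≠ 0)
    (hcard : (zerosIn (fun y => (h (x, y)).2) (closedBall y₀ ρ)).card = 1) (hr : 0 ≤ r)
    (hnear : ∀ y ∈ closedBall y₀ ρ, A ≤ ‖h (x, y)‖)
    (hfar : ∀ y ∈ closedBall (0 : ℂ) b \ ball y₀ ρ, r ≤ ‖h (x, y)‖) :
    A * r ^ ((zerosIn (fun y => (h (x, y)).2) (closedBall 0 b)).card - 1) ≤ ‖resultant h b x‖ := by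
  have hnorm {y : ℂ} (hy : y ∈ zerosIn (fun y => (h (x, y)).2) (closedBall 0 b)) :
      y ∈ closedBall 0 b ∧ ‖(h (x, y)).1‖ = ‖h (x, y)‖ := by
    rw [H.mem_zerosIn_snd_iff hx] at hy
    simp [Prod.norm_def, hy.2, mem_closedBall_zero_iff.1 hy.1]
  refine mul_pow_card_le_norm_prod_map (V := closedBall y₀ ρ) hr ?_ (fun y hy hyV => ?_)
    fun y hy hyV => ?_
  · rw [← hcard, ← filter_zerosIn H.snd_pos.le hρ hsub (H.analyticOnNhd_snd_fibre hx)
      (fun y hy => H.snd_ne_zero (x, y) ⟨hx, hy⟩) hsph]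
  · exact (hnear y hyV).trans_eq (hnorm hy).2.symm
  · exact (hfar y ⟨(hnorm hy).1, notMem_subset ball_subset_closedBall hyV⟩).trans_eq
      (hnorm hy).2.symm

/-- At a zero alone in its fibre, where the second component is transversal to the fibre, one
factor of the resultant vanishes to first order while the others stay away from zero. -/
lemma IsAdmissible.exists_eventually_mul_norm_sub_le_resultant (H : IsAdmissible h a b)
    (hp : p ∈ closedBall (0 : ℂ) a ×ˢ closedBall (0 : ℂ) b) (h0 : h p = 0)
    (huniq : ∀ y ∈ closedBall (0 : ℂ) b, h (p.1, y) = 0 → y = p.2)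
    (hinj : Function.Injective (fderiv ℂ h p)) (htrans : (fderiv ℂ h p (0, 1)).2 ≠ 0) :
    ∃ C > 0, ∀ᶠ x in 𝓝 p.1, C * ‖x - p.1‖ ≤ ‖resultant h b x‖ := by
  obtain ⟨x₀, y₀⟩ := p
  have hpb := H.mem_bidisc_of_eq_zero hp h0
  have hana := H.analyticOnNhd
  have htrans' : fderiv ℂ (fun q => (h q).2) (x₀, y₀) (0, 1) ≠ 0 := by
    rwa [fderiv.snd (hana _ hp).differentiableAt]
  obtain ⟨A, hA, hlow⟩ := exists_eventually_mul_norm_sub_le (hana _ hp).differentiableAt h0 hinj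
  obtain ⟨U, hU, V, hV, hUV⟩ := mem_nhds_prod_iff.1 hlow
  have hVb : ∀ᶠ ρ in 𝓝[>] (0 : ℝ), closedBall y₀ ρ ⊆ V ∩ closedBall 0 b :=
    nhdsWithin_le_nhds
      (eventually_closedBall_subset (inter_mem hV (closedBall_mem_nhds_of_mem hpb.2)))
  obtain ⟨ρ, ⟨hcard, hρV⟩, hρ⟩ := (((eventually_card_zerosIn_eq_one (H.analyticOnNhd_snd _ hp)
    (by simp [h0]) htrans').and hVb).and self_mem_nhdsWithin).exists
  have hK : IsCompact (closedBall (0 : ℂ) b \ ball y₀ ρ) :=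
    (isCompact_closedBall 0 b).diff isOpen_ball
  obtain ⟨r, hr, hfar⟩ := hK.exists_forall_le' (a := 0) (f := fun y => ‖h (x₀, y)‖)
    (fun y hy => (hana (x₀, y) ⟨hp.1, hy.1⟩).curry_right.continuousAt.norm.continuousWithinAt)
    fun y hy => norm_pos_iff.2 fun hy0 => hy.2 (huniq y hy.1 hy0 ▸ mem_ball_self hρ)
  have hfar' : ∀ᶠ x in 𝓝 x₀, ∀ y ∈ closedBall (0 : ℂ) b \ ball y₀ ρ, r / 2 ≤ ‖h (x, y)‖ :=
    hK.eventually_forall_of_forall_eventually fun y hy =>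
      (hana (x₀, y) ⟨hp.1, hy.1⟩).continuousAt.norm.eventually_const_le
        ((half_lt_self hr).trans_le (hfar y hy))
  refine ⟨A * (r / 2) ^ ((zerosIn (fun y => (h (x₀, y)).2) (closedBall 0 b)).card - 1),
    by positivity, ?_⟩
  filter_upwards [hcard, hU, hfar', closedBall_mem_nhds_of_mem hpb.1] with x hx hxU hxfar hxa
  rw [H.card_zerosIn_snd_eq hp.1 hxa, mul_right_comm]
  refine H.mul_pow_le_norm_resultant hxa (le_of_lt hρ) (hρV.trans inter_subset_right) hx.1 hx.2
    (by positivity) (fun y hy => ?_) hxfar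
  exact (mul_le_mul_of_nonneg_left (norm_fst_le ((x, y) - (x₀, y₀))) hA.le).trans
    (hUV ⟨hxU, (hρV hy).1⟩)

lemma IsAdmissible.analyticOrderNatAt_resultant_eq_one (H : IsAdmissible h a b)
    (hp : p ∈ closedBall (0 : ℂ) a ×ˢ closedBall (0 : ℂ) b) (h0 : h p = 0)
    (huniq : ∀ y ∈ closedBall (0 : ℂ) b, h (p.1, y) = 0 → y = p.2)
    (hinj : Function.Injective (fderiv ℂ h p)) (htrans : (fderiv ℂ h p (0, 1)).2 ≠ 0) :
    analyticOrderNatAt (resultant h b) p.1 = 1 := by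
  obtain ⟨C, hC, hlow⟩ := H.exists_eventually_mul_norm_sub_le_resultant hp h0 huniq hinj htrans
  refine le_antisymm ?_ ?_
  · refine analyticOrderNatAt_le_of_isBigO (H.analyticOnNhd_resultant _ hp.1)
      (analyticOrderAt_ne_top_of_sphere H.fst_pos.le H.analyticOnNhd_resultant H.resultant_ne_zero
        hp.1) (.of_bound C⁻¹ <| nhdsWithin_le_nhds <| hlow.mono fun x hx => ?_)
    rwa [pow_one, ← div_eq_inv_mul, le_div_iff₀' hC]
  · rw [← count_zerosIn H.fst_pos.le H.analyticOnNhd_resultant H.resultant_ne_zero hp.1,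
      Multiset.one_le_count_iff_mem, H.mem_zerosIn_resultant_iff]
    exact ⟨hp.1, p.2, hp.2, h0⟩

end SimpleZeros

section Shear

variable {h : ℂ × ℂ → ℂ × ℂ} {a b : ℝ}

lemma IsAdmissible.finite_zeros (H : IsAdmissible h a b) :
    {p ∈ closedBall (0 : ℂ) a ×ˢ closedBall (0 : ℂ) b | h p = 0}.Finite := by
  have hfin : (⋃ x ∈ (zerosIn (resultant h b) (closedBall 0 a)).toFinset, ({x} : Set ℂ) ×ˢ
      ((zerosIn (fun y => (h (x, y)).2) (closedBall 0 b)).toFinset : Set ℂ)).Finite :=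
    (Finset.finite_toSet _).biUnion fun x _ => (finite_singleton x).prod (Finset.finite_toSet _)
  refine hfin.subset fun p ⟨hp, h0⟩ => mem_iUnion₂.2 ⟨p.1, ?_, rfl, ?_⟩
  · exact Multiset.mem_toFinset.2 (H.mem_zerosIn_resultant_iff.2 ⟨hp.1, p.2, hp.2, h0⟩)
  · exact Multiset.mem_toFinset.2 ((H.mem_zerosIn_snd_iff hp.1).2 ⟨hp.2, by simp [h0]⟩)

lemma IsAdmissible.toFinset_zerosIn_resultant (H : IsAdmissible h a b) :
    (zerosIn (resultant h b) (closedBall 0 a)).toFinset =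
      H.finite_zeros.toFinset.image Prod.fst := by
  ext x
  simp [H.mem_zerosIn_resultant_iff, and_assoc]

lemma IsAdmissible.ncard_zeros_le_degree_of_injOn (H : IsAdmissible h a b)
    (hinj : InjOn Prod.fst {p ∈ closedBall (0 : ℂ) a ×ˢ closedBall (0 : ℂ) b | h p = 0}) :
    {p ∈ closedBall (0 : ℂ) a ×ˢ closedBall (0 : ℂ) b | h p = 0}.ncard ≤ degree h a b := by
  rw [ncard_eq_toFinset_card _ H.finite_zeros, ← Finset.card_image_of_injOn (f := Prod.fst)
    (by simpa using hinj), ← H.toFinset_zerosIn_resultant]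
  exact Multiset.toFinset_card_le _

lemma IsAdmissible.ncard_zeros_eq_degree_of_injOn (H : IsAdmissible h a b)
    (hinj : InjOn Prod.fst {p ∈ closedBall (0 : ℂ) a ×ˢ closedBall (0 : ℂ) b | h p = 0})
    (hsimple : ∀ p ∈ closedBall (0 : ℂ) a ×ˢ closedBall (0 : ℂ) b, h p = 0 →
      Function.Injective (fderiv ℂ h p) ∧ (fderiv ℂ h p (0, 1)).2 ≠ 0) :
    {p ∈ closedBall (0 : ℂ) a ×ˢ closedBall (0 : ℂ) b | h p = 0}.ncard = degree h a b := by
  rw [ncard_eq_toFinset_card _ H.finite_zeros, ← Finset.card_image_of_injOn (f := Prod.fst)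
    (by simpa using hinj), ← H.toFinset_zerosIn_resultant,
    Multiset.toFinset_card_eq_card_iff_nodup.2, degree]
  refine Multiset.nodup_iff_count_le_one.2 fun x => ?_
  by_cases hx : x ∈ zerosIn (resultant h b) (closedBall 0 a)
  · obtain ⟨hxa, y, hy, h0⟩ := H.mem_zerosIn_resultant_iff.1 hx
    rw [count_zerosIn H.fst_pos.le H.analyticOnNhd_resultant H.resultant_ne_zero hxa]
    have hxy : (x, y) ∈ closedBall (0 : ℂ) a ×ˢ closedBall (0 : ℂ) b := ⟨hxa, hy⟩
    refine (H.analyticOrderNatAt_resultant_eq_one hxy h0 (fun y' hy' h0' => ?_)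
      (hsimple _ hxy h0).1 (hsimple _ hxy h0).2).le
    exact congrArg Prod.snd (hinj ⟨⟨hxa, hy'⟩, h0'⟩ ⟨hxy, h0⟩ rfl)
  · simp [hx]

/-- The linear change of coordinates `(x, y) ↦ (x + s y, y)`; for generic small `s` it moves
finitely many points to different fibres and makes the second component transversal to them. -/
def shear (s : ℂ) : (ℂ × ℂ) ≃L[ℂ] ℂ × ℂ :=
  ContinuousLinearEquiv.equivOfInverse
    (.prod (.fst ℂ ℂ ℂ + s • .snd ℂ ℂ ℂ) (.snd ℂ ℂ ℂ))
    (.prod (.fst ℂ ℂ ℂ - s • .snd ℂ ℂ ℂ) (.snd ℂ ℂ ℂ))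
    (fun p => by simp) fun p => by simp

lemma shear_apply (s : ℂ) (p : ℂ × ℂ) : shear s p = (p.1 + s * p.2, p.2) := rfl

lemma shear_symm_apply (s : ℂ) (p : ℂ × ℂ) : (shear s).symm p = (p.1 - s * p.2, p.2) := rfl

lemma eventually_affine_ne_zero {α β : ℂ} (h : α = 0 → β ≠ 0) :
    ∀ᶠ s in 𝓝[≠] (0 : ℂ), α * s + β ≠ 0 := by
  by_cases hα : α = 0
  · simp [hα, h hα]
  · have hd : HasDerivAt (fun s : ℂ => α * s + β) α 0 := by
      simpa using ((hasDerivAt_id (0 : ℂ)).const_mul α).add_const β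
    exact hd.eventually_ne hα

/-- No zero of `h` crosses the boundary of the bidisc under small shears. -/
lemma IsAdmissible.eventually_shear_image_zeros (H : IsAdmissible h a b) :
    ∀ᶠ s in 𝓝 (0 : ℂ), {p ∈ closedBall (0 : ℂ) a ×ˢ closedBall (0 : ℂ) b | h (shear s p) = 0} =
      (shear s).symm '' {p ∈ closedBall (0 : ℂ) a ×ˢ closedBall (0 : ℂ) b | h p = 0} := by
  have hcont : Continuous fun q : ℂ × ℂ × ℂ => shear q.1 q.2 := by
    simp only [shear_apply]; fun_prop
  have hcont' : Continuous fun q : ℂ × ℂ × ℂ => (shear q.1).symm q.2 := by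
    simp only [shear_symm_apply]; fun_prop
  have hin : ∀ᶠ s in 𝓝 (0 : ℂ), ∀ p ∈ closedBall (0 : ℂ) a ×ˢ closedBall (0 : ℂ) b,
      h (shear s p) = 0 → shear s p ∈ closedBall (0 : ℂ) a ×ˢ closedBall (0 : ℂ) b := by
    refine (isCompact_closedBidisc a b).eventually_forall_of_forall_eventually fun p hp => ?_
    have htend : Tendsto (fun q : ℂ × ℂ × ℂ => shear q.1 q.2) (𝓝 (0, p)) (𝓝 p) := by
      simpa [shear_apply] using hcont.tendsto (0, p)
    by_cases h0 : h p = 0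
    · filter_upwards [htend.eventually ((isOpen_ball.prod isOpen_ball).mem_nhds
        (H.mem_bidisc_of_eq_zero hp h0))] with q hq _
      exact prod_mono ball_subset_closedBall ball_subset_closedBall hq
    · filter_upwards [htend.eventually ((H.analyticOnNhd p hp).continuousAt.eventually_ne h0)]
        with q hq hq0 using absurd hq0 hq
  have hout : ∀ᶠ s in 𝓝 (0 : ℂ), ∀ p ∈ {p ∈ closedBall (0 : ℂ) a ×ˢ closedBall (0 : ℂ) b | h p = 0},
      (shear s).symm p ∈ closedBall (0 : ℂ) a ×ˢ closedBall (0 : ℂ) b := by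
    refine H.finite_zeros.eventually_all.2 fun p hp => ?_
    have htend : Tendsto (fun s => (shear s).symm p) (𝓝 0) (𝓝 p) := by
      simpa [shear_symm_apply, Function.comp_def] using
        (hcont'.comp (Continuous.prodMk_left p)).tendsto 0
    filter_upwards [htend.eventually ((isOpen_ball.prod isOpen_ball).mem_nhds
      (H.mem_bidisc_of_eq_zero hp.1 hp.2))] with s hs
    exact prod_mono ball_subset_closedBall ball_subset_closedBall hs
  filter_upwards [hin, hout] with s hin hout
  ext p
  refine ⟨fun hp => ⟨shear s p, ⟨hin p hp.1 hp.2, hp.2⟩, by simp⟩, ?_⟩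
  rintro ⟨q, hq, rfl⟩
  exact ⟨hout q hq, by simpa using hq.2⟩

lemma eventually_injOn_fst_shear_symm {Z : Set (ℂ × ℂ)} (hZ : Z.Finite) :
    ∀ᶠ s in 𝓝[≠] (0 : ℂ), InjOn Prod.fst ((shear s).symm '' Z) := by
  have hsep : ∀ᶠ s in 𝓝[≠] (0 : ℂ), ∀ p ∈ Z, ∀ q ∈ Z,
      ((shear s).symm p).1 = ((shear s).symm q).1 → p = q := by
    refine hZ.eventually_all.2 fun p _ => hZ.eventually_all.2 fun q _ => ?_
    by_cases hpq : p = q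
    · simp [hpq]
    refine (eventually_affine_ne_zero (α := q.2 - p.2) (β := p.1 - q.1) fun hα hβ => hpq <|
      Prod.ext (sub_eq_zero.1 hβ) (sub_eq_zero.1 hα).symm).mono fun s hs heq => absurd ?_ hs
    simp only [shear_symm_apply] at heq
    linear_combination heq
  filter_upwards [hsep] with s hs
  rintro _ ⟨p, hp, rfl⟩ _ ⟨q, hq, rfl⟩ heq
  rw [hs p hp q hq heq]

lemma IsAdmissible.eventually_degree_comp_shear (H : IsAdmissible h a b) :
    ∀ᶠ s in 𝓝 (0 : ℂ), IsAdmissible (h ∘ shear s) a b ∧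
      degree (h ∘ shear s) a b = degree h a b := by
  have h0 : h ∘ shear 0 = h := funext fun p => by simp [shear_apply]
  have hana (p : ℂ × ℂ) : AnalyticAt ℂ (fun q : ℂ × ℂ × ℂ => shear q.1 q.2) (0, p) :=
    have hy := analyticAt_snd.fun_comp (analyticAt_snd (p := ((0, p) : ℂ × ℂ × ℂ)))
    ((analyticAt_fst.fun_comp analyticAt_snd).add (analyticAt_fst.mul hy)).prod hy
  have := IsAdmissible.eventually_degree_eq (H := fun q => h (shear q.1 q.2)) (t := 0)
    (fun p hp => (H.analyticOnNhd p hp).comp_of_eq (hana p) (by simp [shear_apply]))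
    (by rwa [← h0] at H)
  rwa [show (fun p => h (shear 0 p)) = h from h0] at this

lemma IsAdmissible.ncard_zeros_le_degree (H : IsAdmissible h a b) :
    {p ∈ closedBall (0 : ℂ) a ×ˢ closedBall (0 : ℂ) b | h p = 0}.ncard ≤ degree h a b := by
  obtain ⟨s, ⟨hadm, hdeg⟩, himage, hinj⟩ :=
    ((H.eventually_degree_comp_shear.filter_mono nhdsWithin_le_nhds).and
      ((H.eventually_shear_image_zeros.filter_mono nhdsWithin_le_nhds).and
        (eventually_injOn_fst_shear_symm H.finite_zeros))).exists
  rw [← himage] at hinj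
  have := hadm.ncard_zeros_le_degree_of_injOn hinj
  rwa [hdeg, Function.comp_def, himage, ncard_image_of_injective _ (shear s).symm.injective] at this

lemma IsAdmissible.ncard_zeros_eq_degree (H : IsAdmissible h a b)
    (hsimple : ∀ p ∈ closedBall (0 : ℂ) a ×ˢ closedBall (0 : ℂ) b, h p = 0 →
      Function.Bijective (fderiv ℂ h p)) :
    {p ∈ closedBall (0 : ℂ) a ×ˢ closedBall (0 : ℂ) b | h p = 0}.ncard = degree h a b := by
  have htrans : ∀ᶠ s in 𝓝[≠] (0 : ℂ), ∀ p ∈ {p ∈ closedBall (0 : ℂ) a ×ˢ closedBall (0 : ℂ) b |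
      h p = 0}, (fderiv ℂ h p (s, 1)).2 ≠ 0 := by
    refine H.finite_zeros.eventually_all.2 fun p hp => ?_
    have hlin (s t : ℂ) : (fderiv ℂ h p (s, t)).2 =
        (fderiv ℂ h p (1, 0)).2 * s + (fderiv ℂ h p (0, 1)).2 * t := by
      rw [show ((s, t) : ℂ × ℂ) = s • (1, 0) + t • (0, 1) by simp, map_add, map_smul, map_smul]
      simp [mul_comm]
    refine (eventually_affine_ne_zero fun hα hβ => ?_).mono fun s hs => by rwa [hlin, mul_one]
    obtain ⟨v, hv⟩ := (hsimple p hp.1 hp.2).surjective (0, 1)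
    simpa [hv, hα, hβ] using hlin v.1 v.2
  obtain ⟨s, ⟨hadm, hdeg⟩, himage, hinj, htrans⟩ :=
    ((H.eventually_degree_comp_shear.filter_mono nhdsWithin_le_nhds).and
      ((H.eventually_shear_image_zeros.filter_mono nhdsWithin_le_nhds).and
        ((eventually_injOn_fst_shear_symm H.finite_zeros).and htrans))).exists
  rw [← himage] at hinj
  have := hadm.ncard_zeros_eq_degree_of_injOn hinj fun p hp h0 => ?_
  · rwa [hdeg, Function.comp_def, himage, ncard_image_of_injective _ (shear s).symm.injective]
      at this
  · obtain ⟨q, hq, rfl⟩ := himage.subset ⟨hp, h0⟩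
    rw [(shear s).comp_right_fderiv, ContinuousLinearEquiv.apply_symm_apply]
    exact ⟨(hsimple q hq.1 hq.2).injective.comp (shear s).injective,
      by simpa [shear_apply] using htrans q hq⟩

end Shear

section LocalDegree

/-- The germ of `h` at `0` has local degree (multiplicity) `D`: on all bidiscs `|x| ≤ a, |y| ≤ b`
with `a` small compared to the small number `b`, the map `h` is admissible, vanishes at most at
`0`, and has degree `D`. -/
def HasLocalDegree (h : ℂ × ℂ → ℂ × ℂ) (D : ℕ) : Prop :=
  ∀ᶠ b in 𝓝[>] (0 : ℝ), ∀ᶠ a in 𝓝[>] (0 : ℝ), IsAdmissible h a b ∧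
    (∀ p ∈ closedBall (0 : ℂ) a ×ˢ closedBall (0 : ℂ) b, h p = 0 → p = 0) ∧ degree h a b = D

variable {h : ℂ × ℂ → ℂ × ℂ} {f g₁ g₂ : ℂ × ℂ → ℂ} {a b : ℝ} {D D₁ D₂ m q : ℕ}

lemma HasLocalDegree.exists_lt (hD : HasLocalDegree h D) {r : ℝ} (hr : 0 < r) :
    ∃ a b : ℝ, a < r ∧ b < r ∧ IsAdmissible h a b ∧
      (∀ p ∈ closedBall (0 : ℂ) a ×ˢ closedBall (0 : ℂ) b, h p = 0 → p = 0) ∧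
      degree h a b = D := by
  have hlt : ∀ᶠ s in 𝓝[>] (0 : ℝ), s < r := mem_nhdsWithin_of_mem_nhds (Iio_mem_nhds hr)
  obtain ⟨b, hb, hbr⟩ := (hD.and hlt).exists
  obtain ⟨a, ha, har⟩ := (hb.and hlt).exists
  exact ⟨a, b, har, hbr, ha⟩

lemma IsAdmissible.mul_snd (H₁ : IsAdmissible (fun p => (f p, g₁ p)) a b)
    (H₂ : IsAdmissible (fun p => (f p, g₂ p)) a b) :
    IsAdmissible (fun p => (f p, g₁ p * g₂ p)) a b where
  fst_pos := H₁.fst_pos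
  snd_pos := H₁.snd_pos
  analyticOnNhd := H₁.analyticOnNhd_fst.prod (H₁.analyticOnNhd_snd.mul H₂.analyticOnNhd_snd)
  snd_ne_zero p hp := mul_ne_zero (H₁.snd_ne_zero p hp) (H₂.snd_ne_zero p hp)
  ne_zero p hp h0 := by
    rw [Prod.mk_eq_zero, mul_eq_zero] at h0
    exact h0.2.elim (fun h => H₁.ne_zero p hp (Prod.mk_eq_zero.2 ⟨h0.1, h⟩))
      fun h => H₂.ne_zero p hp (Prod.mk_eq_zero.2 ⟨h0.1, h⟩)

lemma IsAdmissible.degree_mul_snd (H₁ : IsAdmissible (fun p => (f p, g₁ p)) a b)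
    (H₂ : IsAdmissible (fun p => (f p, g₂ p)) a b) :
    degree (fun p => (f p, g₁ p * g₂ p)) a b =
      degree (fun p => (f p, g₁ p)) a b + degree (fun p => (f p, g₂ p)) a b := by
  have hres : EqOn (resultant (fun p => (f p, g₁ p * g₂ p)) b)
      (resultant (fun p => (f p, g₁ p)) b * resultant (fun p => (f p, g₂ p)) b)
      (closedBall 0 a) := fun x hx => by
    have := zerosIn_mul H₁.snd_pos.le (H₁.analyticOnNhd_snd_fibre hx)
      (H₂.analyticOnNhd_snd_fibre hx) (fun y hy => H₁.snd_ne_zero (x, y) ⟨hx, hy⟩)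
      fun y hy => H₂.snd_ne_zero (x, y) ⟨hx, hy⟩
    simp only [resultant, Pi.mul_apply, ← Multiset.prod_add, ← Multiset.map_add, ← this]
    rfl
  have hcard := card_zerosIn_eq_of_norm_sub_lt H₁.fst_pos (H₁.mul_snd H₂).analyticOnNhd_resultant
    (H₁.analyticOnNhd_resultant.mul H₂.analyticOnNhd_resultant) fun x hx => by
      rw [hres (sphere_subset_closedBall hx), Pi.mul_apply, sub_self, norm_zero, norm_pos_iff]
      exact mul_ne_zero (H₁.resultant_ne_zero x hx) (H₂.resultant_ne_zero x hx)
  rw [degree, degree, degree, hcard, ← Multiset.card_add, ← zerosIn_mul H₁.fst_pos.le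
    H₁.analyticOnNhd_resultant H₂.analyticOnNhd_resultant H₁.resultant_ne_zero H₂.resultant_ne_zero]
  rfl

lemma HasLocalDegree.mul_snd (h₁ : HasLocalDegree (fun p => (f p, g₁ p)) D₁)
    (h₂ : HasLocalDegree (fun p => (f p, g₂ p)) D₂) :
    HasLocalDegree (fun p => (f p, g₁ p * g₂ p)) (D₁ + D₂) := by
  filter_upwards [h₁, h₂] with b hb₁ hb₂
  filter_upwards [hb₁, hb₂] with a ⟨H₁, hz₁, hD₁⟩ ⟨H₂, hz₂, hD₂⟩
  refine ⟨H₁.mul_snd H₂, fun p hp h0 => ?_, by rw [H₁.degree_mul_snd H₂, hD₁, hD₂]⟩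
  rw [Prod.mk_eq_zero, mul_eq_zero] at h0
  exact h0.2.elim (fun h => hz₁ p hp (Prod.mk_eq_zero.2 ⟨h0.1, h⟩))
    fun h => hz₂ p hp (Prod.mk_eq_zero.2 ⟨h0.1, h⟩)

lemma eventually_forall_mem_closedBidisc {P : ℂ × ℂ → Prop} (hP : ∀ᶠ p in 𝓝 0, P p) :
    ∀ᶠ b in 𝓝[>] (0 : ℝ), ∀ᶠ a in 𝓝[>] (0 : ℝ),
      ∀ p ∈ closedBall (0 : ℂ) a ×ˢ closedBall (0 : ℂ) b, P p := by
  have hsub := (eventually_closedBall_subset hP).filter_mono (nhdsWithin_le_nhds (s := Ioi 0))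
  filter_upwards [hsub, self_mem_nhdsWithin] with b hb hb0
  filter_upwards [mem_nhdsWithin_of_mem_nhds (Iic_mem_nhds hb0)] with a hab p hp
  refine hb ?_
  rw [show (0 : ℂ × ℂ) = (0, 0) from rfl, ← closedBall_prod_same]
  exact ⟨closedBall_subset_closedBall hab hp.1, hp.2⟩

lemma ne_zero_of_isTheta_pow {φ : ℂ → ℂ} (hφ : φ =Θ[𝓝 0] fun y => y ^ m) :
    ∀ᶠ y in 𝓝 0, φ y = 0 → y = 0 := by
  filter_upwards [hφ.isBigO_symm.eq_zero_imp] with y hy h0 using eq_zero_of_pow_eq_zero (hy h0)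

lemma eventually_isAdmissible (hh : AnalyticAt ℂ h 0) (hzero : ∀ᶠ p in 𝓝 0, h p = 0 → p = 0)
    (hm : (fun y => (h (0, y)).2) =Θ[𝓝 0] fun y => y ^ m) :
    ∀ᶠ b in 𝓝[>] (0 : ℝ), ∀ᶠ a in 𝓝[>] (0 : ℝ), IsAdmissible h a b := by
  have hsnd : ∀ᶠ p : ℂ × ℂ in 𝓝 0, (h (0, p.2)).2 = 0 → p.2 = 0 :=
    (continuous_snd.tendsto' 0 0 rfl).eventually (ne_zero_of_isTheta_pow hm)
  filter_upwards [eventually_forall_mem_closedBidisc (hh.eventually_analyticAt.and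
    (hzero.and hsnd)), self_mem_nhdsWithin] with b hb (hb0 : 0 < b)
  obtain ⟨a₀, ha₀, ha₀pos⟩ := (hb.and self_mem_nhdsWithin).exists
  have h0 : (0 : ℂ) ∈ closedBall 0 a₀ := mem_closedBall_self (le_of_lt ha₀pos)
  have htube := eventually_forall_prodMk_ne_zero (G := fun p => (h p).2) (p := (0 : ℂ))
    (isCompact_sphere 0 b)
    (fun y hy => (ha₀ (0, y) ⟨h0, sphere_subset_closedBall hy⟩).1.continuousAt.snd)
    fun y hy h0y => ne_zero_of_mem_sphere hb0.ne' ⟨y, hy⟩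
      ((ha₀ (0, y) ⟨h0, sphere_subset_closedBall hy⟩).2.2 h0y)
  filter_upwards [hb, self_mem_nhdsWithin,
    (eventually_closedBall_subset htube).filter_mono nhdsWithin_le_nhds] with a ha ha0 hab
  refine ⟨ha0, hb0, fun p hp => (ha p hp).1, fun p hp => hab hp.1 p.2 hp.2, fun p hp hp0 => ?_⟩
  have := congrArg Prod.fst ((ha p ⟨sphere_subset_closedBall hp.1, hp.2⟩).2.1 hp0)
  exact ne_zero_of_mem_sphere (ne_of_gt ha0) ⟨p.1, hp.1⟩ this

lemma norm_prod_le_pow_card {s : Multiset ℂ} {r : ℝ} (hr : 0 ≤ r) (h : ∀ z ∈ s, ‖z‖ ≤ r) :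
    ‖s.prod‖ ≤ r ^ s.card := by
  induction s using Multiset.induction with
  | empty => simp
  | cons z s ih =>
    rw [Multiset.prod_cons, Multiset.card_cons, pow_succ', norm_mul]
    exact mul_le_mul (h z (Multiset.mem_cons_self z s))
      (ih fun w hw => h w (Multiset.mem_cons_of_mem hw)) (norm_nonneg _) hr

lemma IsAdmissible.card_zerosIn_snd_of_isTheta (H : IsAdmissible h a b)
    (hzero : ∀ y ∈ closedBall (0 : ℂ) b, (h (0, y)).2 = 0 → y = 0)
    (hm : (fun y => (h (0, y)).2) =Θ[𝓝 0] fun y => y ^ m) {x : ℂ} (hx : x ∈ closedBall 0 a) :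
    (zerosIn (fun y => (h (x, y)).2) (closedBall 0 b)).card = m := by
  have h0a : (0 : ℂ) ∈ closedBall 0 a := mem_closedBall_self H.fst_pos.le
  have h0b : (0 : ℂ) ∈ closedBall 0 b := mem_closedBall_self H.snd_pos.le
  have h0S : ∀ y ∈ sphere (0 : ℂ) b, (h (0, y)).2 ≠ 0 := fun y hy => H.snd_ne_zero (0, y) ⟨h0a, hy⟩
  have hana := H.analyticOnNhd_snd_fibre h0a
  rw [H.card_zerosIn_snd_eq hx h0a, zerosIn_eq_replicate H.snd_pos.le hana h0S h0b hzero,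
    Multiset.card_replicate]
  exact analyticOrderNatAt_eq_of_isTheta (hana 0 h0b)
    (analyticOrderAt_ne_top_of_sphere H.snd_pos.le hana h0S h0b)
    (by simpa using hm.mono nhdsWithin_le_nhds)

lemma IsAdmissible.resultant_isTheta (H : IsAdmissible h a b) (hm0 : m ≠ 0)
    (hcard : ∀ x ∈ closedBall 0 a, (zerosIn (fun y => (h (x, y)).2) (closedBall 0 b)).card = m)
    (hq : (fun p => (h p).1 ^ m) =Θ[𝓟 ((closedBall 0 a ×ˢ closedBall 0 b) ∩ {p | (h p).2 = 0})]
      fun p => p.1 ^ q) :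
    resultant h b =Θ[𝓝[≠] 0] fun x => x ^ q := by
  obtain ⟨C, hC, hCb⟩ := hq.isBigO.exists_pos
  obtain ⟨c, hc, hcb⟩ := hq.isBigO_symm.exists_pos
  rw [isBigOWith_principal] at hCb hcb
  have hroot {x : ℂ} (hx : x ∈ closedBall 0 a) :
      ∀ z ∈ (zerosIn (fun y => (h (x, y)).2) (closedBall 0 b)).map fun y => (h (x, y)).1 ^ m,
        ‖z‖ ≤ C * ‖x ^ q‖ ∧ c⁻¹ * ‖x ^ q‖ ≤ ‖z‖ := by
    rintro _ hz
    obtain ⟨y, hy, rfl⟩ := Multiset.mem_map.1 hz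
    obtain ⟨hyb, hy0⟩ := (H.mem_zerosIn_snd_iff hx).1 hy
    exact ⟨hCb (x, y) ⟨⟨hx, hyb⟩, hy0⟩, (inv_mul_le_iff₀ hc).2 (hcb (x, y) ⟨⟨hx, hyb⟩, hy0⟩)⟩
  have hball : ∀ᶠ x in 𝓝[≠] (0 : ℂ), x ∈ closedBall 0 a :=
    mem_nhdsWithin_of_mem_nhds (closedBall_mem_nhds 0 H.fst_pos)
  constructor
  · refine IsBigO.of_pow hm0 (.of_bound (C ^ m) ?_)
    filter_upwards [hball] with x hx
    have := norm_prod_le_pow_card (by positivity) fun z hz => (hroot hx z hz).1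
    rw [Multiset.card_map, hcard x hx, Multiset.prod_map_pow, mul_pow, ← norm_pow] at this
    simpa [resultant] using this
  · refine IsBigO.of_pow hm0 (.of_bound (c ^ m) ?_)
    filter_upwards [hball] with x hx
    have := pow_card_le_norm_prod (by positivity) fun z hz => (hroot hx z hz).2
    rw [Multiset.card_map, hcard x hx, Multiset.prod_map_pow, mul_pow, ← norm_pow, inv_pow,
      inv_mul_le_iff₀ (by positivity)] at this
    simpa [resultant] using this

lemma IsAdmissible.degree_eq_of_isTheta (H : IsAdmissible h a b)
    (hzero : ∀ p ∈ closedBall (0 : ℂ) a ×ˢ closedBall (0 : ℂ) b, h p = 0 → p = 0)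
    (hres : resultant h b =Θ[𝓝[≠] 0] fun x => x ^ q) : degree h a b = q := by
  have h0 : (0 : ℂ) ∈ closedBall 0 a := mem_closedBall_self H.fst_pos.le
  rw [degree, zerosIn_eq_replicate H.fst_pos.le H.analyticOnNhd_resultant H.resultant_ne_zero h0,
    Multiset.card_replicate]
  · exact analyticOrderNatAt_eq_of_isTheta (H.analyticOnNhd_resultant 0 h0)
      (analyticOrderAt_ne_top_of_sphere H.fst_pos.le H.analyticOnNhd_resultant
        H.resultant_ne_zero h0) (by simpa using hres)
  · intro x hx h0x
    obtain ⟨y, hy, hxy⟩ := (H.resultant_eq_zero_iff hx).1 h0x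
    exact congrArg Prod.fst (hzero (x, y) ⟨hx, hy⟩ hxy)

lemma hasLocalDegree_of_isTheta (hh : AnalyticAt ℂ h 0) (hm0 : m ≠ 0)
    (hm : (fun y => (h (0, y)).2) =Θ[𝓝 0] fun y => y ^ m)
    (hq : (fun p => (h p).1 ^ m) =Θ[𝓝[{p | (h p).2 = 0}] 0] fun p => p.1 ^ q) :
    HasLocalDegree h q := by
  have hsnd : ∀ᶠ p : ℂ × ℂ in 𝓝 0, (h (0, p.2)).2 = 0 → p.2 = 0 :=
    (continuous_snd.tendsto' 0 0 rfl).eventually (ne_zero_of_isTheta_pow hm)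
  have hzero : ∀ᶠ p in 𝓝 0, h p = 0 → p = 0 := by
    filter_upwards [hsnd, eventually_nhdsWithin_iff.1 hq.isBigO_symm.eq_zero_imp] with p hp hq h0
    have hp1 : p.1 = 0 := eq_zero_of_pow_eq_zero (hq (by simp [h0]) (by simp [h0, hm0]))
    exact Prod.ext hp1 (hp (by simp [← hp1, h0]))
  obtain ⟨C, hC⟩ := hq.isBigO.bound
  obtain ⟨c, hc⟩ := hq.isBigO_symm.bound
  filter_upwards [eventually_isAdmissible hh hzero hm, eventually_forall_mem_closedBidisc
    ((hzero.and hsnd).and (eventually_nhdsWithin_iff.1 (hC.and hc)))] with b hb₁ hb₂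
  filter_upwards [hb₁, hb₂] with a H ha
  refine ⟨H, fun p hp => (ha p hp).1.1, H.degree_eq_of_isTheta (fun p hp => (ha p hp).1.1)
    (H.resultant_isTheta hm0 (fun x hx => H.card_zerosIn_snd_of_isTheta (fun y hy =>
      (ha (0, y) ⟨mem_closedBall_self H.fst_pos.le, hy⟩).1.2) hm hx) ⟨?_, ?_⟩)⟩
  · exact .of_bound C (mem_principal.2 fun p hp => ((ha p hp.1).2 hp.2).1)
  · exact .of_bound c (mem_principal.2 fun p hp => ((ha p hp.1).2 hp.2).2)

end LocalDegree

section Example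

/-- The map of the theorem in the coordinates of `ℂ × ℂ`, with a parameter `ω` in place of the
primitive cube root of unity. -/
def exampleMap (k : ℕ) (ω : ℂ) (p : ℂ × ℂ) : ℂ × ℂ :=
  (-p.1 + p.1 ^ (2 * k + 1) + p.1 * p.2 ^ 3, ω * p.2 + p.1 ^ 2 * p.2 + p.2 ^ (3 * k + 1))

variable {k m q j : ℕ} {ω : ℂ} {f U V γ δ : ℂ × ℂ → ℂ}

lemma exampleMap_mul_mul (k : ℕ) (ω x y A B : ℂ) :
    exampleMap k ω (x * A, y * B) =
      (x * (-A + x ^ (2 * k) * A ^ (2 * k + 1) + y ^ 3 * (A * B ^ 3)),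
        y * (ω * B + x ^ 2 * (A ^ 2 * B) + y ^ (3 * k) * B ^ (3 * k + 1))) := by
  ext <;> simp only [exampleMap, mul_pow, pow_succ] <;> ring

lemma analyticOnNhd_exampleMap (k : ℕ) (ω : ℂ) : AnalyticOnNhd ℂ (exampleMap k ω) univ := fun _ _ =>
  ((analyticAt_fst.neg.add (analyticAt_fst.pow _)).add (analyticAt_fst.mul (analyticAt_snd.pow 3)))
    |>.prod (((analyticAt_const.mul analyticAt_snd).add ((analyticAt_fst.pow 2).mul analyticAt_snd))
      |>.add (analyticAt_snd.pow _))

lemma exists_exampleMap_iterate_eq (hk : k ≠ 0) (hω : ω ^ 3 = 1) (j : ℕ) :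
    ∃ α β γ δ : ℂ × ℂ → ℂ, AnalyticAt ℂ α 0 ∧ AnalyticAt ℂ β 0 ∧ AnalyticAt ℂ γ 0 ∧
      AnalyticAt ℂ δ 0 ∧ α 0 = -j * (-1) ^ j ∧ β 0 = -j * (-1) ^ j ∧ ω * γ 0 = j * ω ^ j ∧
      ω * δ 0 = j * ω ^ j ∧ ∀ p : ℂ × ℂ, (exampleMap k ω)^[j] p =
        (p.1 * ((-1) ^ j + p.1 ^ (2 * k) * α p + p.2 ^ 3 * β p),
          p.2 * (ω ^ j + p.1 ^ 2 * γ p + p.2 ^ (3 * k) * δ p)) := by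
  induction j with
  | zero => exact ⟨0, 0, 0, 0, analyticAt_const, analyticAt_const, analyticAt_const,
      analyticAt_const, by simp, by simp, by simp, by simp, fun p => by simp⟩
  | succ j ih =>
    obtain ⟨α, β, γ, δ, hα, hβ, hγ, hδ, hα0, hβ0, hγ0, hδ0, hF⟩ := ih
    set A : ℂ × ℂ → ℂ := fun p => (-1) ^ j + p.1 ^ (2 * k) * α p + p.2 ^ 3 * β p with hA
    set B : ℂ × ℂ → ℂ := fun p => ω ^ j + p.1 ^ 2 * γ p + p.2 ^ (3 * k) * δ p with hB
    have hAan : AnalyticAt ℂ A 0 :=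
      (analyticAt_const.add ((analyticAt_fst.pow _).mul hα)).add ((analyticAt_snd.pow _).mul hβ)
    have hBan : AnalyticAt ℂ B 0 :=
      (analyticAt_const.add ((analyticAt_fst.pow _).mul hγ)).add ((analyticAt_snd.pow _).mul hδ)
    have hA0 : A 0 = (-1) ^ j := by simp [hA, hk]
    have hB0 : B 0 = ω ^ j := by simp [hB, hk]
    have hone : ((-1 : ℂ) ^ j) ^ 2 = 1 := by rw [pow_right_comm]; simp
    have hcube : (ω ^ j) ^ 3 = 1 := by rw [pow_right_comm, hω, one_pow]
    refine ⟨fun p => -α p + A p ^ (2 * k + 1), fun p => -β p + A p * B p ^ 3,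
      fun p => ω * γ p + A p ^ 2 * B p, fun p => ω * δ p + B p ^ (3 * k + 1), by fun_prop,
      by fun_prop, by fun_prop, by fun_prop, ?_, ?_, ?_, ?_, fun p => ?_⟩
    · simp only [hA0, hα0, pow_succ, pow_mul, hone, one_pow]; push_cast; ring
    · simp only [hA0, hβ0, hB0, hcube]; push_cast; ring
    · simp only [hA0, hB0, hone]; push_cast; linear_combination ω * hγ0
    · simp only [hB0, pow_succ _ (3 * k), pow_mul, hcube, one_pow]
      push_cast
      linear_combination ω * hδ0
    · rw [Function.iterate_succ_apply', hF, exampleMap_mul_mul]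
      ext <;> simp only [hA, hB] <;> ring

lemma exists_sub_exampleMap_iterate_eq (hk : k ≠ 0) (hω : ω ^ 3 = 1) (hj : j ≠ 0) :
    ∃ α β γ δ : ℂ × ℂ → ℂ, AnalyticAt ℂ α 0 ∧ AnalyticAt ℂ β 0 ∧ AnalyticAt ℂ γ 0 ∧
      AnalyticAt ℂ δ 0 ∧ α 0 ≠ 0 ∧ β 0 ≠ 0 ∧ γ 0 ≠ 0 ∧ δ 0 ≠ 0 ∧
      (fun p => p - (exampleMap k ω)^[j] p) = fun p =>
        (p.1 * (1 - (-1) ^ j + p.1 ^ (2 * k) * α p + p.2 ^ 3 * β p),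
          p.2 * (1 - ω ^ j + p.1 ^ 2 * γ p + p.2 ^ (3 * k) * δ p)) := by
  obtain ⟨α, β, γ, δ, hα, hβ, hγ, hδ, hα0, hβ0, hγ0, hδ0, hF⟩ :=
    exists_exampleMap_iterate_eq hk hω j
  have hω0 : ω ≠ 0 := by rintro rfl; simp at hω
  have hjω : (j : ℂ) * ω ^ j ≠ 0 := by simp [hj, hω0]
  refine ⟨-α, -β, -γ, -δ, hα.neg, hβ.neg, hγ.neg, hδ.neg, by simp [hα0, hj], by simp [hβ0, hj],
    neg_ne_zero.2 (right_ne_zero_of_mul (hγ0.trans_ne hjω)),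
    neg_ne_zero.2 (right_ne_zero_of_mul (hδ0.trans_ne hjω)), ?_⟩
  ext p <;> simp only [hF, Prod.fst_sub, Prod.snd_sub, Pi.neg_apply] <;> ring

lemma hasLocalDegree_mk_snd_mul (hf : AnalyticAt ℂ f 0) (hV : AnalyticAt ℂ V 0) (hV0 : V 0 ≠ 0)
    (hq : (fun x => f (x, 0)) =Θ[𝓝 0] fun x => x ^ q) :
    HasLocalDegree (fun p => (f p, p.2 * V p)) q := by
  refine hasLocalDegree_of_isTheta (m := 1) (hf.prod (analyticAt_snd.mul hV)) one_ne_zero ?_ ?_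
  · have hVy : ContinuousAt (fun y : ℂ => V (0, y)) 0 :=
      hV.continuousAt.comp' (f := fun y : ℂ => ((0 : ℂ), y)) (by fun_prop)
    simpa using (isTheta_refl (fun y : ℂ => y) (𝓝 0)).mul (isTheta_one_of_continuousAt hVy hV0)
  · have hline : ∀ᶠ p in 𝓝[{p | p.2 * V p = 0}] (0 : ℂ × ℂ), p.2 = 0 :=
      (hV.continuousAt.eventually_ne hV0).filter_mono nhdsWithin_le_nhds |>.mp
        (eventually_mem_nhdsWithin.mono fun p hp hVp => (mul_eq_zero.1 hp).resolve_right hVp)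
    have hfst : Tendsto Prod.fst (𝓝[{p | p.2 * V p = 0}] (0 : ℂ × ℂ)) (𝓝 0) :=
      (continuous_fst.tendsto' 0 0 rfl).mono_left nhdsWithin_le_nhds
    refine EventuallyEq.trans_isTheta (hline.mono fun p hp => ?_)
      ⟨hq.isBigO.comp_tendsto hfst, hq.isBigO_symm.comp_tendsto hfst⟩
    simp [← hp]

lemma hasLocalDegree_fst_mul_curve (hU : AnalyticAt ℂ U 0) (hγ : AnalyticAt ℂ γ 0)
    (hδ : AnalyticAt ℂ δ 0) (hδ0 : δ 0 ≠ 0) (hm : m ≠ 0)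
    (hq : (fun p => U p ^ m) =Θ[𝓝[{p | p.1 ^ 2 * γ p + p.2 ^ m * δ p = 0}] 0] fun p => p.1 ^ q) :
    HasLocalDegree (fun p => (p.1 * U p, p.1 ^ 2 * γ p + p.2 ^ m * δ p)) (m + q) := by
  refine hasLocalDegree_of_isTheta (m := m) ((analyticAt_fst.mul hU).prod
    (((analyticAt_fst.pow 2).mul hγ).add ((analyticAt_snd.pow m).mul hδ))) hm ?_ ?_
  · have hδy : ContinuousAt (fun y : ℂ => δ (0, y)) 0 :=
      hδ.continuousAt.comp' (f := fun y : ℂ => ((0 : ℂ), y)) (by fun_prop)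
    simpa using (isTheta_refl (fun y : ℂ => y ^ m) (𝓝 0)).mul (isTheta_one_of_continuousAt hδy hδ0)
  · simpa only [mul_pow, pow_add] using (isTheta_refl _ _).mul hq

lemma isTheta_on_curve (hγ : ContinuousAt γ 0) (hγ0 : γ 0 ≠ 0) (hδ : ContinuousAt δ 0)
    (hδ0 : δ 0 ≠ 0) :
    (fun p => p.2 ^ m) =Θ[𝓝[{p | p.1 ^ 2 * γ p + p.2 ^ m * δ p = 0}] 0] fun p => p.1 ^ 2 := by
  have hγ1 := (isTheta_one_of_continuousAt hγ hγ0).mono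
    (nhdsWithin_le_nhds (s := {p | p.1 ^ 2 * γ p + p.2 ^ m * δ p = 0}))
  have hδ1 := (isTheta_one_of_continuousAt hδ hδ0).mono
    (nhdsWithin_le_nhds (s := {p | p.1 ^ 2 * γ p + p.2 ^ m * δ p = 0}))
  have hcurve : (fun p => p.2 ^ m * δ p)
      =ᶠ[𝓝[{p | p.1 ^ 2 * γ p + p.2 ^ m * δ p = 0}] 0] fun p => -(p.1 ^ 2 * γ p) :=
    eventually_mem_nhdsWithin.mono fun p hp => eq_neg_of_add_eq_zero_right hp
  have hx := (isTheta_refl (fun p : ℂ × ℂ => p.1 ^ 2) _).mul hγ1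
  have hy := (isTheta_refl (fun p : ℂ × ℂ => p.2 ^ m) _).mul hδ1
  simpa using hy.symm.trans (hcurve.trans_isTheta ⟨hx.isBigO.neg_left, hx.isBigO_symm.neg_right⟩)

lemma isTheta_fst_mul_on_axis {α : ℂ × ℂ → ℂ} (hk : k ≠ 0) (hα : ContinuousAt α 0) (hα0 : α 0 ≠ 0)
    (j : ℕ) : (fun x : ℂ => x * (1 - (-1) ^ j + x ^ (2 * k) * α (x, 0))) =Θ[𝓝 0]
      fun x => x ^ (if Even j then 2 * k + 1 else 1) := by
  have hαx : ContinuousAt (fun x : ℂ => α (x, 0)) 0 :=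
    hα.comp' (f := fun x : ℂ => (x, (0 : ℂ))) (by fun_prop)
  split_ifs with hj
  · have := (isTheta_refl (fun x : ℂ => x ^ (2 * k + 1)) (𝓝 0)).mul
      (isTheta_one_of_continuousAt hαx hα0)
    simpa [hj.neg_one_pow, pow_succ', mul_assoc] using this
  · have hu : ContinuousAt (fun x : ℂ => 1 - (-1) ^ j + x ^ (2 * k) * α (x, 0)) 0 := by fun_prop
    have hu0 : 1 - (-1 : ℂ) ^ j + 0 ^ (2 * k) * α (0, 0) ≠ 0 := by
      rw [(Nat.not_even_iff_odd.1 hj).neg_one_pow]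
      norm_num [hk]
    simpa using (isTheta_refl (fun x : ℂ => x) (𝓝 0)).mul (isTheta_one_of_continuousAt hu hu0)

lemma hasLocalDegree_sub_iterate_of_pow_ne_one (hk : k ≠ 0) (hω : ω ^ 3 = 1) (hj : j ≠ 0)
    (hωj : ω ^ j ≠ 1) : HasLocalDegree (fun p => p - (exampleMap k ω)^[j] p)
      (if Even j then 2 * k + 1 else 1) := by
  obtain ⟨α, β, γ, δ, hα, hβ, hγ, hδ, hα0, -, -, -, heq⟩ :=
    exists_sub_exampleMap_iterate_eq hk hω hj
  rw [heq]
  refine hasLocalDegree_mk_snd_mul (analyticAt_fst.mul ((analyticAt_const.add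
    ((analyticAt_fst.pow _).mul hα)).add ((analyticAt_snd.pow _).mul hβ)))
    ((analyticAt_const.add ((analyticAt_fst.pow _).mul hγ)).add ((analyticAt_snd.pow _).mul hδ))
    (by simpa [hk, sub_eq_zero] using hωj.symm) ?_
  simpa using isTheta_fst_mul_on_axis hk hα.continuousAt hα0 j

lemma isLittleO_pow_on_curve (hk : 1 < k) {l : Filter (ℂ × ℂ)} (hl : l ≤ 𝓝 0)
    (hcurve : (fun p => p.2 ^ (3 * k)) =Θ[l] fun p => p.1 ^ 2) :
    (fun p => p.1 ^ (2 * k)) =o[l] fun p => p.2 ^ 3 := by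
  have hsnd : Tendsto Prod.snd l (𝓝 (0 : ℂ)) := (continuous_snd.tendsto' 0 0 rfl).mono_left hl
  have hlt : 3 < 3 * k * k := by nlinarith
  calc (fun p : ℂ × ℂ => p.1 ^ (2 * k))
    _ =O[l] fun p => p.2 ^ (3 * k * k) := by simpa only [pow_mul] using hcurve.isBigO_symm.pow k
    _ =o[l] fun p => p.2 ^ 3 := (isLittleO_pow_pow hlt).comp_tendsto hsnd

lemma isTheta_six_of_on_curve {α β : ℂ × ℂ → ℂ} (hk : 1 < k) (hα : ContinuousAt α 0)
    (hβ : ContinuousAt β 0) (hβ0 : β 0 ≠ 0) {l : Filter (ℂ × ℂ)} (hl : l ≤ 𝓝 0)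
    (hcurve : (fun p => p.2 ^ (3 * k)) =Θ[l] fun p => p.1 ^ 2) :
    (fun p => (p.1 ^ (2 * k) * α p + p.2 ^ 3 * β p) ^ (3 * k)) =Θ[l] fun p => p.1 ^ 6 := by
  have hy : (fun p : ℂ × ℂ => p.2 ^ 3 * β p) =Θ[l] fun p => p.2 ^ 3 := by
    simpa using (isTheta_refl _ l).mul ((isTheta_one_of_continuousAt hβ hβ0).mono hl)
  have hx : (fun p : ℂ × ℂ => p.1 ^ (2 * k) * α p) =o[l] fun p => p.2 ^ 3 * β p := by
    have hα1 : α =O[l] fun _ => (1 : ℂ) := (hα.isBigO_one ℂ).mono hl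
    simpa using ((isLittleO_pow_on_curve hk hl hcurve).mul_isBigO hα1).trans_isTheta
      (by simpa using hy.symm)
  have hU := ((hx.add_isTheta (isTheta_refl _ l)).trans hy).pow (3 * k)
  have hpow := hcurve.pow 3
  simp only [← pow_mul, mul_comm (3 * k) 3] at hU hpow ⊢
  exact hU.trans hpow

lemma hasLocalDegree_sub_iterate_of_pow_eq_one (hk : 1 < k) (hω : ω ^ 3 = 1) (hj : j ≠ 0)
    (hωj : ω ^ j = 1) : HasLocalDegree (fun p => p - (exampleMap k ω)^[j] p)
      (if Even j then 5 * k + 7 else 3 * k + 1) := by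
  have hk0 : k ≠ 0 := by omega
  obtain ⟨α, β, γ, δ, hα, hβ, hγ, hδ, hα0, hβ0, hγ0, hδ0, heq⟩ :=
    exists_sub_exampleMap_iterate_eq hk0 hω hj
  have hU : AnalyticAt ℂ (fun p : ℂ × ℂ =>
      1 - (-1) ^ j + p.1 ^ (2 * k) * α p + p.2 ^ 3 * β p) 0 :=
    (analyticAt_const.add ((analyticAt_fst.pow _).mul hα)).add ((analyticAt_snd.pow _).mul hβ)
  have hline : HasLocalDegree (fun p : ℂ × ℂ =>
      (p.1 * (1 - (-1) ^ j + p.1 ^ (2 * k) * α p + p.2 ^ 3 * β p), p.2))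
      (if Even j then 2 * k + 1 else 1) := by
    simpa using hasLocalDegree_mk_snd_mul (V := 1) (analyticAt_fst.mul hU) analyticAt_const
      one_ne_zero (by simpa using isTheta_fst_mul_on_axis hk0 hα.continuousAt hα0 j)
  have hcurve := isTheta_on_curve (m := 3 * k) hγ.continuousAt hγ0 hδ.continuousAt hδ0
  have hdeg := hline.mul_snd (hasLocalDegree_fst_mul_curve (m := 3 * k)
    (q := if Even j then 6 else 0) hU hγ hδ hδ0 (by omega) ?_)
  · rw [heq]
    simp only [hωj, sub_self, zero_add]
    convert hdeg using 1
    split_ifs <;> ring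
  · split_ifs with hj
    · simpa [hj.neg_one_pow] using
        isTheta_six_of_on_curve hk hα.continuousAt hβ.continuousAt hβ0 nhdsWithin_le_nhds hcurve
    · have hU0 : 1 - (-1 : ℂ) ^ j + 0 ^ (2 * k) * α 0 + 0 ^ 3 * β 0 ≠ 0 := by
        rw [(Nat.not_even_iff_odd.1 hj).neg_one_pow]
        norm_num [hk0]
      simpa using ((isTheta_one_of_continuousAt hU.continuousAt hU0).mono nhdsWithin_le_nhds).pow
        (3 * k)

end Example

section Transfer

lemma exists_forall_mem_of_norm_lt {X F : Type*} [TopologicalSpace X] [NormedAddCommGroup F]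
    {K U : Set X} {h : X → F} (hK : IsCompact K) (hh : ContinuousOn h K) (hU : IsOpen U)
    (hz : ∀ x ∈ K, h x = 0 → x ∈ U) : ∃ η > 0, ∀ x ∈ K, ‖h x‖ < η → x ∈ U := by
  obtain ⟨c, hc, hcK⟩ := (hK.diff hU).exists_forall_le' (hh.norm.mono sdiff_subset) (a := 0)
    fun x hx => norm_pos_iff.2 fun h0 => hx.2 (hz x hx.1 h0)
  exact ⟨c, hc, fun x hx hlt => by_contra fun hxU => hlt.not_ge (hcK x ⟨hx, hxU⟩)⟩

variable {E : Type*} [NormedAddCommGroup E] [NormedSpace ℂ E] {e : (ℂ × ℂ) ≃L[ℂ] E} {h : E → E}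
  {D : ℕ} {R : ℝ}

lemma bijective_fderiv_conj {p : ℂ × ℂ} :
    Function.Bijective (fderiv ℂ (e.symm ∘ h ∘ e) p) ↔ Function.Bijective (fderiv ℂ h (e p)) := by
  rw [e.symm.comp_fderiv, e.comp_right_fderiv]
  change Function.Bijective (e.symm ∘ fderiv ℂ h (e p) ∘ e) ↔ _
  rw [Function.Bijective.of_comp_iff' e.symm.bijective,
    Function.Bijective.of_comp_iff _ e.bijective]

lemma HasLocalDegree.eventually_eq_zero (hD : HasLocalDegree (e.symm ∘ h ∘ e) D) :
    ∀ᶠ x in 𝓝 (0 : E), h x = 0 → x = 0 := by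
  obtain ⟨a, b, -, -, H, huniq, -⟩ := hD.exists_lt one_pos
  have hbox : closedBall (0 : ℂ) a ×ˢ closedBall (0 : ℂ) b ∈ 𝓝 (e.symm 0) := by
    rw [map_zero]
    exact prod_mem_nhds (closedBall_mem_nhds 0 H.fst_pos) (closedBall_mem_nhds 0 H.snd_pos)
  filter_upwards [e.symm.continuous.continuousAt hbox] with x hx h0
  simpa using huniq _ hx (by simp [h0])

lemma sep_eq_zero_eq_image {B : Set E} {K : Set (ℂ × ℂ)} (hK : ∀ p ∈ K, e p ∈ B)
    (hB : ∀ x ∈ B, h x = 0 → e.symm x ∈ K) :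
    {x ∈ B | h x = 0} = e '' {p ∈ K | (e.symm ∘ h ∘ e) p = 0} := by
  refine Subset.antisymm (fun x hx => ⟨e.symm x, ⟨hB x hx.1 hx.2, by simp [hx.2]⟩, by simp⟩) ?_
  rintro _ ⟨p, ⟨hp, hp0⟩, rfl⟩
  exact ⟨hK p hp, by simpa using hp0⟩

lemma HasLocalDegree.exists_forall_ncard_zeros [ProperSpace E]
    (hD : HasLocalDegree (e.symm ∘ h ∘ e) D) (hR : 0 < R)
    (hh : AnalyticOnNhd ℂ h (closedBall 0 R))
    (huniq : ∀ x ∈ closedBall (0 : E) R, h x = 0 → x = 0) :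
    ∃ η > 0, ∀ g : E → E, AnalyticOnNhd ℂ g (closedBall 0 R) →
      (∀ x ∈ closedBall (0 : E) R, ‖g x - h x‖ < η) →
        {x ∈ ball (0 : E) R | g x = 0}.Finite ∧ {x ∈ ball (0 : E) R | g x = 0}.ncard ≤ D ∧
        ((∀ x ∈ ball (0 : E) R, g x = 0 → Function.Bijective (fderiv ℂ g x)) →
          {x ∈ ball (0 : E) R | g x = 0}.ncard = D) := by
  have hball : e ⁻¹' ball 0 R ∈ 𝓝 (0 : ℂ × ℂ) :=
    e.continuous.continuousAt (by simpa using ball_mem_nhds (0 : E) hR)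
  obtain ⟨s, hs, hsR⟩ := Metric.mem_nhds_iff.1 hball
  obtain ⟨a, b, ha, hb, H, -, rfl⟩ := hD.exists_lt hs
  have hbox : ∀ p ∈ closedBall (0 : ℂ) a ×ˢ closedBall (0 : ℂ) b, e p ∈ ball (0 : E) R := by
    refine fun p hp => hsR ?_
    rw [← ball_prod_same]
    exact prod_mono (closedBall_subset_ball ha) (closedBall_subset_ball hb) hp
  obtain ⟨η₁, hη₁, hdeg⟩ := H.exists_forall_norm_sub_lt
  obtain ⟨η₂, hη₂, hmem⟩ := exists_forall_mem_of_norm_lt (isCompact_closedBall (0 : E) R)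
    hh.continuousOn ((isOpen_ball.prod isOpen_ball).preimage e.symm.continuous)
    fun x hx h0 => show e.symm x ∈ ball (0 : ℂ) a ×ˢ ball (0 : ℂ) b by
      simp [huniq x hx h0, H.fst_pos, H.snd_pos]
  obtain ⟨η₃, hη₃, hsymm⟩ :=
    Metric.continuousAt_iff.1 (e.symm.continuous.continuousAt (x := 0)) η₁ hη₁
  simp only [map_zero, dist_zero_right] at hsymm
  refine ⟨min η₂ η₃, lt_min hη₂ hη₃, fun g hg hgh => ?_⟩
  obtain ⟨Hg, hdeg⟩ := hdeg (e.symm ∘ g ∘ e)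
    (fun p hp => (e.symm.analyticAt _).comp
      ((hg _ (ball_subset_closedBall (hbox p hp))).comp (e.analyticAt p)))
    fun p hp => by
      simpa only [map_sub, Function.comp_apply] using
        hsymm ((hgh _ (ball_subset_closedBall (hbox p hp))).trans_le (min_le_right _ _))
  have hzeros := sep_eq_zero_eq_image (e := e) (h := g) hbox fun x hx h0 => by
    have hx' := ball_subset_closedBall hx
    refine prod_mono ball_subset_closedBall ball_subset_closedBall (hmem x hx' ?_)
    simpa [h0] using (hgh x hx').trans_le (min_le_left _ _)
  rw [hzeros, ncard_image_of_injective _ e.injective, ← hdeg]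
  refine ⟨Hg.finite_zeros.image e, Hg.ncard_zeros_le_degree, fun hsimple =>
    Hg.ncard_zeros_eq_degree fun p hp hp0 => bijective_fderiv_conj.2
      (hsimple (e p) (hbox p hp) (by simpa using hp0))⟩

end Transfer

section ZeroOrder

variable {n : ℕ}

lemma exists_isRegularValueOn {h : Cn n → Cn n} {s : Set (Cn n)}
    (hh : ∀ x ∈ s, DifferentiableAt ℂ h x) {ε : ℝ} (hε : 0 < ε) :
    ∃ q : Cn n, ‖q‖ < ε ∧ IsRegularValueOn h s q := by
  have hcrit : MeasureTheory.volume (h '' {x ∈ s | ¬ Function.Bijective (fderiv ℂ h x)}) = 0 := by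
    refine MeasureTheory.addHaar_image_eq_zero_of_det_fderivWithin_eq_zero _
      (f' := fun x => (fderiv ℂ h x).restrictScalars ℝ)
      (fun x hx => ((hh x hx.1).hasFDerivAt.restrictScalars ℝ).hasFDerivWithinAt)
      fun x hx => by_contra fun hdet => hx.2 ?_
    have hunit : IsUnit (LinearMap.det
        (((fderiv ℂ h x).restrictScalars ℝ : Cn n →L[ℝ] Cn n) : Cn n →ₗ[ℝ] Cn n)) :=
      isUnit_iff_ne_zero.2 hdet
    have hbij := (Module.End.isUnit_iff _).1 ((LinearMap.isUnit_iff_isUnit_det _).2 hunit)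
    exact hbij
  by_contra! hcon
  have hsub : ball (0 : Cn n) ε ⊆ h '' {x ∈ s | ¬ Function.Bijective (fderiv ℂ h x)} := by
    intro q hq
    obtain ⟨x, hx, hxq, hb⟩ : ∃ x ∈ s, h x = q ∧ ¬ Function.Bijective (fderiv ℂ h x) := by
      simpa [IsRegularValueOn] using hcon q (mem_ball_zero_iff.1 hq)
    exact ⟨x, ⟨hx, hb⟩, hxq⟩
  exact (measure_ball_pos MeasureTheory.volume (0 : Cn n) hε).ne'
    (MeasureTheory.measure_mono_null hsub hcrit)

lemma zeroOrder_eq_of_hasLocalDegree {e : (ℂ × ℂ) ≃L[ℂ] Cn n} {h : Cn n → Cn n} {D : ℕ}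
    (hh : AnalyticAt ℂ h 0) (h0 : h 0 = 0) (hD : HasLocalDegree (e.symm ∘ h ∘ e) D) :
    zeroOrder h 0 = D := by
  have hcount : ∀ r > 0, AnalyticOnNhd ℂ h (closedBall 0 r) →
      (∀ x ∈ closedBall (0 : Cn n) r, h x = 0 → x = 0) → ∃ δ > 0, ∀ q : Cn n, ‖q‖ < δ →
        IsRegularValueOn h (ball 0 r) q → {x ∈ ball (0 : Cn n) r | h x = q}.ncard = D := by
    intro r hr hr_an huniq
    obtain ⟨η, hη, H⟩ := hD.exists_forall_ncard_zeros hr hr_an huniq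
    refine ⟨η, hη, fun q hq hreg => ?_⟩
    have hzeros := (H (fun x => h x - q) (fun x hx => (hr_an x hx).sub analyticAt_const)
      (fun x _ => by simpa using hq)).2.2 fun x hx hxq => by
        rw [fderiv_sub_const]
        exact hreg x hx (sub_eq_zero.1 hxq)
    simpa only [sub_eq_zero] using hzeros
  obtain ⟨r, hr, hball⟩ := Metric.nhds_basis_closedBall.eventually_iff.1
    (hh.eventually_analyticAt.and hD.eventually_eq_zero)
  have hregular : ∀ s : ℝ, AnalyticOnNhd ℂ h (closedBall 0 s) → ∀ ε > 0, ∃ q : Cn n, ‖q‖ < ε ∧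
      IsRegularValueOn h (ball 0 s) q := fun s hs ε hε =>
    exists_isRegularValueOn (fun x hx => (hs x (ball_subset_closedBall hx)).differentiableAt) hε
  have hset : {m | HasZeroOrder h 0 m} = {D} := by
    refine eq_singleton_iff_unique_mem.2 ⟨⟨r, hr, fun x hx => (hball hx).1, h0,
      fun x hx => (hball hx).2, hregular r fun x hx => (hball hx).1,
      hcount r hr (fun x hx => (hball hx).1) fun x hx => (hball hx).2⟩, ?_⟩
    rintro m ⟨s, hs, hs_an, -, huniq, hex, δ, hδ, hm⟩
    obtain ⟨η, hη, H⟩ := hcount s hs hs_an huniq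
    obtain ⟨q, hq, hreg⟩ := hex (min δ η) (lt_min hδ hη)
    rw [← hm q (hq.trans_le (min_le_left _ _)) hreg, H q (hq.trans_le (min_le_right _ _)) hreg]
  rw [zeroOrder, hset, csInf_singleton]

end ZeroOrder

section Perturbation

variable {𝕜 E F : Type*} [NontriviallyNormedField 𝕜] [NormedAddCommGroup E] [NormedAddCommGroup F]

lemma eqOn_iterate {X : Type*} {g G : X → X} {S : Set X} (hS : MapsTo g S S) (hG : EqOn G g S)
    (j : ℕ) : EqOn G^[j] g^[j] S := by
  induction j with
  | zero => exact fun x _ => rfl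
  | succ j ih =>
    intro x hx
    rw [Function.iterate_succ_apply', Function.iterate_succ_apply', ih hx, hG (hS.iterate j hx)]

lemma analyticAt_iterate [NormedSpace 𝕜 E] {g : E → E} {U : Set E} (hg : AnalyticOnNhd 𝕜 g U)
    {x : E} {j : ℕ} (hx : ∀ i < j, g^[i] x ∈ U) : AnalyticAt 𝕜 g^[j] x := by
  induction j with
  | zero => exact analyticAt_id
  | succ j ih =>
    rw [Function.iterate_succ']
    exact (hg _ (hx j j.lt_succ_self)).comp (ih fun i hi => hx i (hi.trans j.lt_succ_self))

lemma hasFDerivAt_iterate_of_eqOn [NormedSpace 𝕜 E] {g G : E → E} {S : Set E} {c : 𝕜}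
    (hS : MapsTo g S S) (hG : EqOn G g S) (hg : ∀ q ∈ S, DifferentiableAt 𝕜 g q)
    (hG' : ∀ q ∈ S, HasFDerivAt G (c • fderiv 𝕜 g q) q) (j : ℕ) {q : E} (hq : q ∈ S) :
    DifferentiableAt 𝕜 g^[j] q ∧ HasFDerivAt G^[j] (c ^ j • fderiv 𝕜 g^[j] q) q := by
  induction j with
  | zero =>
    exact ⟨differentiableAt_id, by simpa using hasFDerivAt_id q⟩
  | succ j ih =>
    have hqj : g^[j] q ∈ S := hS.iterate j hq
    have hGj := hG' _ hqj
    rw [← eqOn_iterate hS hG j hq] at hGj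
    rw [Function.iterate_succ', Function.iterate_succ', fderiv_comp q (hg _ hqj) ih.1]
    refine ⟨(hg _ hqj).comp q ih.1, (hGj.comp q ih.2).congr_fderiv ?_⟩
    rw [eqOn_iterate hS hG j hq, ContinuousLinearMap.smul_comp, ContinuousLinearMap.comp_smul,
      smul_smul, pow_succ']

-- `1 - A ^ c` factors through `1 - A` on both sides.
lemma bijective_fderiv_sub_of_iterate [NormedSpace 𝕜 E] {u : E → E} {p : E}
    (hu : DifferentiableAt 𝕜 u p) (hp : u p = p) {c : ℕ}
    (hc : Function.Bijective (fderiv 𝕜 (fun x => x - u^[c] x) p)) :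
    Function.Bijective (fderiv 𝕜 (fun x => x - u x) p) := by
  have hfderiv : fderiv 𝕜 (fun x => x - u x) p = 1 - fderiv 𝕜 u p :=
    ((hasFDerivAt_id p).sub hu.hasFDerivAt).fderiv
  have hfderiv_iterate : fderiv 𝕜 (fun x => x - u^[c] x) p = 1 - fderiv 𝕜 u p ^ c :=
    ((hasFDerivAt_id p).sub (hu.hasFDerivAt.iterate hp c)).fderiv
  rw [hfderiv]
  rw [hfderiv_iterate] at hc
  have hinj := hc.1
  have hsurj := hc.2
  rw [← geom_sum_mul_neg] at hinj
  rw [← mul_neg_geom_sum] at hsurj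
  exact ⟨Function.Injective.of_comp hinj, Function.Surjective.of_comp hsurj⟩

variable [NormedSpace ℂ E] [NormedSpace ℂ F]

lemma exists_analyticOnNhd_eq_one_eq_zero (S : Finset E) (q : E) :
    ∃ ℓ : E → ℂ, AnalyticOnNhd ℂ ℓ univ ∧ ℓ q = 1 ∧ ∀ p ∈ S, p ≠ q → ℓ p = 0 := by
  have hsep : ∀ p, ∃ L : E →L[ℂ] ℂ, p ≠ q → L (q - p) = 1 := fun p => by
    by_cases hp : p = q
    · exact ⟨0, fun h => absurd hp h⟩
    · obtain ⟨L, hL⟩ := SeparatingDual.exists_eq_one (R := ℂ) (sub_ne_zero.2 (Ne.symm hp))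
      exact ⟨L, fun _ => hL⟩
  choose L hL using hsep
  refine ⟨fun x => ∏ p ∈ S.erase q, L p (x - p), fun x _ => ?_, ?_, fun p hp hpq => ?_⟩
  · exact Finset.analyticAt_fun_prod _ fun p _ =>
      ((L p).analyticAt _).comp (analyticAt_id.sub analyticAt_const)
  · exact Finset.prod_eq_one fun p hp => hL p (Finset.ne_of_mem_erase hp)
  · exact Finset.prod_eq_zero (Finset.mem_erase.2 ⟨hpq, hp⟩) (by simp)

lemma exists_analyticOnNhd_hasFDerivAt (S : Finset E) (L : E → E →L[ℂ] F) :
    ∃ φ : E → F, AnalyticOnNhd ℂ φ univ ∧ ∀ q ∈ S, φ q = 0 ∧ HasFDerivAt φ (L q) q := by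
  choose ℓ hℓ hℓ_one hℓ_zero using exists_analyticOnNhd_eq_one_eq_zero S
  refine ⟨fun x => ∑ q ∈ S, ℓ q x ^ 2 • L q (x - q), fun x _ => ?_, fun p hp => ⟨?_, ?_⟩⟩
  · exact Finset.analyticAt_fun_sum _ fun q _ => ((hℓ q x trivial).pow 2).smul
      (((L q).analyticAt _).comp (analyticAt_id.sub analyticAt_const))
  · refine Finset.sum_eq_zero fun q _ => ?_
    obtain rfl | hpq := eq_or_ne p q
    · simp
    · simp [hℓ_zero q p hp hpq]
  · have hsummand : ∀ q ∈ S, HasFDerivAt (fun x => ℓ q x ^ 2 • L q (x - q))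
        (if q = p then L p else 0) p := fun q _ => by
      have hsq := (hℓ q p trivial).differentiableAt.hasFDerivAt.pow 2
      have hlin := (L q).hasFDerivAt.comp p ((hasFDerivAt_id p).sub_const q)
      refine (hsq.smul hlin).congr_fderiv ?_
      obtain rfl | hpq := eq_or_ne p q
      · ext v
        simp [hℓ_one]
      · ext v
        simp [hℓ_zero q p hp hpq, hpq.symm]
    simpa [hp] using HasFDerivAt.fun_sum hsummand

lemma eventually_bijective_one_sub_pow_smul [FiniteDimensional ℂ E] (A : E →L[ℂ] E) {N : ℕ}
    (hN : N ≠ 0) :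
    ∀ᶠ c in 𝓝[≠] (1 : ℂ), Function.Bijective (1 - c ^ N • A : E →L[ℂ] E) := by
  have hderiv : HasDerivAt (fun c : ℂ => (c ^ N)⁻¹) (-N) 1 := by
    simpa using (hasDerivAt_pow N (1 : ℂ)).fun_inv (by simp)
  have heigen : ∀ᶠ μ in 𝓝[≠] (1 : ℂ), ¬ Module.End.HasEigenvalue (A : E →ₗ[ℂ] E) μ :=
    nhdsNE_le_cofinite 1 (Module.End.finite_hasEigenvalue (A : E →ₗ[ℂ] E)).compl_mem_cofinite
  have htendsto := hderiv.tendsto_nhdsNE (neg_ne_zero.2 (Nat.cast_ne_zero.2 hN))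
  simp only [one_pow, inv_one] at htendsto
  filter_upwards [htendsto.eventually heigen,
    nhdsWithin_le_nhds (isOpen_ne.mem_nhds (one_ne_zero : (1 : ℂ) ≠ 0))] with c hc hc0
  have hinj : Function.Injective
      ((1 - c ^ N • A : E →L[ℂ] E) : E →ₗ[ℂ] E) := by
    refine (injective_iff_map_eq_zero _).2 fun v hv => by_contra fun hv0 => hc ?_
    refine Module.End.hasEigenvalue_of_hasEigenvector (x := v)
      ⟨Module.End.mem_eigenspace_iff.2 ?_, hv0⟩
    rw [eq_inv_smul_iff₀ (pow_ne_zero N hc0)]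
    exact (sub_eq_zero.1 hv).symm
  exact ⟨hinj, LinearMap.injective_iff_surjective.1 hinj⟩

-- Multiplying the derivative by `c` at every point of an invariant set multiplies the derivative
-- of the `N`-th iterate there by `c ^ N`, which avoids the eigenvalue `1` for `c` close to `1`.
lemma exists_perturbation_bijective_fderiv [FiniteDimensional ℂ E] {g : E → E} {U S : Set E}
    (hU : Bornology.IsBounded U) (hg : AnalyticOnNhd ℂ g U) (hSfin : S.Finite) (hSU : S ⊆ U)
    (hS : MapsTo g S S) {N : ℕ} (hN : N ≠ 0) {κ : ℝ} (hκ : 0 < κ) :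
    ∃ G : E → E, AnalyticOnNhd ℂ G U ∧ (∀ x ∈ U, ‖G x - g x‖ ≤ κ) ∧ EqOn G g S ∧
      ∀ q ∈ S, Function.Bijective (fderiv ℂ (fun x => x - G^[N] x) q) := by
  have : ProperSpace E := FiniteDimensional.proper ℂ E
  obtain ⟨φ, hφ, hφS⟩ := exists_analyticOnNhd_hasFDerivAt hSfin.toFinset (fderiv ℂ g)
  simp only [Finite.mem_toFinset] at hφS
  obtain ⟨C, hC⟩ := hU.isCompact_closure.exists_bound_of_continuousOn
    (hφ.continuousOn.mono (subset_univ _))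
  have hsmall : ∀ᶠ c in 𝓝[≠] (1 : ℂ), ‖c - 1‖ * C < κ :=
    nhdsWithin_le_nhds (Continuous.tendsto' (by fun_prop) _ 0 (by simp)
      |>.eventually_lt_const hκ)
  have hbij : ∀ᶠ c in 𝓝[≠] (1 : ℂ), ∀ q ∈ S,
      Function.Bijective (1 - c ^ N • fderiv ℂ g^[N] q : E →L[ℂ] E) :=
    (eventually_all_finite hSfin).2 fun q _ => eventually_bijective_one_sub_pow_smul _ hN
  obtain ⟨c, hc, hcS⟩ := (hsmall.and hbij).exists
  have hgS : ∀ q ∈ S, DifferentiableAt ℂ g q := fun q hq => (hg q (hSU hq)).differentiableAt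
  have hGS : EqOn (fun x => g x + (c - 1) • φ x) g S := fun q hq => by simp [(hφS q hq).1]
  have hderiv : ∀ q ∈ S, HasFDerivAt (fun x => g x + (c - 1) • φ x) (c • fderiv ℂ g q) q :=
    fun q hq => ((hgS q hq).hasFDerivAt.add ((hφS q hq).2.const_smul (c - 1))).congr_fderiv (by
      rw [sub_smul, one_smul, add_sub_cancel])
  refine ⟨fun x => g x + (c - 1) • φ x,
    fun x hx => (hg x hx).add (analyticAt_const.smul (hφ x trivial)), fun x hx => ?_, hGS,
    fun q hq => ?_⟩
  · rw [add_sub_cancel_left, norm_smul]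
    exact (mul_le_mul_of_nonneg_left (hC x (subset_closure hx)) (norm_nonneg _)).trans hc.le
  · have hiterate := (hasFDerivAt_iterate_of_eqOn hS hGS hgS hderiv N hq).2
    rw [HasFDerivAt.fderiv (f := fun x => x - (fun x => g x + (c - 1) • φ x)^[N] x)
      ((hasFDerivAt_id q).sub hiterate)]
    exact hcS q hq

end Perturbation

section Closeness

lemma eventually_forall_dist_iterate_lt {X : Type*} [PseudoMetricSpace X] {f : X → X} {B : Set X}
    (hf : Continuous f) (hB : IsCompact (closure B)) (N : ℕ) {η : ℝ} (hη : 0 < η) :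
    ∀ᶠ ε in 𝓝[>] (0 : ℝ), ∀ g : X → X, (∀ x ∈ B, dist (g x) (f x) ≤ ε) →
      ∀ x, (∀ i < N, g^[i] x ∈ B) → dist (g^[N] x) (f^[N] x) < η := by
  induction N generalizing η with
  | zero => simp [hη]
  | succ N ih =>
    obtain ⟨δ, hδ, hfδ⟩ := Metric.mem_uniformity_dist.1 (hB.uniformContinuousAt_of_continuousAt f
      (fun x _ => hf.continuousAt) (Metric.dist_mem_uniformity (half_pos hη)))
    filter_upwards [ih hδ, Ioo_mem_nhdsGT (half_pos hη)] with ε hε hεη g hg x hx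
    have hxN : g^[N] x ∈ B := hx N N.lt_succ_self
    rw [Function.iterate_succ_apply', Function.iterate_succ_apply']
    calc dist (g (g^[N] x)) (f (f^[N] x))
        ≤ dist (g (g^[N] x)) (f (g^[N] x)) + dist (f (g^[N] x)) (f (f^[N] x)) :=
          dist_triangle _ _ _
      _ < η / 2 + η / 2 := add_lt_add ((hg _ hxN).trans_lt hεη.2)
          (hfδ (hε g hg x fun i hi => hx i (hi.trans N.lt_succ_self)) (subset_closure hxN))
      _ = η := add_halves η

lemma eventually_forall_iterate_mem_and_dist_lt {X : Type*} [PseudoMetricSpace X] {f : X → X}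
    {B K : Set X} (hf : Continuous f) (hB : IsCompact (closure B)) {δ : ℝ} (hδ : 0 < δ) {M : ℕ}
    (hK : ∀ x ∈ K, ∀ j ≤ M, ball (f^[j] x) δ ⊆ B) {η : ℝ} (hη : 0 < η) :
    ∀ᶠ ε in 𝓝[>] (0 : ℝ), ∀ g : X → X, (∀ x ∈ B, dist (g x) (f x) ≤ ε) →
      ∀ x ∈ K, ∀ j ≤ M, g^[j] x ∈ B ∧ dist (g^[j] x) (f^[j] x) < η := by
  filter_upwards [(eventually_all_finite (finite_le_nat M)).2 fun j _ =>
    eventually_forall_dist_iterate_lt hf hB j (lt_min hδ hη)] with ε hε g hg x hx j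
  induction j using Nat.strong_induction_on with
  | _ j ih =>
    intro hj
    have hdist := hε j hj g hg x fun i hi => (ih i hi (hi.le.trans hj)).1
    exact ⟨hK x hx j hj (hdist.trans_le (min_le_left _ _)), hdist.trans_le (min_le_right _ _)⟩

end Closeness

section NearMaps

variable {E : Type*} [NormedAddCommGroup E] [NormedSpace ℂ E]

/-- The maps holomorphic on the ball of radius `r` and uniformly closer to `f` there than `ε`. The
supremum distance is required to be strictly less than `ε`, so that every such map can be
perturbed further inside the class. -/
structure IsNear (f : E → E) (r ε : ℝ) (g : E → E) : Prop where
  analyticOnNhd : AnalyticOnNhd ℂ g (ball 0 r)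
  exists_norm_sub_le : ∃ ε' < ε, ∀ x ∈ ball (0 : E) r, ‖g x - f x‖ ≤ ε'

variable {f g : E → E} {r R ε : ℝ} {M : ℕ}

lemma IsNear.dist_le (hg : IsNear f r ε g) : ∀ x ∈ ball (0 : E) r, dist (g x) (f x) ≤ ε := by
  obtain ⟨ε', hε', h⟩ := hg.exists_norm_sub_le
  exact fun x hx => (dist_eq_norm (g x) (f x)).trans_le ((h x hx).trans hε'.le)

lemma IsNear.mono (hg : IsNear f r ε g) {ε' : ℝ} (hε : ε ≤ ε') : IsNear f r ε' g :=
  ⟨hg.analyticOnNhd, hg.exists_norm_sub_le.imp fun _ h => ⟨h.1.trans_le hε, h.2⟩⟩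

lemma IsNear.exists_forall_isNear (hg : IsNear f r ε g) :
    ∃ κ > 0, ∀ G : E → E, AnalyticOnNhd ℂ G (ball 0 r) →
      (∀ x ∈ ball (0 : E) r, ‖G x - g x‖ ≤ κ) → IsNear f r ε G := by
  obtain ⟨ε', hε', h⟩ := hg.exists_norm_sub_le
  refine ⟨(ε - ε') / 2, by linarith, fun G hG hGg => ⟨hG, (ε + ε') / 2, by linarith,
    fun x hx => ?_⟩⟩
  calc ‖G x - f x‖ ≤ ‖G x - g x‖ + ‖g x - f x‖ := norm_sub_le_norm_sub_add_norm_sub _ _ _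
    _ ≤ (ε - ε') / 2 + ε' := add_le_add (hGg x hx) (h x hx)
    _ = (ε + ε') / 2 := by ring

lemma eventually_isNear_iterate [ProperSpace E] (hf : Continuous f)
    (hfR : ∀ x ∈ closedBall (0 : E) R, ∀ j ≤ M, f^[j] x ∈ ball 0 (r / 2)) {η : ℝ} (hη : 0 < η) :
    ∀ᶠ ε in 𝓝[>] (0 : ℝ), ∀ g, IsNear f r ε g → ∀ x ∈ closedBall (0 : E) R, ∀ j ≤ M,
      AnalyticAt ℂ g^[j] x ∧ ‖g^[j] x - f^[j] x‖ < η := by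
  obtain hR | hR := (closedBall (0 : E) R).eq_empty_or_nonempty
  · simp [hR]
  obtain ⟨x₀, hx₀⟩ := hR
  have hr : 0 < r / 2 := pos_of_mem_ball (hfR x₀ hx₀ 0 M.zero_le)
  filter_upwards [eventually_forall_iterate_mem_and_dist_lt (B := ball 0 r) hf
    (isCompact_closedBall _ _ |>.of_isClosed_subset isClosed_closure closure_ball_subset_closedBall)
    hr (fun x hx j hj => ball_subset_ball' (by
      linarith [mem_ball.1 (hfR x hx j hj)])) hη] with ε hε g hg x hx j hj
  rw [← dist_eq_norm]
  exact ⟨analyticAt_iterate hg.analyticOnNhd fun i hi =>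
    (hε g hg.dist_le x hx i (hi.le.trans hj)).1, (hε g hg.dist_le x hx j hj).2⟩

lemma eventually_isNear_mapsTo_ptsOfPeriod [ProperSpace E] (hf : Continuous f) (hf0 : f 0 = 0)
    (hR : 0 < R) (hfR : ∀ x ∈ closedBall (0 : E) R, ∀ j ≤ M, f^[j] x ∈ ball 0 (r / 2))
    (hfix : ∀ x ∈ closedBall (0 : E) R, f^[M] x = x → x = 0) :
    ∀ᶠ ε in 𝓝[>] (0 : ℝ), ∀ g, IsNear f r ε g →
      MapsTo g (ball 0 R ∩ Function.ptsOfPeriod g M) (ball 0 R ∩ Function.ptsOfPeriod g M) := by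
  obtain ⟨η, hη, hmem⟩ := exists_forall_mem_of_norm_lt (isCompact_closedBall (0 : E) R)
    (h := fun x => x - f^[M] x) (continuous_id.sub (hf.iterate M)).continuousOn
    (isOpen_ball.preimage hf) fun x hx h0 => show f x ∈ ball (0 : E) (R / 2) by
      simpa [hfix x hx (sub_eq_zero.1 h0).symm, hf0] using hR
  filter_upwards [eventually_isNear_iterate hf hfR hη, Ioo_mem_nhdsGT (half_pos hR)]
    with ε hε hεR g hg x ⟨hxR, hxM⟩
  have hxR' := ball_subset_closedBall hxR
  have hfx : f x ∈ ball (0 : E) (R / 2) := hmem x hxR' (by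
    simpa only [hxM.eq] using (hε g hg x hxR' M le_rfl).2)
  have hxr : x ∈ ball (0 : E) r := ball_subset_ball
    (by linarith [pos_of_mem_ball (hfR x hxR' 0 M.zero_le)]) (hfR x hxR' 0 M.zero_le)
  refine ⟨mem_ball.2 ?_, hxM.apply⟩
  calc dist (g x) 0 ≤ dist (g x) (f x) + dist (f x) 0 := dist_triangle _ _ _
    _ < R / 2 + R / 2 := add_lt_add ((hg.dist_le x hxr).trans_lt hεR.2) hfx
    _ = R := add_halves R

lemma eventually_isNear_ncard_ptsOfPeriod [ProperSpace E] {e : (ℂ × ℂ) ≃L[ℂ] E} {D m : ℕ}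
    (hf : AnalyticOnNhd ℂ f univ) (hR : 0 < R)
    (hfR : ∀ x ∈ closedBall (0 : E) R, ∀ j ≤ m, f^[j] x ∈ ball 0 (r / 2))
    (hfix : ∀ x ∈ closedBall (0 : E) R, f^[m] x = x → x = 0)
    (hD : HasLocalDegree (e.symm ∘ (fun x => x - f^[m] x) ∘ e) D) :
    ∀ᶠ ε in 𝓝[>] (0 : ℝ), ∀ g, IsNear f r ε g →
      (ball 0 R ∩ Function.ptsOfPeriod g m).Finite ∧
      (ball 0 R ∩ Function.ptsOfPeriod g m).ncard ≤ D ∧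
      ((∀ x ∈ ball 0 R ∩ Function.ptsOfPeriod g m,
        Function.Bijective (fderiv ℂ (fun x => x - g^[m] x) x)) →
          (ball 0 R ∩ Function.ptsOfPeriod g m).ncard = D) := by
  obtain ⟨η, hη, H⟩ := hD.exists_forall_ncard_zeros hR
    (fun x _ => analyticAt_id.sub (analyticAt_iterate hf fun i _ => mem_univ _))
    fun x hx h0 => hfix x hx (sub_eq_zero.1 h0).symm
  filter_upwards [eventually_isNear_iterate hf.continuous hfR hη] with ε hε g hg
  have hset : ball 0 R ∩ Function.ptsOfPeriod g m = {x ∈ ball (0 : E) R | x - g^[m] x = 0} := by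
    ext x
    simp [Function.ptsOfPeriod, Function.IsPeriodicPt, Function.IsFixedPt, sub_eq_zero, eq_comm]
  obtain ⟨hfin, hle, heq⟩ := H (fun x => x - g^[m] x)
    (fun x hx => analyticAt_id.sub (hε g hg x hx m le_rfl).1) fun x hx => by
      rw [sub_sub_sub_cancel_left, norm_sub_rev]
      exact (hε g hg x hx m le_rfl).2
  rw [hset]
  exact ⟨hfin, hle, fun hsimple => heq fun x hx h0 => hsimple x ⟨hx, h0⟩⟩

end NearMaps

section SimplePerturbation

variable {E : Type*} [NormedAddCommGroup E] [NormedSpace ℂ E] {f g : E → E} {r R ε : ℝ} {M : ℕ}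

lemma inter_ptsOfPeriod_subset_of_eqOn {X : Type*} {g G : X → X} {B : Set X} {M : ℕ}
    (hmaps : MapsTo g (B ∩ Function.ptsOfPeriod g M) (B ∩ Function.ptsOfPeriod g M))
    (hG : EqOn G g (B ∩ Function.ptsOfPeriod g M)) :
    B ∩ Function.ptsOfPeriod g M ⊆ B ∩ Function.ptsOfPeriod G M :=
  fun _ hx => ⟨hx.1, (eqOn_iterate hmaps hG M hx).trans hx.2⟩

lemma IsNear.bijective_fderiv_of_dvd (hg : IsNear f r ε g) (hRr : ball (0 : E) R ⊆ ball 0 r)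
    (hmaps : MapsTo g (ball 0 R ∩ Function.ptsOfPeriod g M) (ball 0 R ∩ Function.ptsOfPeriod g M))
    (hsimple : ∀ x ∈ ball 0 R ∩ Function.ptsOfPeriod g M,
      Function.Bijective (fderiv ℂ (fun x => x - g^[M] x) x)) {m : ℕ} (hm : m ∣ M) {x : E}
    (hx : x ∈ ball 0 R ∩ Function.ptsOfPeriod g m) :
    Function.Bijective (fderiv ℂ (fun x => x - g^[m] x) x) := by
  obtain ⟨c, rfl⟩ := hm
  have hxM : x ∈ ball 0 R ∩ Function.ptsOfPeriod g (m * c) := ⟨hx.1, hx.2.mul_const c⟩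
  refine bijective_fderiv_sub_of_iterate (c := c) (analyticAt_iterate hg.analyticOnNhd
    fun i _ => hRr (hmaps.iterate i hxM).1).differentiableAt hx.2 ?_
  simpa only [Function.iterate_mul] using hsimple x hxM

-- Among the maps of the class agreeing with `g` at its periodic points, take `G` with the largest
-- number of periodic points and make all of these simple: no new ones can then appear.
lemma IsNear.exists_forall_bijective_fderiv [FiniteDimensional ℂ E] {D : ℕ} (hM : M ≠ 0)
    (hRr : ball (0 : E) R ⊆ ball 0 r)
    (hmaps : ∀ g, IsNear f r ε g →
      MapsTo g (ball 0 R ∩ Function.ptsOfPeriod g M) (ball 0 R ∩ Function.ptsOfPeriod g M))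
    (hcard : ∀ g, IsNear f r ε g → (ball 0 R ∩ Function.ptsOfPeriod g M).Finite ∧
      (ball 0 R ∩ Function.ptsOfPeriod g M).ncard ≤ D) (hg : IsNear f r ε g) :
    ∃ G, IsNear f r ε G ∧ EqOn G g (ball 0 R ∩ Function.ptsOfPeriod g M) ∧
      ∀ x ∈ ball 0 R ∩ Function.ptsOfPeriod G M,
        Function.Bijective (fderiv ℂ (fun x => x - G^[M] x) x) := by
  set Z : (E → E) → Set E := fun G => ball 0 R ∩ Function.ptsOfPeriod G M
  obtain ⟨G, ⟨hG, hGg⟩, hmax⟩ : ∃ G, (IsNear f r ε G ∧ EqOn G g (Z g)) ∧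
      ∀ G', IsNear f r ε G' → EqOn G' g (Z g) → (Z G').ncard ≤ (Z G).ncard := by
    have hbdd : BddAbove ((fun G => (Z G).ncard) '' {G | IsNear f r ε G ∧ EqOn G g (Z g)}) :=
      ⟨D, forall_mem_image.2 fun G hG => (hcard G hG.1).2⟩
    have hne : {G | IsNear f r ε G ∧ EqOn G g (Z g)}.Nonempty := ⟨g, hg, eqOn_refl g (Z g)⟩
    obtain ⟨G, hG, heq⟩ := Nat.sSup_mem (hne.image fun G => (Z G).ncard) hbdd
    exact ⟨G, hG, fun G' hG' hG'g => (le_csSup hbdd ⟨G', ⟨hG', hG'g⟩, rfl⟩).trans_eq heq.symm⟩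
  obtain ⟨κ, hκ, hnear⟩ := hG.exists_forall_isNear
  obtain ⟨G', hG', hclose, hG'G, hsimple⟩ := exists_perturbation_bijective_fderiv isBounded_ball
    hG.analyticOnNhd (hcard G hG).1 (inter_subset_left.trans hRr) (hmaps G hG) hM hκ
  have hnear' : IsNear f r ε G' := hnear G' hG' hclose
  have hagree : EqOn G' g (Z g) :=
    (hG'G.mono (inter_ptsOfPeriod_subset_of_eqOn (hmaps g hg) hGg)).trans hGg
  have hZ : Z G = Z G' := eq_of_subset_of_ncard_le
    (inter_ptsOfPeriod_subset_of_eqOn (hmaps G hG) hG'G) (hmax G' hnear' hagree)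
    (hcard G' hnear').1
  refine ⟨G', hnear', hagree, ?_⟩
  change ∀ x ∈ Z G', _
  rwa [← hZ]

lemma eventually_isNear_exists_ncard_eq [FiniteDimensional ℂ E] {e : (ℂ × ℂ) ≃L[ℂ] E}
    {D : ℕ → ℕ} (hf : AnalyticOnNhd ℂ f univ) (hf0 : f 0 = 0) (hM : M ≠ 0) (hR : 0 < R)
    (hfR : ∀ x ∈ closedBall (0 : E) R, ∀ j ≤ M, f^[j] x ∈ ball 0 (r / 2))
    (hfix : ∀ x ∈ closedBall (0 : E) R, f^[M] x = x → x = 0)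
    (hD : ∀ m, m ∣ M → HasLocalDegree (e.symm ∘ (fun x => x - f^[m] x) ∘ e) (D m)) :
    ∀ᶠ ε in 𝓝[>] (0 : ℝ), ∀ g, IsNear f r ε g →
      ∃ G, IsNear f r ε G ∧ EqOn G g (ball 0 R ∩ Function.ptsOfPeriod g M) ∧
        (ball 0 R ∩ Function.ptsOfPeriod G M).Finite ∧
        (∀ m, m ∣ M → (ball 0 R ∩ Function.ptsOfPeriod G m).ncard = D m) ∧
        MapsTo g (ball 0 R ∩ Function.ptsOfPeriod g M) (ball 0 R ∩ Function.ptsOfPeriod g M) ∧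
        MapsTo G (ball 0 R ∩ Function.ptsOfPeriod G M) (ball 0 R ∩ Function.ptsOfPeriod G M) := by
  have : ProperSpace E := FiniteDimensional.proper ℂ E
  have hcount := (eventually_all_finset M.divisors).2 fun m hm =>
    eventually_isNear_ncard_ptsOfPeriod hf hR
      (fun x hx j hj => hfR x hx j (hj.trans (Nat.divisor_le hm)))
      (fun x hx hxm => hfix x hx
        (Function.IsPeriodicPt.trans_dvd hxm (Nat.dvd_of_mem_divisors hm)))
      (hD m (Nat.dvd_of_mem_divisors hm))
  have hRr : ball (0 : E) R ⊆ ball 0 r := fun x hx => by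
    have hx' := hfR x (ball_subset_closedBall hx) 0 M.zero_le
    exact ball_subset_ball (by linarith [pos_of_mem_ball hx']) hx'
  filter_upwards [hcount, eventually_isNear_mapsTo_ptsOfPeriod hf.continuous hf0 hR hfR hfix]
    with ε hcount hmaps g hg
  have hMM : M ∈ M.divisors := Nat.mem_divisors_self M hM
  obtain ⟨G, hG, hGg, hsimple⟩ := hg.exists_forall_bijective_fderiv hM hRr hmaps
    fun g hg => ⟨(hcount M hMM g hg).1, (hcount M hMM g hg).2.1⟩
  refine ⟨G, hG, hGg, (hcount M hMM G hG).1, fun m hm => ?_, hmaps g hg, hmaps G hG⟩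
  exact (hcount m (Nat.mem_divisors.2 ⟨hm, hM⟩) G hG).2.2 fun x hx =>
    hG.bijective_fderiv_of_dvd hRr (hmaps G hG) hsimple hm hx

end SimplePerturbation

section Orbits

open Function

variable {X : Type*} {g : X → X} {B : Set X} {M : ℕ} {x y : X}

/-- The points of exact period `M` whose orbit stays in `B`. -/
def exactPts (g : X → X) (M : ℕ) (B : Set X) : Set X :=
  {x | minimalPeriod g x = M ∧ ∀ j, g^[j] x ∈ B}

lemma mem_periodicPts_of_mem_exactPts (hM : M ≠ 0) (hx : x ∈ exactPts g M B) :
    x ∈ periodicPts g :=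
  minimalPeriod_pos_iff_mem_periodicPts.1 (hx.1.symm ▸ Nat.pos_of_ne_zero hM)

lemma iterate_mem_exactPts (hM : M ≠ 0) (hx : x ∈ exactPts g M B) (j : ℕ) :
    g^[j] x ∈ exactPts g M B :=
  ⟨(minimalPeriod_apply_iterate (mem_periodicPts_of_mem_exactPts hM hx) j).trans hx.1,
    fun i => (iterate_add_apply g i j x).symm ▸ hx.2 (i + j)⟩

lemma exactPts_eq_of_mapsTo (hmaps : MapsTo g (B ∩ ptsOfPeriod g M) (B ∩ ptsOfPeriod g M)) :
    exactPts g M B = {x ∈ B ∩ ptsOfPeriod g M | minimalPeriod g x = M} := by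
  ext x
  constructor
  · rintro ⟨rfl, hB⟩
    exact ⟨⟨hB 0, isPeriodicPt_minimalPeriod g x⟩, rfl⟩
  · rintro ⟨hx, hxM⟩
    exact ⟨hxM, fun j => (hmaps.iterate j hx).1⟩

lemma periodicOrbit_eq_iff_exists_lt (hx : x ∈ periodicPts g) (hy : y ∈ periodicPts g) :
    periodicOrbit g y = periodicOrbit g x ↔ ∃ j < minimalPeriod g x, g^[j] x = y := by
  constructor
  · intro h
    obtain ⟨j, hj⟩ := (mem_periodicOrbit_iff hx).1 (h ▸ self_mem_periodicOrbit hy)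
    exact ⟨j % minimalPeriod g x, Nat.mod_lt _ (minimalPeriod_pos_of_mem_periodicPts hx),
      iterate_mod_minimalPeriod_eq.trans hj⟩
  · rintro ⟨j, -, rfl⟩
    exact periodicOrbit_apply_iterate_eq hx j

lemma ncard_exactPts (hM : M ≠ 0) (hfin : (exactPts g M B).Finite) :
    (exactPts g M B).ncard = M * (periodicOrbit g '' exactPts g M B).ncard := by
  obtain ⟨S, hS⟩ := hfin.exists_finset_coe
  have hfibre : ∀ x ∈ S, {y ∈ S | periodicOrbit g y = periodicOrbit g x}.card = M := by
    intro x hx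
    have hx' : x ∈ exactPts g M B := hS ▸ hx
    have hset : {y ∈ S | periodicOrbit g y = periodicOrbit g x}
        = (Finset.range M).image fun j => g^[j] x := by
      ext y
      have hmem : ∀ y, y ∈ S ↔ y ∈ exactPts g M B := fun y => by rw [← hS, Finset.mem_coe]
      simp only [Finset.mem_filter, Finset.mem_image, Finset.mem_range, hmem]
      constructor
      · rintro ⟨hy, hxy⟩
        rw [← hx'.1]
        exact (periodicOrbit_eq_iff_exists_lt (mem_periodicPts_of_mem_exactPts hM hx')
          (mem_periodicPts_of_mem_exactPts hM hy)).1 hxy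
      · rintro ⟨j, -, rfl⟩
        exact ⟨iterate_mem_exactPts hM hx' j,
          periodicOrbit_apply_iterate_eq (mem_periodicPts_of_mem_exactPts hM hx') j⟩
    rw [hset, Finset.card_image_of_injOn, Finset.card_range]
    rw [Finset.coe_range, ← hx'.1]
    exact iterate_injOn_Iio_minimalPeriod
  rw [← hS, ← Finset.coe_image, ncard_coe_finset, ncard_coe_finset, mul_comm,
    Finset.card_eq_sum_card_image (periodicOrbit g) S, Finset.sum_const_nat]
  exact Finset.forall_mem_image.2 hfibre

end Orbits

section DoldSum

open Function

lemma prod_dvd_of_subset_primeFactors {M : ℕ} {τ : Finset ℕ} (hτ : τ ⊆ M.primeFactors) :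
    ∏ p ∈ τ, p ∣ M :=
  (Finset.prod_dvd_prod_of_subset _ _ _ hτ).trans (Nat.prod_primeFactors_dvd M)

lemma dvd_div_prod_iff_subset {M n : ℕ} (hn : n ∣ M) (hM : M ≠ 0) {τ : Finset ℕ}
    (hτ : τ ⊆ M.primeFactors) : n ∣ M / ∏ p ∈ τ, p ↔ τ ⊆ (M / n).primeFactors := by
  have hprime : ∀ p ∈ τ, p.Prime := fun p hp => Nat.prime_of_mem_primeFactors (hτ hp)
  have hMn : M / n ≠ 0 := (Nat.div_ne_zero_iff_of_dvd hn).2 ⟨hM, ne_zero_of_dvd_ne_zero hM hn⟩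
  rw [Nat.dvd_div_iff_mul_dvd (prod_dvd_of_subset_primeFactors hτ), mul_comm,
    ← Nat.dvd_div_iff_mul_dvd hn]
  constructor
  · exact fun h p hp => Nat.mem_primeFactors.2
      ⟨hprime p hp, (Finset.dvd_prod_of_mem _ hp).trans h, hMn⟩
  · exact prod_dvd_of_subset_primeFactors

-- The sum ranges over the sets of primes dividing `M / n`, so the signs cancel unless `M = n`.
lemma sum_powerset_primeFactors_dvd {M n : ℕ} (hn : n ∣ M) (hM : M ≠ 0) :
    ∑ τ ∈ M.primeFactors.powerset, (-1 : ℤ) ^ τ.card * (if n ∣ M / ∏ p ∈ τ, p then 1 else 0)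
      = if n = M then 1 else 0 := by
  have hMn : M / n ≠ 0 := (Nat.div_ne_zero_iff_of_dvd hn).2 ⟨hM, ne_zero_of_dvd_ne_zero hM hn⟩
  have hfilter : {τ ∈ M.primeFactors.powerset | n ∣ M / ∏ p ∈ τ, p}
      = (M / n).primeFactors.powerset := by
    ext τ
    rw [Finset.mem_filter, Finset.mem_powerset, Finset.mem_powerset]
    constructor
    · exact fun h => (dvd_div_prod_iff_subset hn hM h.1).1 h.2
    · intro h
      have hτ := h.trans (Nat.primeFactors_mono (Nat.div_dvd_of_dvd hn) hM)
      exact ⟨hτ, (dvd_div_prod_iff_subset hn hM hτ).2 h⟩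
  simp only [mul_ite, mul_one, mul_zero]
  rw [← Finset.sum_filter, hfilter, Finset.sum_powerset_neg_one_pow_card]
  refine if_congr ?_ rfl rfl
  rw [Nat.primeFactors_eq_empty, or_iff_right hMn, Nat.div_eq_iff_eq_mul_left
    (Nat.pos_of_ne_zero (ne_zero_of_dvd_ne_zero hM hn)) hn, one_mul, eq_comm]

lemma ncard_minimalPeriod_eq_sum {X : Type*} {g : X → X} {B : Set X} {M : ℕ} (hM : M ≠ 0)
    (hfin : (B ∩ ptsOfPeriod g M).Finite) :
    ({x ∈ B ∩ ptsOfPeriod g M | minimalPeriod g x = M}.ncard : ℤ) =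
      ∑ τ ∈ M.primeFactors.powerset,
        (-1 : ℤ) ^ τ.card * (B ∩ ptsOfPeriod g (M / ∏ p ∈ τ, p)).ncard := by
  obtain ⟨S, hS⟩ := hfin.exists_finset_coe
  have hmem : ∀ x, x ∈ S ↔ x ∈ B ∩ ptsOfPeriod g M := fun x => by rw [← hS, Finset.mem_coe]
  have hcount : ∀ τ ∈ M.primeFactors.powerset,
      ((B ∩ ptsOfPeriod g (M / ∏ p ∈ τ, p)).ncard : ℤ) =
        ∑ x ∈ S, if minimalPeriod g x ∣ M / ∏ p ∈ τ, p then 1 else 0 := by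
    intro τ hτ
    have hdvd : M / ∏ p ∈ τ, p ∣ M :=
      Nat.div_dvd_of_dvd (prod_dvd_of_subset_primeFactors (Finset.mem_powerset.1 hτ))
    rw [Finset.sum_boole, ← ncard_coe_finset]
    congr 2
    ext x
    simp only [Finset.coe_filter, hmem, mem_ofPred_eq, ← isPeriodicPt_iff_minimalPeriod_dvd]
    exact ⟨fun h => ⟨⟨h.1, h.2.trans_dvd hdvd⟩, h.2⟩, fun h => ⟨h.1.1, h.2⟩⟩
  calc ({x ∈ B ∩ ptsOfPeriod g M | minimalPeriod g x = M}.ncard : ℤ)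
      = ∑ x ∈ S, if minimalPeriod g x = M then 1 else 0 := by
        rw [Finset.sum_boole, ← ncard_coe_finset]
        simp only [Finset.coe_filter, hmem]
    _ = ∑ x ∈ S, ∑ τ ∈ M.primeFactors.powerset, (-1 : ℤ) ^ τ.card *
          (if minimalPeriod g x ∣ M / ∏ p ∈ τ, p then 1 else 0) :=
        Finset.sum_congr rfl fun x hx => (sum_powerset_primeFactors_dvd
          (IsPeriodicPt.minimalPeriod_dvd ((hmem x).1 hx).2) hM).symm
    _ = _ := by
        rw [Finset.sum_comm]
        exact Finset.sum_congr rfl fun τ hτ => by rw [hcount τ hτ, Finset.mul_sum]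

end DoldSum

section OrbitsCn

open Function

variable {g G : Cn n → Cn n} {B B' : Set (Cn n)} {M m : ℕ} {x : Cn n}

lemma exactPeriodicPt_iff_minimalPeriod_eq (hM : M ≠ 0) :
    ExactPeriodicPt g M x ↔ minimalPeriod g x = M := by
  constructor
  · rintro ⟨hper, hlt⟩
    have hxM : IsPeriodicPt g M x := hper
    have hM' := Nat.pos_of_ne_zero hM
    refine (hxM.minimalPeriod_le hM').eq_of_not_lt fun h => ?_
    exact hlt _ (hxM.minimalPeriod_pos hM') h (isPeriodicPt_minimalPeriod g x)
  · rintro rfl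
    exact ⟨isPeriodicPt_minimalPeriod g x, fun j hj hjM =>
      not_isPeriodicPt_of_pos_of_lt_minimalPeriod hj.ne' hjM⟩

lemma exactPeriodicPt_and_mem_iff (hM : M ≠ 0) :
    (ExactPeriodicPt g M x ∧ ∀ j < M, g^[j] x ∈ B) ↔ x ∈ exactPts g M B := by
  rw [exactPeriodicPt_iff_minimalPeriod_eq hM]
  refine and_congr_right fun hx => ⟨fun h j => ?_, fun h j _ => h j⟩
  rw [← iterate_mod_minimalPeriod_eq, hx]
  exact h _ (Nat.mod_lt _ (Nat.pos_of_ne_zero hM))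

lemma atLeastOrbits_iff (hM : M ≠ 0) : AtLeastOrbits g M m B ↔
    ∃ p : Fin m → Cn n, (∀ i, p i ∈ exactPts g M B) ∧ Injective (periodicOrbit g ∘ p) := by
  refine exists_congr fun p => ?_
  simp only [exactPeriodicPt_and_mem_iff hM]
  refine and_congr_right fun hp => forall₂_congr fun i j => ?_
  simp only [comp_apply]
  rw [eq_comm (a := periodicOrbit g (p i)), periodicOrbit_eq_iff_exists_lt
    (mem_periodicPts_of_mem_exactPts hM (hp i)) (mem_periodicPts_of_mem_exactPts hM (hp j)),
    (hp i).1, ← not_imp_not]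
  push Not
  rfl

lemma atLeastOrbits_iff_mul_le_ncard (hM : M ≠ 0) (hfin : (exactPts g M B).Finite) :
    AtLeastOrbits g M m B ↔ M * m ≤ (exactPts g M B).ncard := by
  rw [ncard_exactPts hM hfin, Nat.mul_le_mul_left_iff (Nat.pos_of_ne_zero hM),
    atLeastOrbits_iff hM]
  have : Fintype (periodicOrbit g '' exactPts g M B) := (hfin.image _).fintype
  rw [← Nat.card_coe_set_eq, Nat.card_eq_fintype_card, ← Fintype.card_fin m,
    ← Function.Embedding.nonempty_iff_card_le, Fintype.card_fin]
  constructor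
  · rintro ⟨p, hp, hinj⟩
    exact ⟨fun i => ⟨_, mem_image_of_mem _ (hp i)⟩, fun i j h => hinj (congrArg Subtype.val h)⟩
  · rintro ⟨c⟩
    choose p hp hpc using fun i => (c i).2
    refine ⟨p, hp, fun i j h => c.injective (Subtype.ext ?_)⟩
    rw [← hpc, ← hpc]
    exact h

lemma AtLeastOrbits.of_iterate_eq (hM : M ≠ 0) (hg : AtLeastOrbits g M m B)
    (hG : ∀ x ∈ exactPts g M B, ∀ j, g^[j] x ∈ B' ∧ G^[j] x = g^[j] x) :
    AtLeastOrbits G M m B' := by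
  obtain ⟨p, hp, hinj⟩ := hg
  have hGp := fun i => hG (p i) ((exactPeriodicPt_and_mem_iff hM).1 (hp i))
  refine ⟨p, fun i => ⟨?_, fun j _ => ?_⟩, fun i j hij l hl => ?_⟩
  · simpa only [ExactPeriodicPt, (hGp i _).2] using (hp i).1
  · rw [(hGp i j).2]
    exact (hGp i j).1
  · rw [(hGp i l).2]
    exact hinj i j hij l hl

end OrbitsCn

section HiddenOrbits

lemma exists_closedBall_forall_iterate_mem {E : Type*} [NormedAddCommGroup E] {f : E → E} {M : ℕ}
    (hf : Continuous f) (hf0 : f 0 = 0) (hfix : ∀ᶠ x in 𝓝 0, f^[M] x = x → x = 0) {s : ℝ}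
    (hs : 0 < s) : ∃ R > 0, (∀ x ∈ closedBall (0 : E) R, ∀ j ≤ M, f^[j] x ∈ ball 0 s) ∧
      ∀ x ∈ closedBall (0 : E) R, f^[M] x = x → x = 0 := by
  have hmem : ∀ᶠ x in 𝓝 (0 : E), ∀ j ≤ M, f^[j] x ∈ ball 0 s :=
    (eventually_all_finite (finite_le_nat M)).2 fun j _ =>
      (hf.iterate j).continuousAt (by simpa [Function.iterate_fixed hf0] using ball_mem_nhds 0 hs)
  obtain ⟨R, hR, hball⟩ := Metric.nhds_basis_closedBall.eventually_iff.1 (hmem.and hfix)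
  exact ⟨R, hR, fun x hx => (hball hx).1, fun x hx => (hball hx).2⟩

lemma eventually_exactPts_ball_subset {E : Type*} [NormedAddCommGroup E] [ProperSpace E]
    {f : E → E} {M : ℕ} {r R : ℝ} (hf : Continuous f) (hM : M ≠ 0) (hR : 0 < R)
    (hfix : ∀ x ∈ closedBall (0 : E) r, f^[M] x = x → x = 0) :
    ∀ᶠ ε in 𝓝[>] (0 : ℝ), ∀ g : E → E, (∀ x ∈ ball (0 : E) r, dist (g x) (f x) ≤ ε) →
      exactPts g M (ball 0 r) ⊆ exactPts g M (ball 0 R) := by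
  obtain ⟨η, hη, hmem⟩ := exists_forall_mem_of_norm_lt (isCompact_closedBall (0 : E) r)
    (h := fun x => x - f^[M] x) (continuous_id.sub (hf.iterate M)).continuousOn
    isOpen_ball fun x hx h0 => show x ∈ ball (0 : E) R by
      simpa [hfix x hx (sub_eq_zero.1 h0).symm] using hR
  filter_upwards [eventually_forall_dist_iterate_lt (B := ball 0 r) hf
    (isCompact_closedBall _ _ |>.of_isClosed_subset isClosed_closure closure_ball_subset_closedBall)
    M hη] with ε hε g hg x hx
  refine ⟨hx.1, fun j => ?_⟩
  obtain ⟨hper, hball⟩ := iterate_mem_exactPts hM hx j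
  have hgM : Function.IsPeriodicPt g M (g^[j] x) := hper ▸ Function.isPeriodicPt_minimalPeriod _ _
  refine hmem _ (ball_subset_closedBall (hball 0)) ?_
  rw [← dist_eq_norm]
  simpa only [hgM.eq] using hε g hg (g^[j] x) fun i _ => hball i

variable {f : Cn n → Cn n} {e : (ℂ × ℂ) ≃L[ℂ] Cn n} {D : ℕ → ℕ} {M m : ℕ} {r R : ℝ}

lemma fixedPointIndex_iterate_eq (hf : AnalyticOnNhd ℂ f univ) (hf0 : f 0 = 0)
    (hD : HasLocalDegree (e.symm ∘ (fun x => x - f^[m] x) ∘ e) (D m)) :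
    fixedPointIndex f^[m] 0 = D m :=
  zeroOrder_eq_of_hasLocalDegree
    (analyticAt_id.sub (analyticAt_iterate hf fun _ _ => mem_univ _))
    (by simp [Function.iterate_fixed hf0]) hD

lemma ncard_exactPts_eq_doldIndex {G : Cn n → Cn n} {B : Set (Cn n)} (hM : M ≠ 0)
    (hfin : (B ∩ Function.ptsOfPeriod G M).Finite)
    (hmaps : MapsTo G (B ∩ Function.ptsOfPeriod G M) (B ∩ Function.ptsOfPeriod G M))
    (hcard : ∀ m, m ∣ M → (B ∩ Function.ptsOfPeriod G m).ncard = fixedPointIndex f^[m] 0) :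
    ((exactPts G M B).ncard : ℤ) = doldIndex f M := by
  rw [exactPts_eq_of_mapsTo hmaps, ncard_minimalPeriod_eq_sum hM hfin]
  refine Finset.sum_congr rfl fun τ hτ => ?_
  rw [hcard _ (Nat.div_dvd_of_dvd (prod_dvd_of_subset_primeFactors (Finset.mem_powerset.1 hτ)))]

lemma eventually_isNear_exists_ncard_exactPts (hf : AnalyticOnNhd ℂ f univ) (hf0 : f 0 = 0)
    (hM : M ≠ 0) (hR : 0 < R)
    (hfR : ∀ x ∈ closedBall (0 : Cn n) R, ∀ j ≤ M, f^[j] x ∈ ball 0 (r / 2))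
    (hfix : ∀ x ∈ closedBall (0 : Cn n) R, f^[M] x = x → x = 0)
    (hD : ∀ m, m ∣ M → HasLocalDegree (e.symm ∘ (fun x => x - f^[m] x) ∘ e) (D m)) :
    ∀ᶠ ε in 𝓝[>] (0 : ℝ), ∀ g, IsNear f r ε g →
      ∃ G, IsNear f r ε G ∧ (g 0 = 0 → G 0 = 0) ∧
        (∀ x ∈ exactPts g M (ball 0 R), ∀ j, G^[j] x = g^[j] x) ∧
        (exactPts G M (ball 0 R)).Finite ∧
        ((exactPts G M (ball 0 R)).ncard : ℤ) = doldIndex f M := by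
  filter_upwards [eventually_isNear_exists_ncard_eq hf hf0 hM hR hfR hfix hD] with ε hε g hg
  obtain ⟨G, hG, hGg, hfin, hcard, hmaps_g, hmaps_G⟩ := hε g hg
  refine ⟨G, hG, fun hg0 => ?_, fun x hx j => ?_, ?_, ?_⟩
  · rw [hGg ⟨mem_ball_self hR, Function.iterate_fixed hg0 M⟩, hg0]
  · rw [exactPts_eq_of_mapsTo hmaps_g] at hx
    exact eqOn_iterate hmaps_g hGg j hx.1
  · rw [exactPts_eq_of_mapsTo hmaps_G]
    exact hfin.subset (sep_subset _ _)
  · exact ncard_exactPts_eq_doldIndex hM hfin hmaps_G fun m hm =>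
      (hcard m hm).trans (fixedPointIndex_iterate_eq hf hf0 (hD m hm)).symm

/-- `m` distinct orbits of period `M` bifurcate from the fixed point `0` of `f`: the condition
whose largest solution `m` is `hiddenOrbits f M`. -/
def HasHiddenOrbits (f : Cn n → Cn n) (M m : ℕ) : Prop :=
  ∃ r > 0, (∀ x ∈ closedBall (0 : Cn n) r, f^[M] x = x → x = 0) ∧
    ∃ fk : ℕ → Cn n → Cn n,
      (∀ k, AnalyticOnNhd ℂ (fk k) (ball (0 : Cn n) r) ∧ fk k 0 = 0) ∧
      TendstoUniformlyOn fk f atTop (ball (0 : Cn n) r) ∧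
      ∀ k, AtLeastOrbits (fk k) M m (ball (0 : Cn n) r)

lemma hasHiddenOrbits_of_eventually_isNear (hr : 0 < r)
    (hfix : ∀ x ∈ closedBall (0 : Cn n) r, f^[M] x = x → x = 0)
    (hnear : ∀ᶠ ε in 𝓝[>] (0 : ℝ),
      ∃ G, IsNear f r ε G ∧ G 0 = 0 ∧ AtLeastOrbits G M m (ball 0 r)) :
    HasHiddenOrbits f M m := by
  have hseq : ∀ k : ℕ, ∃ G, IsNear f r (1 / (k + 1 : ℝ)) G ∧ G 0 = 0 ∧
      AtLeastOrbits G M m (ball 0 r) := fun k => by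
    obtain ⟨ε, ⟨G, hG, hG0⟩, hε⟩ := (hnear.and (Ioo_mem_nhdsGT Nat.one_div_pos_of_nat)).exists
    exact ⟨G, hG.mono hε.2.le, hG0⟩
  choose G hG hG0 horb using hseq
  refine ⟨r, hr, hfix, G, fun k => ⟨(hG k).analyticOnNhd, hG0 k⟩,
    Metric.tendstoUniformlyOn_iff.2 fun ε hε => ?_, horb⟩
  filter_upwards [tendsto_one_div_add_atTop_nhds_zero_nat.eventually_lt_const hε] with k hk x hx
  rw [dist_comm]
  exact ((hG k).dist_le x hx).trans_lt hk

lemma exists_mul_eq_doldIndex_and_hasHiddenOrbits (hf : AnalyticOnNhd ℂ f univ) (hf0 : f 0 = 0)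
    (hM : M ≠ 0) (hfix : ∀ᶠ x in 𝓝 0, f^[M] x = x → x = 0)
    (hD : ∀ m, m ∣ M → HasLocalDegree (e.symm ∘ (fun x => x - f^[m] x) ∘ e) (D m)) :
    ∃ N : ℕ, (M * N : ℤ) = doldIndex f M ∧ HasHiddenOrbits f M N := by
  obtain ⟨r, hr, -, hfix_r⟩ :=
    exists_closedBall_forall_iterate_mem hf.continuous hf0 hfix one_pos
  obtain ⟨R, hR, hfR, hfix_R⟩ :=
    exists_closedBall_forall_iterate_mem hf.continuous hf0 hfix (half_pos hr)
  have hnear : ∀ᶠ ε in 𝓝[>] (0 : ℝ), ∃ G, IsNear f r ε G ∧ G 0 = 0 ∧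
      (exactPts G M (ball 0 R)).Finite ∧ ((exactPts G M (ball 0 R)).ncard : ℤ) = doldIndex f M := by
    filter_upwards [eventually_isNear_exists_ncard_exactPts hf hf0 hM hR hfR hfix_R hD,
      self_mem_nhdsWithin] with ε hε hε0
    obtain ⟨G, hG, hG0, -, hcount⟩ := hε f ⟨fun x _ => hf x (mem_univ x), 0, hε0, by simp⟩
    exact ⟨G, hG, hG0 hf0, hcount⟩
  obtain ⟨N, hN⟩ : ∃ N : ℕ, (M * N : ℤ) = doldIndex f M := by
    obtain ⟨ε, G, -, -, hfin, hcard⟩ := hnear.exists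
    exact ⟨(Function.periodicOrbit G '' exactPts G M (ball 0 R)).ncard,
      by rw [← hcard, ncard_exactPts hM hfin, Nat.cast_mul]⟩
  refine ⟨N, hN, hasHiddenOrbits_of_eventually_isNear hr hfix_r ?_⟩
  filter_upwards [hnear] with ε ⟨G, hG, hG0, hfin, hcard⟩
  have horb : AtLeastOrbits G M N (ball 0 R) :=
    (atLeastOrbits_iff_mul_le_ncard hM hfin).2 (by exact_mod_cast (hN.trans hcard.symm).le)
  refine ⟨G, hG, hG0, horb.of_iterate_eq hM fun x hx j => ⟨?_, rfl⟩⟩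
  exact ball_subset_ball (half_le_self hr.le) (hfR _ (ball_subset_closedBall (hx.2 j)) 0 M.zero_le)

lemma HasHiddenOrbits.mul_le_doldIndex (hf : AnalyticOnNhd ℂ f univ) (hf0 : f 0 = 0)
    (hM : M ≠ 0) (hD : ∀ m, m ∣ M → HasLocalDegree (e.symm ∘ (fun x => x - f^[m] x) ∘ e) (D m))
    (hm : HasHiddenOrbits f M m) : (M * m : ℤ) ≤ doldIndex f M := by
  obtain ⟨r, hr, hfix_r, fk, hfk, hlim, horb⟩ := hm
  obtain ⟨R, hR, hfR, hfix_R⟩ := exists_closedBall_forall_iterate_mem hf.continuous hf0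
    (mem_of_superset (closedBall_mem_nhds 0 hr) hfix_r) (half_pos hr)
  obtain ⟨ε, ⟨hcount, hsubset⟩, hε⟩ :=
    ((eventually_isNear_exists_ncard_exactPts hf hf0 hM hR hfR hfix_R hD).and
      (eventually_exactPts_ball_subset hf.continuous hM hR hfix_r)).and
      self_mem_nhdsWithin |>.exists
  obtain ⟨k, hk⟩ := (Metric.tendstoUniformlyOn_iff.1 hlim (ε / 2) (half_pos hε)).exists
  have hnear : IsNear f r ε (fk k) := ⟨(hfk k).1, ε / 2, half_lt_self hε, fun x hx => by
    rw [← dist_eq_norm, dist_comm]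
    exact (hk x hx).le⟩
  obtain ⟨G, -, -, hG, hfin, hcard⟩ := hcount (fk k) hnear
  have hsub := hsubset (fk k) hnear.dist_le
  have horbG : AtLeastOrbits G M m (ball 0 R) := (horb k).of_iterate_eq hM fun x hx j =>
    ⟨(hsub hx).2 j, hG x (hsub hx) j⟩
  rw [← hcard]
  exact_mod_cast (atLeastOrbits_iff_mul_le_ncard hM hfin).1 horbG

theorem mul_hiddenOrbits_eq_doldIndex (hf : AnalyticOnNhd ℂ f univ) (hf0 : f 0 = 0) (hM : M ≠ 0)
    (hD : ∀ m, m ∣ M → HasLocalDegree (e.symm ∘ (fun x => x - f^[m] x) ∘ e) (D m)) :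
    (M * hiddenOrbits f M : ℤ) = doldIndex f M := by
  have hfix : ∀ᶠ x in 𝓝 0, f^[M] x = x → x = 0 :=
    (hD M dvd_rfl).eventually_eq_zero.mono fun x hx h => hx (sub_eq_zero.2 h.symm)
  obtain ⟨N, hN, hmem⟩ := exists_mul_eq_doldIndex_and_hasHiddenOrbits hf hf0 hM hfix hD
  have hgreatest : IsGreatest {m | HasHiddenOrbits f M m} N := by
    refine ⟨hmem, fun m hm => ?_⟩
    have hle := hm.mul_le_doldIndex hf hf0 hM hD
    rw [← hN] at hle
    exact Nat.le_of_mul_le_mul_left (by exact_mod_cast hle) (Nat.pos_of_ne_zero hM)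
  rw [← hN]
  congr 2
  exact hgreatest.csSup_eq

end HiddenOrbits

lemma doldIndex_prime {p : ℕ} (hp : p.Prime) (f : Cn n → Cn n) :
    doldIndex f p = fixedPointIndex f^[p] 0 - fixedPointIndex f^[1] 0 := by
  have hpow : ({p} : Finset ℕ).powerset = {∅, {p}} := rfl
  rw [doldIndex, hp.primeFactors, hpow, Finset.sum_pair (Finset.singleton_ne_empty p).symm]
  simp [Nat.div_self hp.pos, sub_eq_add_neg]

lemma doldIndex_prime_mul_prime {p q : ℕ} (hp : p.Prime) (hq : q.Prime) (hpq : p ≠ q)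
    (f : Cn n → Cn n) :
    doldIndex f (p * q) = fixedPointIndex f^[p * q] 0 - fixedPointIndex f^[p] 0
      - fixedPointIndex f^[q] 0 + fixedPointIndex f^[1] 0 := by
  have hpow : ({q} : Finset ℕ).powerset = {∅, {q}} := rfl
  rw [doldIndex, Nat.primeFactors_mul hp.ne_zero hq.ne_zero, hp.primeFactors, hq.primeFactors,
    ← Finset.insert_eq, Finset.sum_powerset_insert (by simpa using hpq), hpow,
    Finset.sum_pair (Finset.singleton_ne_empty q).symm,
    Finset.sum_pair (Finset.singleton_ne_empty q).symm]
  simp [hpq, Nat.div_self (mul_pos hp.pos hq.pos), Nat.mul_div_cancel _ hq.pos,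
    Nat.mul_div_cancel_left _ hp.pos]
  ring

section HiddenOrbits

variable {f : Cn n → Cn n} {e : (ℂ × ℂ) ≃L[ℂ] Cn n} {D : ℕ → ℕ}

lemma mul_hiddenOrbits_prime (hf : AnalyticOnNhd ℂ f univ) (hf0 : f 0 = 0)
    (hD : ∀ m ≠ 0, HasLocalDegree (e.symm ∘ (fun x => x - f^[m] x) ∘ e) (D m))
    {p : ℕ} (hp : p.Prime) :
    (p * hiddenOrbits f p : ℤ) = D p - D 1 := by
  rw [mul_hiddenOrbits_eq_doldIndex hf hf0 hp.ne_zero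
    fun m hm => hD m (ne_zero_of_dvd_ne_zero hp.ne_zero hm), doldIndex_prime hp]
  simp only [fixedPointIndex_iterate_eq hf hf0 (hD _ hp.ne_zero),
    fixedPointIndex_iterate_eq hf hf0 (hD _ one_ne_zero)]

lemma mul_hiddenOrbits_prime_mul_prime (hf : AnalyticOnNhd ℂ f univ) (hf0 : f 0 = 0)
    (hD : ∀ m ≠ 0, HasLocalDegree (e.symm ∘ (fun x => x - f^[m] x) ∘ e) (D m))
    {p q : ℕ} (hp : p.Prime) (hq : q.Prime) (hpq : p ≠ q) :
    ((p * q : ℕ) * hiddenOrbits f (p * q) : ℤ) = D (p * q) - D p - D q + D 1 := by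
  have hM : p * q ≠ 0 := mul_ne_zero hp.ne_zero hq.ne_zero
  rw [mul_hiddenOrbits_eq_doldIndex hf hf0 hM
    fun m hm => hD m (ne_zero_of_dvd_ne_zero hM hm), doldIndex_prime_mul_prime hp hq hpq]
  simp only [fixedPointIndex_iterate_eq hf hf0 (hD _ hM),
    fixedPointIndex_iterate_eq hf hf0 (hD _ hp.ne_zero),
    fixedPointIndex_iterate_eq hf hf0 (hD _ hq.ne_zero),
    fixedPointIndex_iterate_eq hf hf0 (hD _ one_ne_zero)]

end HiddenOrbits

lemma conj_sub_iterate {E : Type*} [NormedAddCommGroup E] [NormedSpace ℂ E]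
    (e : (ℂ × ℂ) ≃L[ℂ] E) (F : ℂ × ℂ → ℂ × ℂ) (m : ℕ) :
    e.symm ∘ (fun x => x - (e ∘ F ∘ e.symm)^[m] x) ∘ e = fun p => p - F^[m] p := by
  have hsemi : Function.Semiconj e F (e ∘ F ∘ e.symm) := fun p => by simp
  ext1 p
  simp [← (hsemi.iterate_right m).eq p]

lemma isolatedFixedPtAt0_of_hasLocalDegree {g : Cn n → Cn n} {e : (ℂ × ℂ) ≃L[ℂ] Cn n} {D : ℕ}
    (hg0 : g 0 = 0) (hD : HasLocalDegree (e.symm ∘ (fun x => x - g x) ∘ e) D) :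
    IsolatedFixedPtAt0 g :=
  ⟨hg0, eventually_nhdsWithin_iff.2 <| hD.eventually_eq_zero.mono fun _ hx hx0 h =>
    hx0 (hx (sub_eq_zero.2 h.symm))⟩

/-- The fixed point index at `0` of the `m`-th iterate of the map of the theorem. -/
def exampleIndex (k m : ℕ) : ℕ :=
  if 3 ∣ m then if Even m then 5 * k + 7 else 3 * k + 1 else if Even m then 2 * k + 1 else 1

lemma hasLocalDegree_exampleIndex {k m : ℕ} {ω : ℂ} (hk : 1 < k) (hω : IsPrimitiveRoot ω 3)
    (hm : m ≠ 0) :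
    HasLocalDegree (fun p => p - (exampleMap k ω)^[m] p) (exampleIndex k m) := by
  unfold exampleIndex
  split_ifs with h3 heven heven <;> rw [← hω.pow_eq_one_iff_dvd] at h3
  · simpa [heven] using hasLocalDegree_sub_iterate_of_pow_eq_one hk hω.pow_eq_one hm h3
  · simpa [heven] using hasLocalDegree_sub_iterate_of_pow_eq_one hk hω.pow_eq_one hm h3
  · simpa [heven] using
      hasLocalDegree_sub_iterate_of_pow_ne_one (by lia) hω.pow_eq_one hm h3
  · simpa [heven] using
      hasLocalDegree_sub_iterate_of_pow_ne_one (by lia) hω.pow_eq_one hm h3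

/-- For `f(x,y) = (−x + x^{2k+1} + xy³, e^{2πi/3}y + x²y + y^{3k+1})` with `k > 1`:
`0` is an isolated fixed point of `f⁶`, `μ_{f²}(0) = 2k+1`, `μ_{f³}(0) = 3k+1`,
`μ_{f⁶}(0) = 5k+7`, and `𝒪₂(f,0) = k`, `𝒪₃(f,0) = k`, `𝒪₆(f,0) = 1`. -/
theorem example_two (k : ℕ) (hk : 1 < k) (f : Cn 2 → Cn 2)
    (hform : f = fun x =>
      ![-x 0 + x 0 ^ (2 * k + 1) + x 0 * x 1 ^ 3,
        Complex.exp (2 * Real.pi * Complex.I / 3) * x 1 + x 0 ^ 2 * x 1 +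
          x 1 ^ (3 * k + 1)]) :
    IsolatedFixedPtAt0 (f^[6]) ∧
    fixedPointIndex (f^[2]) 0 = 2 * k + 1 ∧
    fixedPointIndex (f^[3]) 0 = 3 * k + 1 ∧
    fixedPointIndex (f^[6]) 0 = 5 * k + 7 ∧
    hiddenOrbits f 2 = k ∧ hiddenOrbits f 3 = k ∧ hiddenOrbits f 6 = 1 := by
  set ω := Complex.exp (2 * Real.pi * Complex.I / 3)
  have hω : IsPrimitiveRoot ω 3 := Complex.isPrimitiveRoot_exp 3 three_ne_zero
  let e : (ℂ × ℂ) ≃L[ℂ] Cn 2 := (ContinuousLinearEquiv.finTwoArrow ℂ ℂ).symm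
  have hfe : f = e ∘ exampleMap k ω ∘ e.symm := hform
  have hf : AnalyticOnNhd ℂ f univ := fun x _ => hfe ▸
    (e.analyticAt _).comp ((analyticOnNhd_exampleMap k ω _ trivial).comp (e.symm.analyticAt x))
  have hf0 : f 0 = 0 := by simp [hform]
  have hD (m : ℕ) (hm : m ≠ 0) :
      HasLocalDegree (e.symm ∘ (fun x => x - f^[m] x) ∘ e) (exampleIndex k m) := by
    rw [hfe, conj_sub_iterate]
    exact hasLocalDegree_exampleIndex hk hω hm
  have hμ (m : ℕ) (hm : m ≠ 0) := fixedPointIndex_iterate_eq hf hf0 (hD m hm)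
  have hO2 : (2 * hiddenOrbits f 2 : ℤ) = (2 * k + 1 : ℕ) - (1 : ℕ) :=
    mul_hiddenOrbits_prime hf hf0 hD Nat.prime_two
  have hO3 : (3 * hiddenOrbits f 3 : ℤ) = (3 * k + 1 : ℕ) - (1 : ℕ) :=
    mul_hiddenOrbits_prime hf hf0 hD Nat.prime_three
  have hO6 : (6 * hiddenOrbits f 6 : ℤ) =
      (5 * k + 7 : ℕ) - (2 * k + 1 : ℕ) - (3 * k + 1 : ℕ) + (1 : ℕ) :=
    mul_hiddenOrbits_prime_mul_prime hf hf0 hD Nat.prime_two Nat.prime_three (by simp)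
  exact ⟨isolatedFixedPtAt0_of_hasLocalDegree (Function.iterate_fixed hf0 6) (hD 6 (by simp)),
    hμ 2 (by simp), hμ 3 (by simp), hμ 6 (by simp), by lia, by lia, by lia⟩

end ZhangPaper
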